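/- Let f be a rational map of degree at least 2 with Julia set J. Assume f is non-exceptional, or f is exceptional but Σ ∩ J = ∅, and assume α⁻ < α⁺. Then for α⁻ ≤ α < β ≤ α⁺ we have dim_H Ĺ(α,β) ≥ max_{α ≤ q ≤ β} F(q). -/

import Mathlib

open Filter Set Metric MeasureTheory Topology
open scoped ENNReal NNReal

noncomputable section

/-! ### The Riemann sphere with the chordal (spherical) metric -/

/-- The Riemann sphere `ℂ ∪ {∞}`. -/
structure RSphere : Type where
  val : Option ℂ

namespace RSphere

/-- The inclusion of `ℂ` into the Riemann sphere. -/
def ofC (z : ℂ) : RSphere := ⟨some z⟩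

/-- The point at infinity. -/
def infty : RSphere := ⟨none⟩

/-- Case elimination on a point of the Riemann sphere. -/
def elim {α : Sort*} (x : RSphere) (i : α) (h : ℂ → α) : α := Option.elim x.val i h

/-- Stereographic embedding of the Riemann sphere onto the round unit sphere in
`ℝ³ = ℂ ×₂ ℝ`.  It induces the chordal (spherical) metric on `RSphere`. -/
def embed (x : RSphere) : WithLp 2 (ℂ × ℝ) :=
  elim x ((WithLp.equiv 2 (ℂ × ℝ)).symm (0, 1))
    fun z => (WithLp.equiv 2 (ℂ × ℝ)).symm
      (((2 / (‖z‖ ^ 2 + 1)) : ℝ) • z, (‖z‖ ^ 2 - 1) / (‖z‖ ^ 2 + 1))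

/-- Inverse of the stereographic embedding. -/
def unembed (v : WithLp 2 (ℂ × ℝ)) : RSphere :=
  if (WithLp.equiv 2 (ℂ × ℝ) v).2 = 1 then infty
  else ofC ((1 - (WithLp.equiv 2 (ℂ × ℝ) v).2)⁻¹ • (WithLp.equiv 2 (ℂ × ℝ) v).1)

lemma leftInverse_unembed : Function.LeftInverse unembed embed := by
  rintro ⟨x⟩
  cases x with
  | none =>
      simp [embed, unembed, elim, infty]
  | some z =>
      have h1 : (0 : ℝ) < ‖z‖ ^ 2 + 1 := by positivity
      have ht : (‖z‖ ^ 2 - 1) / (‖z‖ ^ 2 + 1) ≠ 1 := by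
        intro h
        rw [div_eq_one_iff_eq h1.ne'] at h
        linarith
      simp only [embed, unembed, elim, Option.elim, Equiv.apply_symm_apply, ht, if_false, ofC]
      congr 2
      rw [smul_smul]
      have h2 : 1 - (‖z‖ ^ 2 - 1) / (‖z‖ ^ 2 + 1) = 2 / (‖z‖ ^ 2 + 1) := by
        field_simp
        ring
      rw [h2]
      rw [inv_mul_cancel₀ (by positivity), one_smul]

lemma embed_injective : Function.Injective embed := leftInverse_unembed.injective

/-- The chordal metric on the Riemann sphere, induced by the stereographic embedding
onto the round unit sphere in Euclidean 3-space. -/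
instance : MetricSpace RSphere := MetricSpace.induced embed embed_injective inferInstance

instance : MeasurableSpace RSphere := borel RSphere

instance : BorelSpace RSphere := ⟨rfl⟩

/-- Reading off a finite point (junk value `0` at `∞`). -/
def toC (x : RSphere) : ℂ := elim x 0 id

/-- The involution `z ↦ 1/z` of the Riemann sphere. -/
def inv (x : RSphere) : RSphere :=
  elim x (ofC 0) fun z => if z = 0 then infty else ofC z⁻¹

end RSphere

/-! ### Basic dynamical notions -/

/-- The norm of the derivative of `g` at `x`, measured in the spherical metric
(for a rational map this is the usual norm of the spherical derivative). -/
def sphDeriv (g : RSphere → RSphere) (x : RSphere) : ℝ :=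
  limsup (fun y => dist (g y) (g x) / dist y x) (𝓝[≠] x)

/-- The set of critical points. -/
def critSet (g : RSphere → RSphere) : Set RSphere := {x | sphDeriv g x = 0}

/-- The Fatou set: points having a neighbourhood on which the family of iterates is
equicontinuous (i.e. normal). -/
def fatouSet (f : RSphere → RSphere) : Set RSphere :=
  {x | ∃ U : Set RSphere, IsOpen U ∧ x ∈ U ∧ EquicontinuousOn (fun n : ℕ => f^[n]) U}

/-- The Julia set. -/
def juliaSet (f : RSphere → RSphere) : Set RSphere := (fatouSet f)ᶜ

/-- `f` is the rational map on the Riemann sphere given by the coprime pair of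
polynomials `p`, `q`. -/
structure IsRationalMap (f : RSphere → RSphere) (p q : Polynomial ℂ) : Prop where
  coprime : IsCoprime p q
  continuous : Continuous f
  eval : ∀ z : ℂ, q.eval z ≠ 0 → f (RSphere.ofC z) = RSphere.ofC (p.eval z / q.eval z)

/-- The degree of the rational map `p/q`. -/
def ratDeg (p q : Polynomial ℂ) : ℕ := max p.natDegree q.natDegree

/-- The lower Lyapunov exponent `χ̲(x) = liminf (1/n) log |(fⁿ)'(x)|`, as an extended real. -/
def lyapLower (f : RSphere → RSphere) (x : RSphere) : EReal :=
  liminf (fun n : ℕ => ((Real.log (sphDeriv (f^[n]) x) / n : ℝ) : EReal)) atTop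

/-- The upper Lyapunov exponent `χ̄(x) = limsup (1/n) log |(fⁿ)'(x)|`, as an extended real. -/
def lyapUpper (f : RSphere → RSphere) (x : RSphere) : EReal :=
  limsup (fun n : ℕ => ((Real.log (sphDeriv (f^[n]) x) / n : ℝ) : EReal)) atTop

/-- The level set `𝓛(a,b)` of points of the Julia set with lower exponent `a` and
upper exponent `b`. -/
def levelSet (f : RSphere → RSphere) (a b : EReal) : Set RSphere :=
  {x | x ∈ juliaSet f ∧ lyapLower f x = a ∧ lyapUpper f x = b}

/-- The set `𝓛̂(α,β)` of points of the Julia set with `χ̲ ≤ β`, `χ̄ ≥ α` and `χ̄ > 0`. -/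
def levelHat (f : RSphere → RSphere) (α β : ℝ) : Set RSphere :=
  {x | x ∈ juliaSet f ∧ lyapLower f x ≤ (β : EReal) ∧ (α : EReal) ≤ lyapUpper f x ∧
    0 < lyapUpper f x}

/-- Birkhoff sum `S_m φ = φ + φ∘g + ⋯ + φ∘g^{m-1}`. -/
def birkhoff (g : RSphere → RSphere) (φ : RSphere → ℝ) (m : ℕ) (x : RSphere) : ℝ :=
  ∑ k ∈ Finset.range m, φ (g^[k] x)

/-- An `(m,ε)`-separated finite subset of `Λ` for the map `g`. -/
def IsSepSet (g : RSphere → RSphere) (Λ : Set RSphere) (m : ℕ) (ε : ℝ)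
    (E : Finset RSphere) : Prop :=
  ↑E ⊆ Λ ∧ ∀ x ∈ E, ∀ y ∈ E, x ≠ y → ∃ k < m, ε ≤ dist (g^[k] x) (g^[k] y)

/-- Topological pressure of the potential `φ` for `g` restricted to `Λ`,
defined à la Bowen via `(m,ε)`-separated sets. -/
def pressureOn (g : RSphere → RSphere) (Λ : Set RSphere) (φ : RSphere → ℝ) : ℝ :=
  ⨆ ε : {ε : ℝ // 0 < ε}, limsup (fun m : ℕ =>
    Real.log (⨆ E : {E : Finset RSphere // IsSepSet g Λ m ε.1 E},
      ∑ x ∈ E.1, Real.exp (birkhoff g φ m x)) / m) atTop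

/-- `g` is uniformly expanding on `Λ`: `|(gᵐ)'(x)| ≥ c λᵐ` for some `c > 0`, `λ > 1`. -/
def ExpandingOn (g : RSphere → RSphere) (Λ : Set RSphere) : Prop :=
  ∃ c > (0 : ℝ), ∃ l : ℝ, 1 < l ∧ ∀ x ∈ Λ, ∀ m : ℕ, 1 ≤ m → c * l ^ m ≤ sphDeriv (g^[m]) x

/-- `Λ` is a repeller for `g`: a compact invariant isolated set. -/
def IsRepeller (g : RSphere → RSphere) (Λ : Set RSphere) : Prop :=
  IsCompact Λ ∧ g '' Λ = Λ ∧
    ∃ U : Set RSphere, IsOpen U ∧ Λ ⊆ U ∧ ∀ x, (∀ m : ℕ, g^[m] x ∈ U) → x ∈ Λ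

/-- Topological transitivity of `g` on `Λ`. -/
def TopTransOn (g : RSphere → RSphere) (Λ : Set RSphere) : Prop :=
  ∀ U V : Set RSphere, IsOpen U → IsOpen V → (U ∩ Λ).Nonempty → (V ∩ Λ).Nonempty →
    ∃ m : ℕ, (g^[m] '' (U ∩ Λ) ∩ V).Nonempty

/-- The topological pressure of `φ` with respect to `f` on its Julia set, given by
the supremum of the pressures on compact invariant uniformly expanding subsets of `J`. -/
def pressureTop (f : RSphere → RSphere) (φ : RSphere → ℝ) : ℝ :=
  ⨆ L : {L : Set RSphere //
      L.Nonempty ∧ L ⊆ juliaSet f ∧ IsCompact L ∧ f '' L = L ∧ ExpandingOn f L},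
    pressureOn f L.1 φ

/-- The pressure function `d ↦ P(φ_d)` where `φ_d = -d log|f'|`. -/
def pressFamily (f : RSphere → RSphere) (d : ℝ) : ℝ :=
  pressureTop f fun x => -d * Real.log (sphDeriv f x)

/-- `F(α) = α⁻¹ inf_d (Q(d) + dα)` associated with a pressure function `Q` (for `α ≠ 0`). -/
def specF (Q : ℝ → ℝ) (α : ℝ) : EReal :=
  ((α⁻¹ : ℝ) : EReal) * ⨅ d : ℝ, ((Q d + d * α : ℝ) : EReal)

/-- `F(0) = lim_{α → 0⁺} F(α)`. -/
def specF0 (Q : ℝ → ℝ) : EReal := limsup (fun α : ℝ => specF Q α) (𝓝[>] (0 : ℝ))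

/-- The full spectrum function `F` associated with a pressure function `Q`. -/
def specFext (Q : ℝ → ℝ) (α : ℝ) : EReal := if α = 0 then specF0 Q else specF Q α

/-- The Lyapunov spectrum function `F` of `f`. -/
def Ffun (f : RSphere → RSphere) (α : ℝ) : EReal := specFext (pressFamily f) α

/-- `α⁻ = lim_{d → +∞} -Q(d)/d` for a pressure function `Q`. -/
def alphaMinusOf (Q : ℝ → ℝ) : ℝ := limsup (fun d : ℝ => -Q d / d) atTop

/-- `α⁺ = lim_{d → -∞} -Q(d)/d` for a pressure function `Q`. -/
def alphaPlusOf (Q : ℝ → ℝ) : ℝ := limsup (fun d : ℝ => -Q d / d) atBot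

/-- `α⁻` for the map `f`. -/
def alphaMinus (f : RSphere → RSphere) : ℝ := alphaMinusOf (pressFamily f)

/-- `α⁺` for the map `f`. -/
def alphaPlus (f : RSphere → RSphere) : ℝ := alphaPlusOf (pressFamily f)

/-- The Lyapunov exponent `χ(μ) = ∫ log|g'| dμ` of a measure. -/
def lyapMeas (g : RSphere → RSphere) (μ : Measure RSphere) : ℝ :=
  ∫ x, Real.log (sphDeriv g x) ∂μ

/-- `α⁻` as the infimum of Lyapunov exponents of invariant probability measures on `J`. -/
def alphaMinusMeas (f : RSphere → RSphere) : ℝ :=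
  sInf {r : ℝ | ∃ μ : Measure RSphere, IsProbabilityMeasure μ ∧ MeasurePreserving f μ μ ∧
    μ (juliaSet f)ᶜ = 0 ∧ r = lyapMeas f μ}

/-- `α⁺` as the supremum of Lyapunov exponents of invariant probability measures on `J`. -/
def alphaPlusMeas (f : RSphere → RSphere) : ℝ :=
  sSup {r : ℝ | ∃ μ : Measure RSphere, IsProbabilityMeasure μ ∧ MeasurePreserving f μ μ ∧
    μ (juliaSet f)ᶜ = 0 ∧ r = lyapMeas f μ}

/-- The maximal distortion `sup_{x,y ∈ Z} |g'(x)|/|g'(y)|` of `g` on `Z`. -/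
def distortionOn (g : RSphere → RSphere) (Z : Set RSphere) : ℝ :=
  sSup {r : ℝ | ∃ x ∈ Z, ∃ y ∈ Z, r = sphDeriv g x / sphDeriv g y}

/-- Conical points. -/
def IsConical (f : RSphere → RSphere) (x : RSphere) : Prop :=
  ∃ r : ℝ, 0 < r ∧ ∃ K : ℝ, ∃ n : ℕ → ℕ, StrictMono n ∧ ∃ U : ℕ → Set RSphere,
    ∀ i, U i ∈ 𝓝 x ∧ ball (f^[n i] x) r ⊆ f^[n i] '' U i ∧ distortionOn (f^[n i]) (U i) ≤ K

/-- A non-immediately postcritical point: there is a backward orbit through it that is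
dense in the Julia set and avoids the critical points. -/
def NonImmPostCrit (f : RSphere → RSphere) (x : RSphere) : Prop :=
  ∃ b : ℕ → RSphere, b 0 = x ∧ (∀ n, f (b (n + 1)) = b n) ∧
    juliaSet f ⊆ closure (Set.range b) ∧ ∀ n, b n ∉ critSet f

/-- `f` is exceptional: there is a finite nonempty set `Σ_f` with `f⁻¹(Σ_f) \ Crit = Σ_f`. -/
def IsExceptional (f : RSphere → RSphere) : Prop :=
  ∃ S : Set RSphere, S.Finite ∧ S.Nonempty ∧ f ⁻¹' S \ critSet f = S

/-- The largest exceptional set `Σ` of `f`. -/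
def maxExceptional (f : RSphere → RSphere) : Set RSphere :=
  ⋃₀ {S : Set RSphere | S.Finite ∧ S.Nonempty ∧ f ⁻¹' S \ critSet f = S}

/-- `0` not being exceptional, or having exceptional set away from the Julia set. -/
def GoodExc (f : RSphere → RSphere) : Prop :=
  ¬ IsExceptional f ∨ maxExceptional f ∩ juliaSet f = ∅

/-- A parabolic periodic point at a finite point `z`: a periodic point whose multiplier
is a root of unity. -/
def IsParabolicFix (g : RSphere → RSphere) (z : ℂ) : Prop :=
  ∃ m : ℕ, 0 < m ∧ g^[m] (RSphere.ofC z) = RSphere.ofC z ∧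
    ∃ lam : ℂ, (∃ k : ℕ, 0 < k ∧ lam ^ k = 1) ∧
      HasDerivAt (fun w => RSphere.toC (g^[m] (RSphere.ofC w))) lam z

/-- A parabolic periodic point of `f` (at a finite point, or at `∞` read in the chart `1/z`). -/
def IsParabolic (f : RSphere → RSphere) (x : RSphere) : Prop :=
  (∃ z : ℂ, x = RSphere.ofC z ∧ IsParabolicFix f z) ∨
  (x = RSphere.infty ∧ IsParabolicFix (fun y => RSphere.inv (f (RSphere.inv y))) 0)

/-- A recurrent point. -/
def IsRecurrentPt (f : RSphere → RSphere) (x : RSphere) : Prop :=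
  ∃ n : ℕ → ℕ, StrictMono n ∧ Tendsto (fun i => f^[n i] x) atTop (𝓝 x)

/-! ### Graph directed systems and expanding Cantor repellers -/

/-- A graph directed system (GDS) satisfying the strong separation condition with
respect to the map `g`. -/
structure GDS (g : RSphere → RSphere) where
  /-- number of vertices -/
  n : ℕ
  npos : 0 < n
  /-- the open domains -/
  U : Fin n → Set RSphere
  /-- the admissible edges -/
  edge : Fin n → Fin n → Prop
  /-- the inverse branches -/
  br : Fin n → Fin n → RSphere → RSphere
  isOpen : ∀ k, IsOpen (U k)
  isConnected : ∀ k, IsConnected (U k)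
  disjClosure : ∀ k l, k ≠ l → closure (U k) ∩ closure (U l) = ∅
  mapsTo : ∀ k l, edge k l → Set.MapsTo (br k l) (closure (U l)) (U k)
  isBranch : ∀ k l, edge k l → ∀ x ∈ closure (U l), g (br k l x) = x
  bddDistortion : ∃ C : ℝ, ∀ k l, edge k l → distortionOn (br k l) (closure (U l)) ≤ C

/-- The cylinder sets of depth `m` of a GDS. -/
def gdsCyl {g : RSphere → RSphere} (G : GDS g) : ℕ → Set RSphere
  | 0 => ⋃ k, G.U k
  | m + 1 => ⋃ (k : Fin G.n) (l : Fin G.n) (_ : G.edge k l),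
      G.br k l '' (gdsCyl G m ∩ G.U l)

/-- The limit set of a GDS. -/
def gdsLimit {g : RSphere → RSphere} (G : GDS g) : Set RSphere := ⋂ m, gdsCyl G m

/-- An expanding Cantor repeller (ECR) for `g`: a uniformly expanding repeller which is
the limit set of a GDS satisfying the strong separation condition, with `g(Λ) = Λ`. -/
def IsECR (g : RSphere → RSphere) (Λ : Set RSphere) : Prop :=
  ExpandingOn g Λ ∧ IsRepeller g Λ ∧ ∃ G : GDS g, gdsLimit G = Λ

/-- A Cantor set: compact, perfect and totally disconnected. -/
def IsCantorSet (s : Set RSphere) : Prop :=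
  IsCompact s ∧ Perfect s ∧ IsTotallyDisconnected s

/-! ### Entropy, equilibrium states and dimensions -/

/-- The entropy of a countable partition (given by the fibers of `p`). -/
def partEntropy {ι : Type} [Countable ι] (μ : Measure RSphere) (p : RSphere → ι) : ℝ :=
  ∑' i : ι, Real.negMulLog (μ (p ⁻¹' {i})).toReal

/-- Measure-theoretic (Kolmogorov–Sinai) entropy of `T` with respect to `μ`:
supremum over finite measurable partitions of the exponential growth rate of the
entropies of the dynamical refinements. -/
def entropyOf (T : RSphere → RSphere) (μ : Measure RSphere) : ℝ :=
  ⨆ p : {p : RSphere → ℕ // Measurable p ∧ (Set.range p).Finite},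
    ⨅ n : {n : ℕ // 0 < n},
      partEntropy μ (fun x => fun k : Fin n.1 => p.1 (T^[(k : ℕ)] x)) / (n.1 : ℝ)

/-- An equilibrium state for the potential `φ` with respect to `g` restricted to `Λ`. -/
def IsEquilibrium (g : RSphere → RSphere) (Λ : Set RSphere) (φ : RSphere → ℝ)
    (μ : Measure RSphere) : Prop :=
  IsProbabilityMeasure μ ∧ μ Λᶜ = 0 ∧ MeasurePreserving g μ μ ∧
    entropyOf g μ + ∫ x, φ x ∂μ = pressureOn g Λ φ

/-- The Hausdorff dimension of a measure: the infimum of the Hausdorff dimensions of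
sets of full measure. -/
def dimHMeasure (μ : Measure RSphere) : ℝ≥0∞ :=
  ⨅ (s : Set RSphere) (_ : μ sᶜ = 0), dimH s

/-- The minimal number of `ε`-balls needed to cover `s`. -/
def coverNum (s : Set RSphere) (ε : ℝ) : ℕ :=
  sInf {n : ℕ | ∃ t : Finset RSphere, t.card = n ∧ s ⊆ ⋃ x ∈ t, ball x ε}

/-- The upper box-counting dimension. -/
def upperBoxDim (s : Set RSphere) : ℝ :=
  limsup (fun n : ℕ => Real.log (coverNum s (1 / n)) / Real.log n) atTop

/-- The packing dimension, via countable covers and upper box dimensions. -/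
def dimP (s : Set RSphere) : ℝ≥0∞ :=
  ⨅ c : {c : ℕ → Set RSphere // s ⊆ ⋃ n, c n},
    ⨆ n : ℕ, ENNReal.ofReal (upperBoxDim (c.1 n))

/-- The connected component of `y` in `g⁻¹(B)`: the pull-back of `B` along the inverse
branch of `g` sending (the image of) `y` to `y`. -/
def invBranchSet (g : RSphere → RSphere) (B : Set RSphere) (y : RSphere) : Set RSphere :=
  connectedComponentIn (g ⁻¹' B) y

end

/-
For a compact set `B`, finite systems of inverse branches of iterates `f^[n]` mapping `B` into `B`
with pairwise disjoint images are encoded by pairs (entropy `log N / n`, contraction exponent);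
let `R` be the set of all pairs approximated by such systems.
* Concatenation of systems makes `R` convex, and the limit set of a system of entropy `h` and
  exponent `χ` has dimension about `h / χ` and Lyapunov exponents close to `χ`.
* A hyperbolic set on which the pressure of `φ_d` exceeds `b` has separated sets of many orbits with
  nearly equal exponent `χ`, where `h = b + d χ`. Around these orbits `f` has contracting inverse
  branches; Landau's theorem (iterates are not normal near the Julia set, and exceptional points
  can be avoided) yields bounded transition times from and to one ball `B`, and hence a system of
  inverse branches on `B`. So for every `d` some `(P(φ_d) + d χ, χ)` belongs to `R`.
* By Hahn–Banach, `(inf_d (P(φ_d) + d q), q)` then belongs to `R` for all `α⁻ ≤ q ≤ α⁺`. If `q` is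
  an endpoint of `[α, β]`, this point is approached along a segment in `R` with exponents inside
  `(α, β)`.
-/

namespace LyapunovSpectrum

/-! ### Bloch's theorem and Landau's theorem -/

lemma ball_subset_image_of_norm_deriv_sub_le {g : ℂ → ℂ} {c : ℂ} {r : ℝ} (hr : 0 < r)
    (hg : ∀ z ∈ closedBall c r, DifferentiableAt ℂ g z)
    (hosc : ∀ z ∈ closedBall c r, ‖deriv g z - deriv g c‖ ≤ ‖deriv g c‖ / 2) :
    ball (g c) (r * ‖deriv g c‖ / 4) ⊆ g '' closedBall c r := by
  rcases (norm_nonneg (deriv g c)).eq_or_lt with hzero | hpos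
  · simp [← hzero]
  have hlinear : ∀ z ∈ closedBall c r,
      ‖g z - g c - deriv g c * (z - c)‖ ≤ ‖deriv g c‖ / 2 * ‖z - c‖ := by
    intro z hz
    have hderiv : ∀ x ∈ closedBall c r, HasDerivWithinAt (fun x => g x - deriv g c * x)
        (deriv g x - deriv g c) (closedBall c r) x := fun x hx =>
      ((hg x hx).hasDerivAt.fun_sub (hasDerivAt_const_mul (deriv g c))).hasDerivWithinAt
    have hmean := (convex_closedBall c r).norm_image_sub_le_of_norm_hasDerivWithin_le hderiv hosc
      (mem_closedBall_self hr.le) hz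
    rwa [sub_sub_sub_comm, ← mul_sub] at hmean
  have hsphere : ∀ z ∈ sphere c r, r * ‖deriv g c‖ / 2 ≤ ‖g z - g c‖ := by
    intro z hz
    have hzr : ‖z - c‖ = r := by simpa [dist_eq_norm] using hz
    have hlow := hlinear z (sphere_subset_closedBall hz)
    have htri := norm_sub_norm_le (deriv g c * (z - c)) (g z - g c)
    rw [norm_sub_rev (deriv g c * _), norm_mul, hzr] at htri
    rw [hzr] at hlow
    linarith
  have hnonconst : ∃ᶠ z in 𝓝 c, g z ≠ g c := fun hconst => by
    have heq : g =ᶠ[𝓝 c] fun _ => g c := hconst.mono fun z hz => not_not.1 hz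
    simp [heq.deriv_eq] at hpos
  have hdiff : DifferentiableOn ℂ g (closedBall c r) := fun z hz =>
    (hg z hz).differentiableWithinAt
  convert (hdiff.diffContOnCl_ball subset_rfl).ball_subset_image_closedBall hr hsphere hnonconst
    using 2
  ring

lemma ball_subset_image_of_norm_deriv_le {g : ℂ → ℂ} {c : ℂ} {t : ℝ} (ht : 0 < t)
    (hg : DifferentiableOn ℂ g (ball c t))
    (hbound : ∀ z ∈ ball c t, ‖deriv g z‖ ≤ 2 * ‖deriv g c‖) :
    ball (g c) (t * ‖deriv g c‖ / 24) ⊆ g '' ball c t := by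
  have hsub : closedBall c (t / 6) ⊆ ball c t := closedBall_subset_ball (by linarith)
  have hmaps : MapsTo (deriv g) (ball c t) (closedBall (deriv g c) (3 * ‖deriv g c‖)) := by
    intro z hz
    rw [mem_closedBall, dist_eq_norm]
    linarith [norm_sub_le (deriv g z) (deriv g c), hbound z hz]
  have hosc : ∀ z ∈ closedBall c (t / 6), ‖deriv g z - deriv g c‖ ≤ ‖deriv g c‖ / 2 := by
    intro z hz
    calc ‖deriv g z - deriv g c‖ = dist (deriv g z) (deriv g c) := (dist_eq_norm _ _).symm
      _ ≤ 3 * ‖deriv g c‖ / t * dist z c := Complex.dist_le_div_mul_dist_of_mapsTo_ball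
          (hg.deriv isOpen_ball) hmaps (hsub hz)
      _ ≤ 3 * ‖deriv g c‖ / t * (t / 6) := by gcongr; exact hz
      _ = ‖deriv g c‖ / 2 := by field_simp; ring
  calc ball (g c) (t * ‖deriv g c‖ / 24) = ball (g c) (t / 6 * ‖deriv g c‖ / 4) := by ring_nf
    _ ⊆ g '' closedBall c (t / 6) := ball_subset_image_of_norm_deriv_sub_le (by positivity)
        (fun z hz => hg.differentiableAt (isOpen_ball.mem_nhds (hsub hz))) hosc
    _ ⊆ g '' ball c t := image_mono hsub

-- Landau's choice of `c`: the maximum point of `(1 / 2 - ‖z‖) * ‖deriv g z‖`.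
lemma exists_norm_deriv_le_two_mul {g : ℂ → ℂ} (hg : DifferentiableOn ℂ g (ball 0 1))
    (hg0 : deriv g 0 ≠ 0) :
    ∃ c : ℂ, ∃ t > 0, ball c t ⊆ ball 0 1 ∧ ‖deriv g 0‖ ≤ 4 * (t * ‖deriv g c‖) ∧
      ∀ z ∈ ball c t, ‖deriv g z‖ ≤ 2 * ‖deriv g c‖ := by
  have hcont : ContinuousOn (fun z : ℂ => (1 / 2 - ‖z‖) * ‖deriv g z‖) (closedBall 0 (1 / 2)) :=
    (continuousOn_const.sub continuous_norm.continuousOn).mul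
      ((hg.deriv isOpen_ball).continuousOn.mono (closedBall_subset_ball (by norm_num))).norm
  obtain ⟨c, -, hmax⟩ := (isCompact_closedBall (0 : ℂ) (1 / 2)).exists_isMaxOn ⟨0, by simp⟩ hcont
  have hmax' : ∀ z : ℂ, ‖z‖ ≤ 1 / 2 →
      (1 / 2 - ‖z‖) * ‖deriv g z‖ ≤ (1 / 2 - ‖c‖) * ‖deriv g c‖ := fun z hz =>
    hmax (by simpa using hz)
  have hcenter : ‖deriv g 0‖ ≤ 2 * ((1 / 2 - ‖c‖) * ‖deriv g c‖) := by
    linarith [hmax' 0 (by simp), norm_zero (E := ℂ), show (1 / 2 - ‖(0 : ℂ)‖) * ‖deriv g 0‖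
      = ‖deriv g 0‖ / 2 by rw [norm_zero]; ring]
  have htpos : 0 < (1 / 2 - ‖c‖) / 2 := by
    have : 0 < (1 / 2 - ‖c‖) * ‖deriv g c‖ := by linarith [norm_pos_iff.2 hg0]
    exact half_pos (pos_of_mul_pos_left this (norm_nonneg _))
  have hnorm : ∀ z ∈ ball c ((1 / 2 - ‖c‖) / 2), (1 / 2 - ‖c‖) / 2 ≤ 1 / 2 - ‖z‖ := by
    intro z hz
    have hzc : ‖z - c‖ < (1 / 2 - ‖c‖) / 2 := mem_ball_iff_norm.1 hz
    linarith [norm_le_norm_add_norm_sub' z c]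
  refine ⟨c, _, htpos, fun z hz => ?_, by linarith, fun z hz => ?_⟩
  · rw [mem_ball_zero_iff]
    linarith [hnorm z hz]
  · refine le_of_mul_le_mul_left ?_ htpos
    calc (1 / 2 - ‖c‖) / 2 * ‖deriv g z‖ ≤ (1 / 2 - ‖z‖) * ‖deriv g z‖ := by
          gcongr; exact hnorm z hz
      _ ≤ (1 / 2 - ‖c‖) * ‖deriv g c‖ := hmax' z (by linarith [hnorm z hz])
      _ = (1 / 2 - ‖c‖) / 2 * (2 * ‖deriv g c‖) := by ring

theorem exists_ball_subset_image_unitBall {g : ℂ → ℂ} (hg : DifferentiableOn ℂ g (ball 0 1)) :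
    ∃ w, ball w (‖deriv g 0‖ / 96) ⊆ g '' ball 0 1 := by
  by_cases hg0 : deriv g 0 = 0
  · exact ⟨0, by simp [hg0]⟩
  obtain ⟨c, t, ht, hsub, hle, hbound⟩ := exists_norm_deriv_le_two_mul hg hg0
  refine ⟨g c, (ball_subset_ball ?_).trans
    ((ball_subset_image_of_norm_deriv_le ht (hg.mono hsub) hbound).trans (image_mono hsub))⟩
  linarith

lemma exists_differentiableOn_log {h : ℂ → ℂ} {c : ℂ} {r : ℝ} (hr : 0 < r)
    (hh : DifferentiableOn ℂ h (ball c r)) (h0 : ∀ z ∈ ball c r, h z ≠ 0) :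
    ∃ L : ℂ → ℂ, DifferentiableOn ℂ L (ball c r) ∧ L c = Complex.log (h c) ∧
      ∀ z ∈ ball c r, Complex.exp (L z) = h z := by
  have hc : c ∈ ball c r := mem_ball_self hr
  obtain ⟨L, hLc, hL⟩ := ((hh.deriv isOpen_ball).div hh h0).isExactOn_ball.with_val_at c
    (Complex.log (h c))
  have hquot : ∀ z ∈ ball c r, HasDerivAt (fun z => h z * Complex.exp (-L z)) 0 z := by
    intro z hz
    refine ((hh.differentiableAt (isOpen_ball.mem_nhds hz)).hasDerivAt.mul
      (hL z hz).neg.cexp).congr_deriv ?_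
    simp only [Pi.div_apply]
    field_simp [h0 z hz]
    ring
  have hconst : ∀ z ∈ ball c r, h z * Complex.exp (-L z) = h c * Complex.exp (-L c) :=
    fun z hz => isOpen_ball.is_const_of_deriv_eq_zero (convex_ball _ _).isPreconnected
      (fun x hx => (hquot x hx).differentiableAt.differentiableWithinAt)
      (fun x hx => (hquot x hx).deriv) hz hc
  refine ⟨L, fun z hz => (hL z hz).differentiableAt.differentiableWithinAt, hLc, fun z hz => ?_⟩
  have hone := hconst z hz
  rw [hLc, Complex.exp_neg, Complex.exp_neg, Complex.exp_log (h0 c hc),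
    mul_inv_cancel₀ (h0 c hc)] at hone
  exact (eq_of_mul_inv_eq_one hone).symm

lemma exists_differentiableOn_sq_eq {h : ℂ → ℂ} {c : ℂ} {r : ℝ} (hr : 0 < r)
    (hh : DifferentiableOn ℂ h (ball c r)) (h0 : ∀ z ∈ ball c r, h z ≠ 0) :
    ∃ S : ℂ → ℂ, DifferentiableOn ℂ S (ball c r) ∧ ∀ z ∈ ball c r, S z ^ 2 = h z := by
  obtain ⟨L, hL, -, hexp⟩ := exists_differentiableOn_log hr hh h0
  refine ⟨fun z => Complex.exp (L z / 2), (hL.div_const 2).cexp, fun z hz => ?_⟩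
  rw [← Complex.exp_nat_mul, ← hexp z hz]
  congr 1
  push_cast
  ring

-- `√F + √(F - 1)` and `√F - √(F - 1)` are inverse to each other, so they are `exp g`, `exp (-g)`.
lemma exists_differentiableOn_cosh_sq_eq {F : ℂ → ℂ} {c : ℂ} {r : ℝ} (hr : 0 < r)
    (hF : DifferentiableOn ℂ F (ball c r)) (h0 : ∀ z ∈ ball c r, F z ≠ 0)
    (h1 : ∀ z ∈ ball c r, F z ≠ 1) :
    ∃ g : ℂ → ℂ, DifferentiableOn ℂ g (ball c r) ∧
      ∀ z ∈ ball c r, Complex.cosh (g z) ^ 2 = F z := by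
  obtain ⟨A, hA, hA2⟩ := exists_differentiableOn_sq_eq hr hF h0
  obtain ⟨B, hB, hB2⟩ := exists_differentiableOn_sq_eq hr (hF.sub_const 1)
    fun z hz => sub_ne_zero.2 (h1 z hz)
  have hmul : ∀ z ∈ ball c r, (A z + B z) * (A z - B z) = 1 := fun z hz => by
    linear_combination hA2 z hz - hB2 z hz
  obtain ⟨g, hg, -, hexp⟩ := exists_differentiableOn_log hr (hA.add hB)
    fun z hz => left_ne_zero_of_mul_eq_one (hmul z hz)
  refine ⟨g, hg, fun z hz => ?_⟩
  have hexp_neg : Complex.exp (-g z) = A z - B z := by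
    rw [Complex.exp_neg, hexp z hz]
    exact inv_eq_of_mul_eq_one_right (hmul z hz)
  rw [Complex.cosh, hexp z hz, hexp_neg, ← hA2 z hz, Pi.add_apply]
  ring

lemma cosh_sq_add_one_le {x : ℝ} (hx : 0 ≤ x) : Real.cosh x ^ 2 + 1 ≤ Real.cosh (x + 1) ^ 2 := by
  have hstep : Real.sinh x + 1 ≤ Real.sinh (x + 1) := by
    rw [Real.sinh_add]
    nlinarith [Real.sinh_nonneg_iff.2 hx, Real.one_le_cosh x, Real.one_le_cosh 1,
      Real.self_le_sinh_iff.2 (zero_le_one' ℝ)]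
  nlinarith [Real.cosh_sq x, Real.cosh_sq (x + 1), Real.sinh_nonneg_iff.2 hx]

lemma exists_abs_sub_le_one_cosh_sq_eq_intCast (x : ℝ) :
    ∃ y : ℝ, |x - y| ≤ 1 ∧ ∃ n : ℤ, Real.cosh y ^ 2 = n := by
  wlog hx : 0 ≤ x generalizing x
  · obtain ⟨y, hy, n, hn⟩ := this (-x) (by linarith)
    exact ⟨-y, by rwa [← abs_neg, neg_sub', neg_neg], n, by rwa [Real.cosh_neg]⟩
  have hmem : (⌈Real.cosh x ^ 2⌉ : ℝ) ∈ Icc (Real.cosh x ^ 2) (Real.cosh (x + 1) ^ 2) :=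
    ⟨Int.le_ceil _, (Int.ceil_lt_add_one _).le.trans (cosh_sq_add_one_le hx)⟩
  obtain ⟨y, hy, hyn⟩ := intermediate_value_Icc (by linarith)
    (Real.continuous_cosh.pow 2).continuousOn hmem
  exact ⟨y, abs_le.2 ⟨by linarith [hy.2], by linarith [hy.1]⟩, _, hyn⟩

lemma cosh_add_half_pi_mul_I_sq (y : ℂ) : Complex.cosh (y + Real.pi / 2 * Complex.I) ^ 2
    = 1 - Complex.cosh y ^ 2 := by
  rw [Complex.cosh_add, Complex.cosh_mul_I, Complex.sinh_mul_I, Complex.cos_pi_div_two,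
    Complex.sin_pi_div_two]
  linear_combination Complex.sinh y ^ 2 * Complex.I_sq + Complex.cosh_sq y

lemma exists_cosh_sq_add_int_mul_half_pi_mul_I {y : ℂ} {n : ℤ} (hy : Complex.cosh y ^ 2 = n)
    (k : ℤ) : ∃ m : ℤ, Complex.cosh (y + k * (Real.pi / 2 * Complex.I)) ^ 2 = m := by
  induction k using Int.induction_on with
  | zero => exact ⟨n, by simpa using hy⟩
  | succ k ih =>
    obtain ⟨m, hm⟩ := ih
    refine ⟨1 - m, ?_⟩
    have hstep := cosh_add_half_pi_mul_I_sq (y + (k : ℤ) * (Real.pi / 2 * Complex.I))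
    rw [hm] at hstep
    push_cast at hstep ⊢
    rw [← hstep]
    ring_nf
  | pred k ih =>
    obtain ⟨m, hm⟩ := ih
    refine ⟨1 - m, ?_⟩
    have hstep := cosh_add_half_pi_mul_I_sq (y + (-(k : ℤ) - 1 : ℤ) * (Real.pi / 2 * Complex.I))
    rw [show y + (-(k : ℤ) - 1 : ℤ) * (Real.pi / 2 * Complex.I) + Real.pi / 2 * Complex.I
      = y + (-(k : ℤ) : ℤ) * (Real.pi / 2 * Complex.I) by push_cast; ring, hm] at hstep
    push_cast at hstep ⊢
    linear_combination hstep

lemma exists_mem_ball_two_cosh_sq_eq_intCast (w : ℂ) :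
    ∃ v ∈ ball w 2, ∃ n : ℤ, Complex.cosh v ^ 2 = n := by
  obtain ⟨y, hy, n, hn⟩ := exists_abs_sub_le_one_cosh_sq_eq_intCast w.re
  set k := round (w.im / (Real.pi / 2))
  refine ⟨y + k * (Real.pi / 2 * Complex.I), ?_,
    exists_cosh_sq_add_int_mul_half_pi_mul_I (by exact_mod_cast congrArg ((↑) : ℝ → ℂ) hn) k⟩
  have him : |w.im - k * (Real.pi / 2)| ≤ Real.pi / 4 := by
    have hround := abs_sub_round (w.im / (Real.pi / 2))
    calc |w.im - k * (Real.pi / 2)| = |(w.im / (Real.pi / 2) - k) * (Real.pi / 2)| := by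
          congr 1
          field_simp
      _ = |w.im / (Real.pi / 2) - k| * (Real.pi / 2) := by
          rw [abs_mul, abs_of_pos Real.pi_div_two_pos]
      _ ≤ 1 / 2 * (Real.pi / 2) := by gcongr
      _ = Real.pi / 4 := by ring
  rw [mem_ball', dist_eq_norm]
  calc ‖w - (y + k * (Real.pi / 2 * Complex.I))‖
      ≤ |w.re - y| + |w.im - k * (Real.pi / 2)| := by
        simpa using Complex.norm_le_abs_re_add_abs_im (w - (y + k * (Real.pi / 2 * Complex.I)))
    _ < 2 := by linarith [Real.pi_lt_four]

lemma norm_deriv_le_of_omits_int {F : ℂ → ℂ} (hF : DifferentiableOn ℂ F (ball 0 1))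
    (hint : ∀ z ∈ ball (0 : ℂ) 1, ∀ n : ℤ, F z ≠ n) :
    ‖deriv F 0‖ ≤ 192 * (2 * ‖F 0‖ + 1) := by
  have hmem : (0 : ℂ) ∈ ball (0 : ℂ) 1 := mem_ball_self one_pos
  obtain ⟨g, hg, hcosh⟩ := exists_differentiableOn_cosh_sq_eq one_pos hF
    (fun z hz => by simpa using hint z hz 0) fun z hz => by simpa using hint z hz 1
  have hderiv : deriv F 0 = 2 * Complex.cosh (g 0) * Complex.sinh (g 0) * deriv g 0 := by
    have hg0 : HasDerivAt g (deriv g 0) 0 :=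
      (hg.differentiableAt (isOpen_ball.mem_nhds hmem)).hasDerivAt
    have heq : (fun z => Complex.cosh (g z) ^ 2) =ᶠ[𝓝 0] F :=
      eventually_of_mem (isOpen_ball.mem_nhds hmem) hcosh
    rw [← heq.deriv_eq, (hg0.ccosh.fun_pow 2).deriv]
    ring
  have hgrowth : ‖2 * Complex.cosh (g 0) * Complex.sinh (g 0)‖ ≤ 2 * ‖F 0‖ + 1 := by
    have hsinh : ‖Complex.sinh (g 0)‖ ^ 2 ≤ ‖F 0‖ + 1 := by
      rw [← norm_pow, Complex.sinh_sq, hcosh 0 hmem]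
      simpa using norm_sub_le (F 0) 1
    have hcosh' : ‖Complex.cosh (g 0)‖ ^ 2 = ‖F 0‖ := by rw [← norm_pow, hcosh 0 hmem]
    rw [norm_mul, norm_mul, Complex.norm_ofNat]
    linarith [two_mul_le_add_sq ‖Complex.cosh (g 0)‖ ‖Complex.sinh (g 0)‖]
  have hbloch : ‖deriv g 0‖ ≤ 192 := by
    by_contra! hlarge
    obtain ⟨w, hw⟩ := exists_ball_subset_image_unitBall hg
    obtain ⟨v, hv, n, hn⟩ := exists_mem_ball_two_cosh_sq_eq_intCast w
    obtain ⟨z, hz, rfl⟩ := hw (ball_subset_ball (by linarith) hv)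
    exact hint z hz n (hcosh z hz ▸ hn)
  rw [hderiv, norm_mul, mul_comm]
  gcongr

theorem norm_deriv_le_of_omits_zero_one {h : ℂ → ℂ} (hh : DifferentiableOn ℂ h (ball 0 1))
    (h0 : ∀ z ∈ ball (0 : ℂ) 1, h z ≠ 0) (h1 : ∀ z ∈ ball (0 : ℂ) 1, h z ≠ 1) :
    ‖deriv h 0‖ ≤ 384 * (‖h 0‖ * (‖Complex.log (h 0)‖ + Real.pi)) := by
  have hmem : (0 : ℂ) ∈ ball (0 : ℂ) 1 := mem_ball_self one_pos
  have htwoPiI : ‖(2 * Real.pi * Complex.I : ℂ)‖ = 2 * Real.pi := by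
    simp [abs_of_pos Real.pi_pos]
  obtain ⟨L, hL, hL0, hexp⟩ := exists_differentiableOn_log one_pos hh h0
  have hL' : ‖deriv L 0‖ ≤ 384 * (‖Complex.log (h 0)‖ + Real.pi) := by
    have homits : ∀ z ∈ ball (0 : ℂ) 1, ∀ n : ℤ, L z / (2 * Real.pi * Complex.I) ≠ n := by
      intro z hz n hn
      refine h1 z hz ?_
      rw [← hexp z hz, (div_eq_iff (norm_pos_iff.1 (htwoPiI ▸ Real.two_pi_pos))).1 hn]
      exact Complex.exp_int_mul_two_pi_mul_I n
    have hbound := norm_deriv_le_of_omits_int (hL.div_const _) homits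
    rw [deriv_div_const, norm_div, norm_div, htwoPiI, hL0, div_le_iff₀ Real.two_pi_pos] at hbound
    calc ‖deriv L 0‖ ≤ _ := hbound
      _ = 384 * (‖Complex.log (h 0)‖ + Real.pi) := by field_simp; ring
  have hderiv : deriv h 0 = h 0 * deriv L 0 := by
    have heq : (fun z => Complex.exp (L z)) =ᶠ[𝓝 0] h :=
      eventually_of_mem (isOpen_ball.mem_nhds hmem) hexp
    rw [← heq.deriv_eq,
      (hL.differentiableAt (isOpen_ball.mem_nhds hmem)).hasDerivAt.cexp.deriv, hexp 0 hmem]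
  calc ‖deriv h 0‖ = ‖h 0‖ * ‖deriv L 0‖ := by rw [hderiv, norm_mul]
    _ ≤ ‖h 0‖ * (384 * (‖Complex.log (h 0)‖ + Real.pi)) := by gcongr
    _ = 384 * (‖h 0‖ * (‖Complex.log (h 0)‖ + Real.pi)) := by ring

open RSphere Asymptotics

/-! ### The two charts of the sphere -/

lemma ofC_injective : Function.Injective ofC := fun z w h => by
  simpa [ofC] using congrArg RSphere.val h

lemma ofC_ne_infty (z : ℂ) : ofC z ≠ infty := by simp [ofC, infty]

lemma eq_infty_or_exists_ofC (x : RSphere) : x = infty ∨ ∃ z, x = ofC z := by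
  rcases x with ⟨_ | z⟩
  · exact Or.inl rfl
  · exact Or.inr ⟨z, rfl⟩

lemma dist_eq_sqrt (x y : RSphere) : dist x y =
    √(‖(embed x).fst - (embed y).fst‖ ^ 2 + ((embed x).snd - (embed y).snd) ^ 2) := by
  change dist (embed x) (embed y) = _
  rw [WithLp.prod_dist_eq_of_L2, dist_eq_norm, dist_eq_norm, Real.norm_eq_abs, sq_abs]

lemma embed_ofC_fst (z : ℂ) : (embed (ofC z)).fst = ((2 / (‖z‖ ^ 2 + 1)) : ℝ) • z := rfl

lemma embed_ofC_snd (z : ℂ) : (embed (ofC z)).snd = (‖z‖ ^ 2 - 1) / (‖z‖ ^ 2 + 1) := rfl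

lemma embed_infty_fst : (embed infty).fst = 0 := rfl

lemma embed_infty_snd : (embed infty).snd = 1 := rfl

lemma dist_ofC (z w : ℂ) :
    dist (ofC z) (ofC w) = 2 * ‖z - w‖ / (√(1 + ‖z‖ ^ 2) * √(1 + ‖w‖ ^ 2)) := by
  have hz : 0 < 1 + ‖z‖ ^ 2 := by positivity
  have hw : 0 < 1 + ‖w‖ ^ 2 := by positivity
  have norm_sq_eq : ∀ v : ℂ, ‖v‖ ^ 2 = v.re ^ 2 + v.im ^ 2 := fun v => by
    rw [← Complex.normSq_eq_norm_sq, Complex.normSq_apply]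
    ring
  rw [dist_eq_sqrt, Real.sqrt_eq_iff_mul_self_eq (by positivity) (by positivity),
    ← sq, div_pow, mul_pow, mul_pow, Real.sq_sqrt hz.le, Real.sq_sqrt hw.le]
  simp only [embed_ofC_fst, embed_ofC_snd]
  rw [norm_sq_eq (z - w), norm_sq_eq (_ • z - _ • w)]
  simp only [norm_sq_eq z, norm_sq_eq w, Complex.sub_re, Complex.sub_im, Complex.smul_re,
    Complex.smul_im, smul_eq_mul] at hz hw ⊢
  field_simp
  ring

lemma inv_infty : inv infty = ofC 0 := rfl

lemma inv_ofC_zero : inv (ofC 0) = infty := by simp [inv, elim, ofC]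

lemma inv_ofC {z : ℂ} (hz : z ≠ 0) : inv (ofC z) = ofC z⁻¹ := by simp [inv, elim, ofC, hz]

lemma inv_inv (x : RSphere) : inv (inv x) = x := by
  rcases eq_infty_or_exists_ofC x with rfl | ⟨z, rfl⟩
  · rw [inv_infty, inv_ofC_zero]
  · by_cases hz : z = 0
    · rw [hz, inv_ofC_zero, inv_infty]
    · rw [inv_ofC hz, inv_ofC (inv_ne_zero hz), _root_.inv_inv]

lemma embed_inv (x : RSphere) : (embed (inv x)).fst = (starRingEnd ℂ) (embed x).fst ∧
    (embed (inv x)).snd = -(embed x).snd := by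
  rcases eq_infty_or_exists_ofC x with rfl | ⟨z, rfl⟩
  · simp [inv_infty, embed_ofC_fst, embed_ofC_snd, embed_infty_fst, embed_infty_snd]
  by_cases hz : z = 0
  · simp [hz, inv_ofC_zero, embed_ofC_fst, embed_ofC_snd, embed_infty_fst, embed_infty_snd]
  have hnorm : ‖z‖ ≠ 0 := norm_ne_zero_iff.2 hz
  rw [inv_ofC hz, embed_ofC_fst, embed_ofC_snd, embed_ofC_fst, embed_ofC_snd]
  constructor
  · rw [Complex.inv_def, norm_mul, RCLike.norm_conj, Complex.normSq_eq_norm_sq,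
      Complex.norm_real, Real.norm_of_nonneg (by positivity)]
    simp only [Complex.real_smul, map_mul, Complex.conj_ofReal]
    rw [mul_left_comm, mul_comm, ← Complex.ofReal_mul]
    congr 2
    field_simp
    ring
  · rw [norm_inv]
    field_simp
    ring

lemma dist_inv (x y : RSphere) : dist (inv x) (inv y) = dist x y := by
  rw [dist_eq_sqrt, dist_eq_sqrt, (embed_inv x).1, (embed_inv x).2, (embed_inv y).1,
    (embed_inv y).2, ← map_sub, RCLike.norm_conj]
  congr 2
  ring

lemma continuous_inv : Continuous inv := (Isometry.of_dist_eq dist_inv).continuous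

/-- The two standard charts of the sphere, read as maps from the plane: `false` is the inclusion
of `ℂ`, and `true` is centred at `∞`. -/
noncomputable def chart (b : Bool) (z : ℂ) : RSphere := if b then inv (ofC z) else ofC z

lemma dist_chart (b : Bool) (z w : ℂ) :
    dist (chart b z) (chart b w) = 2 * ‖z - w‖ / (√(1 + ‖z‖ ^ 2) * √(1 + ‖w‖ ^ 2)) := by
  cases b <;> simp [chart, dist_inv, dist_ofC]

lemma chart_injective (b : Bool) : Function.Injective (chart b) := by
  cases b
  · exact ofC_injective
  · exact (Function.LeftInverse.injective inv_inv).comp ofC_injective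

lemma continuous_chart (b : Bool) : Continuous (chart b) := by
  have one_le : ∀ z : ℂ, 1 ≤ √(1 + ‖z‖ ^ 2) := fun z => Real.one_le_sqrt.2 (by simp)
  refine (LipschitzWith.of_dist_le_mul (K := 2) fun z w => ?_).continuous
  rw [dist_chart, dist_eq_norm]
  exact div_le_self (by positivity) (one_le_mul_of_one_le_of_one_le (one_le z) (one_le w))

lemma exists_chart (x : RSphere) : ∃ b z, ‖z‖ ≤ 1 ∧ chart b z = x := by
  rcases eq_infty_or_exists_ofC x with rfl | ⟨z, rfl⟩
  · exact ⟨true, 0, by simp, by simp [chart, inv_ofC_zero]⟩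
  by_cases hz : ‖z‖ ≤ 1
  · exact ⟨false, z, hz, rfl⟩
  · have hz0 : z ≠ 0 := by
      rintro rfl
      simp at hz
    refine ⟨true, z⁻¹, ?_, by simp [chart, inv_ofC (inv_ne_zero hz0)]⟩
    rw [norm_inv]
    exact inv_le_one_of_one_le₀ (not_le.1 hz).le

instance : CompactSpace RSphere := by
  have hcover : (⋃ b, chart b '' closedBall 0 1) = univ := eq_univ_of_forall fun x => by
    obtain ⟨b, z, hz, rfl⟩ := exists_chart x
    exact mem_iUnion.2 ⟨b, z, by simpa using hz, rfl⟩
  exact ⟨hcover ▸ isCompact_iUnion fun b => (isCompact_closedBall 0 1).image (continuous_chart b)⟩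

lemma one_sub_embed_ofC_snd (z : ℂ) : 1 - (embed (ofC z)).snd = 2 / (‖z‖ ^ 2 + 1) := by
  rw [embed_ofC_snd]
  field_simp
  ring

lemma toC_eq_smul (x : RSphere) : toC x = (1 - (embed x).snd)⁻¹ • (embed x).fst := by
  rcases eq_infty_or_exists_ofC x with rfl | ⟨z, rfl⟩
  · simp [toC, elim, infty, embed]
  · rw [one_sub_embed_ofC_snd, embed_ofC_fst, smul_smul, inv_mul_cancel₀ (by positivity), one_smul]
    rfl

lemma continuousAt_toC (z : ℂ) : ContinuousAt toC (ofC z) := by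
  have hembed : Continuous embed :=
    (Isometry.of_dist_eq fun _ _ => rfl : Isometry embed).continuous
  rw [funext toC_eq_smul]
  have hfst : Continuous fun x => (embed x).fst := by fun_prop
  have hsnd : Continuous fun x => 1 - (embed x).snd := by fun_prop
  refine ContinuousAt.smul (hsnd.continuousAt.inv₀ ?_) hfst.continuousAt
  rw [one_sub_embed_ofC_snd]
  positivity

lemma range_ofC : range ofC = {infty}ᶜ := by
  ext x
  rcases eq_infty_or_exists_ofC x with rfl | ⟨z, rfl⟩ <;> simp [ofC_ne_infty]

lemma isOpenEmbedding_ofC : IsOpenEmbedding ofC := by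
  refine ⟨⟨isInducing_iff_nhds.2 fun z => le_antisymm ?_ ?_, ofC_injective⟩,
    range_ofC ▸ isOpen_compl_singleton⟩
  · exact (continuous_chart false).continuousAt.le_comap
  · calc comap ofC (𝓝 (ofC z)) ≤ comap ofC (comap toC (𝓝 z)) :=
          comap_mono (continuousAt_toC z).tendsto.le_comap
      _ = 𝓝 z := by rw [comap_comap]; exact comap_id

lemma isOpenEmbedding_chart (b : Bool) : IsOpenEmbedding (chart b) := by
  cases b
  · exact isOpenEmbedding_ofC
  · exact (Homeomorph.mk ⟨inv, inv, inv_inv, inv_inv⟩ continuous_inv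
      continuous_inv).isOpenEmbedding.comp isOpenEmbedding_ofC

instance (x : RSphere) : (𝓝[≠] x).NeBot := by
  obtain ⟨b, z, -, rfl⟩ := exists_chart x
  have hmap : map (chart b) (𝓝[≠] z) ≤ 𝓝[≠] (chart b z) :=
    (continuous_chart b).continuousAt.continuousWithinAt.tendsto_nhdsWithin
      fun _ hw h => hw (chart_injective b h)
  exact NeBot.mono inferInstance hmap

/-! ### Asymptotic scaling of distances -/

section Scaling

variable {X Y Z : Type*} [MetricSpace X] [MetricSpace Y] [MetricSpace Z]

/-- `g` scales distances near `x` asymptotically by the factor `D`. The definition is strict (both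
points of the pair tend to `x`), so it passes to composites and makes the factor continuous. -/
def HasScaling (g : X → Y) (x : X) (D : ℝ) : Prop :=
  (fun p : X × X => dist (g p.1) (g p.2) - D * dist p.1 p.2) =o[𝓝 (x, x)]
    fun p => dist p.1 p.2

lemma HasScaling.congr {g h : X → Y} {x : X} {D : ℝ} (hg : HasScaling g x D)
    (hgh : g =ᶠ[𝓝 x] h) : HasScaling h x D := by
  refine IsLittleO.congr' hg ?_ EventuallyEq.rfl
  filter_upwards [(hgh.prodMk_nhds hgh : ∀ᶠ p : X × X in 𝓝 (x, x), g p.1 = h p.1 ∧ g p.2 = h p.2)]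
    with p hp
  rw [hp.1, hp.2]

lemma HasScaling.isBigO {g : X → Y} {x : X} {D : ℝ} (hg : HasScaling g x D) :
    (fun p : X × X => dist (g p.1) (g p.2)) =O[𝓝 (x, x)] fun p => dist p.1 p.2 := by
  simpa only [sub_add_cancel] using (IsLittleO.isBigO hg).add
    ((isBigO_refl (fun p : X × X => dist p.1 p.2) (𝓝 (x, x))).const_mul_left D)

lemma HasScaling.isBigO_symm {g : X → Y} {x : X} {D : ℝ} (hD : D ≠ 0) (hg : HasScaling g x D) :
    (fun p : X × X => dist p.1 p.2) =O[𝓝 (x, x)] fun p => dist (g p.1) (g p.2) := by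
  have hscaled := (hg.trans_isBigO (isBigO_self_const_mul hD _ _)).right_isBigO_add
  refine (isBigO_self_const_mul hD _ _).trans (hscaled.congr_right fun p => ?_)
  ring

lemma HasScaling.comp {g : X → Y} {h : Y → Z} {x : X} {D E : ℝ}
    (hh : HasScaling h (g x) E) (hg : HasScaling g x D) (hc : ContinuousAt g x) :
    HasScaling (h ∘ g) x (E * D) := by
  have htendsto : Tendsto (fun p : X × X => (g p.1, g p.2)) (𝓝 (x, x)) (𝓝 (g x, g x)) := by
    rw [nhds_prod_eq, nhds_prod_eq]
    exact hc.tendsto.prodMap hc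
  refine (((hh.comp_tendsto htendsto).trans_isBigO hg.isBigO).add
    (hg.const_mul_left E)).congr_left fun p => ?_
  simp only [Function.comp]
  ring

lemma HasScaling.of_comp {g : X → Y} {h : Y → Z} {x : X} {D E : ℝ} (hD : D ≠ 0)
    (hhg : HasScaling (h ∘ g) x E) (hg : HasScaling g x D) (hopen : map g (𝓝 x) = 𝓝 (g x)) :
    HasScaling h (g x) (E / D) := by
  have hmap : 𝓝 (g x, g x) = map (Prod.map g g) (𝓝 (x, x)) := by
    rw [nhds_prod_eq, nhds_prod_eq, ← prod_map_map_eq', hopen]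
  rw [HasScaling, hmap, isLittleO_map]
  refine ((hhg.sub (hg.const_mul_left (E / D))).trans_isBigO (hg.isBigO_symm hD)).congr_left
    fun p => ?_
  simp only [Function.comp, Prod.map]
  field_simp
  ring

lemma HasScaling.eventually {g : X → Y} {x : X} {D ε : ℝ} (hg : HasScaling g x D)
    (hε : 0 < ε) : ∀ᶠ p : X × X in 𝓝 (x, x),
      |dist (g p.1) (g p.2) - D * dist p.1 p.2| ≤ ε * dist p.1 p.2 := by
  filter_upwards [hg.def hε] with p hp
  simpa [Real.norm_eq_abs] using hp

lemma HasScaling.exists_ball {g : X → Y} {x : X} {D ε : ℝ} (hg : HasScaling g x D)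
    (hε : 0 < ε) : ∃ δ > 0, ∀ y ∈ ball x δ, ∀ y' ∈ ball x δ,
      |dist (g y) (g y') - D * dist y y'| ≤ ε * dist y y' := by
  obtain ⟨δ, hδ, h⟩ := Metric.eventually_nhds_iff_ball.1 (hg.eventually hε)
  exact ⟨δ, hδ, fun y hy y' hy' => h (y, y') (ball_prod_same x x δ ▸ ⟨hy, hy'⟩)⟩

lemma eventually_abs_div_sub_le {g : X → Y} {x : X} {D c : ℝ}
    (h : ∀ᶠ p : X × X in 𝓝 (x, x), |dist (g p.1) (g p.2) - D * dist p.1 p.2| ≤ c * dist p.1 p.2) :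
    ∀ᶠ y in 𝓝[≠] x, |dist (g y) (g x) / dist y x - D| ≤ c := by
  have htendsto : Tendsto (fun y : X => (y, x)) (𝓝[≠] x) (𝓝 (x, x)) :=
    (Continuous.prodMk_left x).continuousAt.tendsto.mono_left nhdsWithin_le_nhds
  filter_upwards [htendsto.eventually h, self_mem_nhdsWithin] with y hy hne
  have hpos : 0 < dist y x := dist_pos.2 hne
  rwa [div_sub' hpos.ne', abs_div, abs_of_pos hpos, div_le_iff₀ hpos, mul_comm (dist y x) D]

lemma HasScaling.tendsto {g : X → Y} {x : X} {D : ℝ} (hg : HasScaling g x D) :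
    Tendsto (fun y => dist (g y) (g x) / dist y x) (𝓝[≠] x) (𝓝 D) := by
  rw [Metric.tendsto_nhds]
  intro ε hε
  filter_upwards [eventually_abs_div_sub_le (hg.eventually (half_pos hε))] with y hy
  exact hy.trans_lt (half_lt_self hε)

lemma HasScaling.abs_sub_le {g : X → Y} {x : X} [(𝓝[≠] x).NeBot] {D D' c : ℝ}
    (hg : HasScaling g x D)
    (h : ∀ᶠ p : X × X in 𝓝 (x, x), |dist (g p.1) (g p.2) - D' * dist p.1 p.2| ≤ c * dist p.1 p.2) :
    |D - D'| ≤ c :=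
  le_of_tendsto (hg.tendsto.sub_const D').abs (eventually_abs_div_sub_le h)

lemma continuous_of_hasScaling {g : X → Y} {D : X → ℝ} [∀ x : X, (𝓝[≠] x).NeBot]
    (hg : ∀ x, HasScaling g x (D x)) : Continuous D := by
  refine Metric.continuous_iff'.2 fun x ε hε => ?_
  have hdiag : Tendsto (fun y : X => (y, y)) (𝓝 x) (𝓝 (x, x)) :=
    (Continuous.prodMk continuous_id continuous_id).tendsto x
  filter_upwards [hdiag.eventually ((hg x).eventually (half_pos hε)).eventually_nhds] with y hy
  exact ((hg y).abs_sub_le hy).trans_lt (half_lt_self hε)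

end Scaling

/-! ### Holomorphic maps of the sphere -/

lemma HasScaling.sphDeriv_eq {g : RSphere → RSphere} {x : RSphere} {D : ℝ}
    (hg : HasScaling g x D) : sphDeriv g x = D :=
  hg.tendsto.limsup_eq

lemma hasScaling_chart (b : Bool) (z : ℂ) : HasScaling (chart b) z (2 / (1 + ‖z‖ ^ 2)) := by
  have hcont : Continuous (fun p : ℂ × ℂ => 2 / (√(1 + ‖p.1‖ ^ 2) * √(1 + ‖p.2‖ ^ 2)) -
      2 / (1 + ‖z‖ ^ 2)) :=
    (Continuous.div continuous_const (by fun_prop) fun p => by positivity).sub continuous_const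
  have htendsto : Tendsto (fun p : ℂ × ℂ => 2 / (√(1 + ‖p.1‖ ^ 2) * √(1 + ‖p.2‖ ^ 2)) -
      2 / (1 + ‖z‖ ^ 2)) (𝓝 (z, z)) (𝓝 0) :=
    hcont.tendsto' _ _ (by rw [Real.mul_self_sqrt (by positivity), sub_self])
  refine ((((isLittleO_one_iff ℝ).2 htendsto).mul_isBigO
    (isBigO_refl (fun p : ℂ × ℂ => dist p.1 p.2) (𝓝 (z, z)))).congr_left fun p => ?_).congr_right
    fun p => one_mul _
  rw [dist_chart, dist_eq_norm]
  ring

lemma hasScaling_of_hasStrictDerivAt {r : ℂ → ℂ} {z r' : ℂ} (h : HasStrictDerivAt r r' z) :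
    HasScaling r z ‖r'‖ := by
  refine IsLittleO.of_norm_right ((IsBigO.trans_isLittleO ?_
    h.hasStrictFDerivAt.isLittleO).trans_isBigO ?_)
  · refine IsBigO.of_bound 1 (Eventually.of_forall fun p => ?_)
    rw [one_mul, Real.norm_eq_abs, dist_eq_norm, dist_eq_norm, ← norm_mul]
    simpa [mul_comm] using abs_norm_sub_norm_le (r p.1 - r p.2) (r' * (p.1 - p.2))
  · refine IsBigO.of_bound 1 (Eventually.of_forall fun p => ?_)
    simp [dist_eq_norm]

/-- A map from the plane to the sphere is holomorphic at `z` when near `z` it is one of the two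
standard charts composed with an analytic function. -/
def HolAt (g : ℂ → RSphere) (z : ℂ) : Prop :=
  ∃ b r, AnalyticAt ℂ r z ∧ g =ᶠ[𝓝 z] fun w => chart b (r w)

lemma holAt_chart (b : Bool) {r : ℂ → ℂ} {z : ℂ} (h : AnalyticAt ℂ r z) :
    HolAt (fun w => chart b (r w)) z := ⟨b, r, h, EventuallyEq.rfl⟩

lemma holAt_of_eventuallyEq_nhdsNE {g : ℂ → RSphere} {z : ℂ} (hg : ContinuousAt g z) {b : Bool}
    {r : ℂ → ℂ} (hr : AnalyticAt ℂ r z) (heq : g =ᶠ[𝓝[≠] z] fun w => chart b (r w)) : HolAt g z :=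
  ⟨b, r, hr, (hg.eventuallyEq_nhds_iff_eventuallyEq_nhdsNE
    ((continuous_chart b).continuousAt.comp hr.continuousAt)).1 heq⟩

lemma eventually_eval_ne_zero {Q : Polynomial ℂ} (hQ : Q ≠ 0) (z : ℂ) :
    ∀ᶠ w in 𝓝[≠] z, Q.eval w ≠ 0 := by
  have hclosed : IsClosed ((Q.roots.toFinset : Set ℂ) \ {z}) :=
    (Finset.finite_toSet _).sdiff.isClosed
  filter_upwards [self_mem_nhdsWithin,
    nhdsWithin_le_nhds (hclosed.isOpen_compl.mem_nhds (x := z) (by simp))] with w hne hw h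
  exact hw ⟨by simp [hQ, h], hne⟩

lemma analyticAt_eval (P : Polynomial ℂ) (z : ℂ) : AnalyticAt ℂ (fun w => P.eval w) z :=
  (Polynomial.differentiable P).analyticAt z

lemma holAt_of_eq_eval_div_eval {g : ℂ → RSphere} {z : ℂ} {P Q : Polynomial ℂ}
    (h0 : P.eval z ≠ 0 ∨ Q.eval z ≠ 0) (hQ : Q ≠ 0) (hg : ContinuousAt g z)
    (heq : ∀ᶠ w in 𝓝[≠] z, Q.eval w ≠ 0 → g w = ofC (P.eval w / Q.eval w)) : HolAt g z := by
  by_cases hz : Q.eval z = 0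
  · have hPz : P.eval z ≠ 0 := h0.resolve_right (not_not.2 hz)
    refine holAt_of_eventuallyEq_nhdsNE (b := true) hg
      ((analyticAt_eval Q z).fun_div (analyticAt_eval P z) hPz) ?_
    filter_upwards [heq, eventually_eval_ne_zero hQ z,
      nhdsWithin_le_nhds ((analyticAt_eval P z).continuousAt.eventually_ne hPz)] with w hw hQw hPw
    rw [hw hQw]
    simp [chart, inv_ofC (div_ne_zero hQw hPw)]
  · refine holAt_of_eventuallyEq_nhdsNE (b := false) hg
      ((analyticAt_eval P z).fun_div (analyticAt_eval Q z) hz) ?_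
    filter_upwards [heq, eventually_eval_ne_zero hQ z] with w hw hQw
    exact hw hQw

lemma eval_inv_eq_eval_reflect_mul (P : Polynomial ℂ) {N : ℕ} (hN : P.natDegree ≤ N) {w : ℂ}
    (hw : w ≠ 0) : P.eval w⁻¹ = (P.reflect N).eval w * (w⁻¹) ^ N := by
  let _ : Invertible w⁻¹ := ⟨w, mul_inv_cancel₀ hw, inv_mul_cancel₀ hw⟩
  exact (Polynomial.eval₂_reflect_mul_pow (RingHom.id ℂ) w⁻¹ N P hN).symm

lemma eval_zero_reflect_natDegree (P : Polynomial ℂ) :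
    (P.reflect P.natDegree).eval 0 = P.leadingCoeff := by
  rw [← Polynomial.coeff_zero_eq_eval_zero, Polynomial.coeff_reflect, Polynomial.revAt_zero,
    Polynomial.coeff_natDegree]

lemma eval_ne_zero_or_of_isCoprime {p q : Polynomial ℂ} (hpq : IsCoprime p q) (z : ℂ) :
    p.eval z ≠ 0 ∨ q.eval z ≠ 0 := by
  obtain ⟨u, v, huv⟩ := hpq
  by_contra! hzero
  simpa [hzero.1, hzero.2] using congrArg (Polynomial.eval z) huv

lemma eval_reflect_ratDeg_ne_zero_or {p q : Polynomial ℂ} (hpq : IsCoprime p q) (hq : q ≠ 0)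
    (hdeg : ratDeg p q ≠ 0) (z : ℂ) :
    (p.reflect (ratDeg p q)).eval z ≠ 0 ∨ (q.reflect (ratDeg p q)).eval z ≠ 0 := by
  by_cases hz : z = 0
  · subst hz
    rcases max_choice p.natDegree q.natDegree with hmax | hmax <;> rw [← ratDeg] at hmax
    · left
      rw [hmax, eval_zero_reflect_natDegree, Polynomial.leadingCoeff_ne_zero]
      rintro rfl
      exact hdeg (by simpa using hmax)
    · right
      rwa [hmax, eval_zero_reflect_natDegree, Polynomial.leadingCoeff_ne_zero]
  · have h := eval_ne_zero_or_of_isCoprime hpq z⁻¹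
    rw [eval_inv_eq_eval_reflect_mul p (le_max_left _ _) hz,
      eval_inv_eq_eval_reflect_mul q (le_max_right _ _) hz] at h
    exact h.imp left_ne_zero_of_mul left_ne_zero_of_mul

lemma _root_.IsRationalMap.right_ne_zero {f : RSphere → RSphere} {p q : Polynomial ℂ}
    (hf : IsRationalMap f p q) (hdeg : ratDeg p q ≠ 0) : q ≠ 0 := by
  rintro rfl
  have hunit := isCoprime_zero_right.1 hf.coprime
  simp [ratDeg, Polynomial.natDegree_eq_zero_of_isUnit hunit] at hdeg

lemma _root_.IsRationalMap.holAt_comp_chart {f : RSphere → RSphere} {p q : Polynomial ℂ}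
    (hf : IsRationalMap f p q) (hdeg : ratDeg p q ≠ 0) (b : Bool) (z : ℂ) :
    HolAt (fun w => f (chart b w)) z := by
  have hq := hf.right_ne_zero hdeg
  have hcont : ContinuousAt (fun w => f (chart b w)) z :=
    (hf.continuous.comp (continuous_chart b)).continuousAt
  cases b
  · exact holAt_of_eq_eval_div_eval (eval_ne_zero_or_of_isCoprime hf.coprime z) hq hcont
      (Eventually.of_forall hf.eval)
  · refine holAt_of_eq_eval_div_eval (eval_reflect_ratDeg_ne_zero_or hf.coprime hq hdeg z)
      (by rwa [Ne, Polynomial.reflect_eq_zero_iff]) hcont ?_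
    filter_upwards [eventually_eval_ne_zero Polynomial.X_ne_zero z] with w hw hQ
    rw [Polynomial.eval_X] at hw
    have hpow : w⁻¹ ^ ratDeg p q ≠ 0 := pow_ne_zero _ (inv_ne_zero hw)
    have hqw := eval_inv_eq_eval_reflect_mul q (le_max_right p.natDegree q.natDegree) hw
    have hchart : chart true w = ofC w⁻¹ := by simp [chart, inv_ofC hw]
    rw [hchart, hf.eval _ (hqw ▸ mul_ne_zero hQ hpow), hqw,
      eval_inv_eq_eval_reflect_mul p (le_max_left _ _) hw]
    exact congrArg ofC (mul_div_mul_right _ _ hpow)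

lemma scaling_const_pos (z : ℂ) : 0 < 2 / (1 + ‖z‖ ^ 2) := by positivity

section Chart

variable {g : RSphere → RSphere} {b b' : Bool} {z : ℂ} {r : ℂ → ℂ}

lemma hasScaling_of_chart (hr : AnalyticAt ℂ r z)
    (heq : (fun w => g (chart b w)) =ᶠ[𝓝 z] fun w => chart b' (r w)) :
    HasScaling g (chart b z) (2 / (1 + ‖r z‖ ^ 2) * ‖deriv r z‖ / (2 / (1 + ‖z‖ ^ 2))) :=
  HasScaling.of_comp (scaling_const_pos z).ne'
    (((hasScaling_chart b' (r z)).comp (hasScaling_of_hasStrictDerivAt hr.hasStrictDerivAt)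
      hr.continuousAt).congr heq.symm)
    (hasScaling_chart b z) ((isOpenEmbedding_chart b).map_nhds_eq z)

lemma sphDeriv_chart_eq_zero_iff (hr : AnalyticAt ℂ r z)
    (heq : (fun w => g (chart b w)) =ᶠ[𝓝 z] fun w => chart b' (r w)) :
    sphDeriv g (chart b z) = 0 ↔ deriv r z = 0 := by
  simp [(hasScaling_of_chart hr heq).sphDeriv_eq, (scaling_const_pos _).ne', -div_eq_zero_iff,
    div_eq_zero_iff (b := 2 / (1 + ‖z‖ ^ 2))]

end Chart

lemma _root_.IsRationalMap.finite_critSet {f : RSphere → RSphere} {p q : Polynomial ℂ}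
    (hf : IsRationalMap f p q) (hdeg : ratDeg p q ≠ 0) : (critSet f).Finite := by
  have hq := hf.right_ne_zero hdeg
  have hwronskian : p.wronskian q ≠ 0 := by
    rw [Ne, hf.coprime.wronskian_eq_zero_iff]
    rintro ⟨hp', hq'⟩
    simp [ratDeg, Polynomial.derivative_eq_zero.1 hp', Polynomial.derivative_eq_zero.1 hq'] at hdeg
  refine ((finite_singleton infty).union
    ((q * p.wronskian q).roots.toFinset.finite_toSet.image ofC)).subset fun x hx => ?_
  rcases eq_infty_or_exists_ofC x with rfl | ⟨z, rfl⟩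
  · exact Or.inl rfl
  refine Or.inr ⟨z, ?_, rfl⟩
  simp only [Finset.mem_coe, Multiset.mem_toFinset,
    Polynomial.mem_roots (mul_ne_zero hq hwronskian), Polynomial.IsRoot, Polynomial.eval_mul,
    mul_eq_zero, or_iff_not_imp_left]
  intro hqz
  have hderiv : deriv ((fun w => p.eval w) / fun w => q.eval w) z = 0 := by
    refine (sphDeriv_chart_eq_zero_iff (g := f) (b := false) (b' := false)
      ((analyticAt_eval p z).div (analyticAt_eval q z) hqz) ?_).1 hx
    filter_upwards [(analyticAt_eval q z).continuousAt.eventually_ne hqz] with w hw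
    exact hf.eval w hw
  rw [deriv_div (analyticAt_eval p z).differentiableAt (analyticAt_eval q z).differentiableAt hqz,
    div_eq_zero_iff, or_iff_left (pow_ne_zero 2 hqz)] at hderiv
  simp only [Polynomial.deriv] at hderiv
  rw [Polynomial.wronskian, Polynomial.eval_sub, Polynomial.eval_mul, Polynomial.eval_mul]
  linear_combination -hderiv

/-- The properties of a rational map which the argument relies on: it is holomorphic in the two
standard charts and has finitely many critical points. -/
structure IsHolMap (f : RSphere → RSphere) : Prop where
  continuous : Continuous f
  holAt : ∀ b z, HolAt (fun w => f (chart b w)) z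
  finite_critSet : (critSet f).Finite

lemma _root_.IsRationalMap.isHolMap {f : RSphere → RSphere} {p q : Polynomial ℂ}
    (hf : IsRationalMap f p q) (hdeg : ratDeg p q ≠ 0) : IsHolMap f :=
  ⟨hf.continuous, hf.holAt_comp_chart hdeg, hf.finite_critSet hdeg⟩

namespace IsHolMap

variable {f : RSphere → RSphere}

lemma hasScaling (hf : IsHolMap f) (x : RSphere) : HasScaling f x (sphDeriv f x) := by
  obtain ⟨b, z, -, rfl⟩ := exists_chart x
  obtain ⟨b', r, hr, heq⟩ := hf.holAt b z
  have h := hasScaling_of_chart hr heq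
  rwa [h.sphDeriv_eq]

lemma map_nhds (hf : IsHolMap f) {x : RSphere} (hx : sphDeriv f x ≠ 0) :
    map f (𝓝 x) = 𝓝 (f x) := by
  obtain ⟨b, z, -, rfl⟩ := exists_chart x
  obtain ⟨b', r, hr, heq⟩ := hf.holAt b z
  have hderiv : deriv r z ≠ 0 := fun h0 => hx ((sphDeriv_chart_eq_zero_iff hr heq).2 h0)
  have hfz : f (chart b z) = chart b' (r z) := heq.eq_of_nhds
  rw [← (isOpenEmbedding_chart b).map_nhds_eq z, hfz, ← (isOpenEmbedding_chart b').map_nhds_eq,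
    ← hr.hasStrictDerivAt.map_nhds_eq hderiv, map_map, map_map]
  exact map_congr heq

lemma sphDeriv_nonneg (hf : IsHolMap f) (x : RSphere) : 0 ≤ sphDeriv f x :=
  ge_of_tendsto (hf.hasScaling x).tendsto (Eventually.of_forall fun _ => by positivity)

lemma continuous_sphDeriv (hf : IsHolMap f) : Continuous (sphDeriv f) :=
  continuous_of_hasScaling hf.hasScaling

lemma continuous_iterate (hf : IsHolMap f) (n : ℕ) : Continuous f^[n] :=
  hf.continuous.iterate n

lemma hasScaling_iterate_prod (hf : IsHolMap f) (n : ℕ) (x : RSphere) :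
    HasScaling f^[n] x (∏ k ∈ Finset.range n, sphDeriv f (f^[k] x)) := by
  induction n with
  | zero => simp [HasScaling]
  | succ n ih =>
    rw [Finset.prod_range_succ, Function.iterate_succ', mul_comm]
    exact (hf.hasScaling _).comp ih (hf.continuous_iterate n).continuousAt

lemma sphDeriv_iterate (hf : IsHolMap f) (n : ℕ) (x : RSphere) :
    sphDeriv f^[n] x = ∏ k ∈ Finset.range n, sphDeriv f (f^[k] x) :=
  (hf.hasScaling_iterate_prod n x).sphDeriv_eq

lemma hasScaling_iterate (hf : IsHolMap f) (n : ℕ) (x : RSphere) :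
    HasScaling f^[n] x (sphDeriv f^[n] x) :=
  hf.sphDeriv_iterate n x ▸ hf.hasScaling_iterate_prod n x

lemma sphDeriv_iterate_zero (hf : IsHolMap f) (x : RSphere) : sphDeriv f^[0] x = 1 := by
  rw [hf.sphDeriv_iterate, Finset.prod_range_zero]

lemma sphDeriv_iterate_add (hf : IsHolMap f) (m n : ℕ) (x : RSphere) :
    sphDeriv f^[m + n] x = sphDeriv f^[m] (f^[n] x) * sphDeriv f^[n] x := by
  simp only [hf.sphDeriv_iterate, ← Function.iterate_add_apply]
  rw [add_comm m n, Finset.prod_range_add, mul_comm]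
  simp only [add_comm]

lemma sphDeriv_iterate_nonneg (hf : IsHolMap f) (n : ℕ) (x : RSphere) :
    0 ≤ sphDeriv f^[n] x :=
  hf.sphDeriv_iterate n x ▸ Finset.prod_nonneg fun _ _ => hf.sphDeriv_nonneg _

lemma sphDeriv_iterate_ne_zero_iff (hf : IsHolMap f) (n : ℕ) (x : RSphere) :
    sphDeriv f^[n] x ≠ 0 ↔ ∀ k < n, sphDeriv f (f^[k] x) ≠ 0 := by
  simp [hf.sphDeriv_iterate, Finset.prod_ne_zero_iff]

lemma map_nhds_iterate (hf : IsHolMap f) {n : ℕ} {x : RSphere} (hx : sphDeriv f^[n] x ≠ 0) :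
    map f^[n] (𝓝 x) = 𝓝 (f^[n] x) := by
  induction n with
  | zero => simp
  | succ n ih =>
    rw [hf.sphDeriv_iterate_ne_zero_iff] at hx ih
    rw [Function.iterate_succ', ← map_map, ih fun k hk => hx k (by lia),
      hf.map_nhds (hx n n.lt_succ_self), Function.comp_apply]

lemma exists_lipschitzWith (hf : IsHolMap f) : ∃ K : ℝ≥0, LipschitzWith K f := by
  have hlocal : LocallyLipschitzOn univ f := fun x _ => by
    obtain ⟨δ, hδ, hball⟩ := (hf.hasScaling x).exists_ball one_pos
    refine ⟨(sphDeriv f x + 1).toNNReal, ball x δ,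
      mem_nhdsWithin_of_mem_nhds (ball_mem_nhds x hδ),
      LipschitzOnWith.of_dist_le_mul fun y hy y' hy' => ?_⟩
    rw [Real.coe_toNNReal _ (by linarith [hf.sphDeriv_nonneg x])]
    linarith [(abs_le.1 (hball y hy y' hy')).2]
  simpa only [lipschitzOnWith_univ] using hlocal.exists_lipschitzOnWith_of_compact isCompact_univ

end IsHolMap

/-! ### Inverse branches along hyperbolic sets -/

/-- `G` is an inverse branch of `f^[n]` mapping `A` into `B` and contracting distances by factors
between `exp (-t)` and `exp (-s)`. -/
structure IsBranch (f : RSphere → RSphere) (n : ℕ) (A B : Set RSphere) (s t : ℝ)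
    (G : RSphere → RSphere) : Prop where
  mapsTo : MapsTo G A B
  right_inv : ∀ u ∈ A, f^[n] (G u) = u
  le_dist : ∀ u ∈ A, ∀ v ∈ A, Real.exp (-t) * dist u v ≤ dist (G u) (G v)
  dist_le : ∀ u ∈ A, ∀ v ∈ A, dist (G u) (G v) ≤ Real.exp (-s) * dist u v

namespace IsBranch

variable {f G G' : RSphere → RSphere} {m n : ℕ} {A B C A' B' : Set RSphere} {s t s' t' : ℝ}

lemma comp (h' : IsBranch f n B C s' t' G') (h : IsBranch f m A B s t G) :
    IsBranch f (m + n) A C (s + s') (t + t') (G' ∘ G) where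
  mapsTo := h'.mapsTo.comp h.mapsTo
  right_inv u hu := by
    rw [Function.iterate_add_apply, Function.comp, h'.right_inv _ (h.mapsTo hu), h.right_inv u hu]
  le_dist u hu v hv := by
    refine le_trans ?_ (h'.le_dist _ (h.mapsTo hu) _ (h.mapsTo hv))
    rw [neg_add, add_comm, Real.exp_add, mul_assoc]
    exact mul_le_mul_of_nonneg_left (h.le_dist u hu v hv) (Real.exp_pos _).le
  dist_le u hu v hv := by
    refine (h'.dist_le _ (h.mapsTo hu) _ (h.mapsTo hv)).trans ?_
    rw [neg_add, add_comm, Real.exp_add, mul_assoc]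
    exact mul_le_mul_of_nonneg_left (h.dist_le u hu v hv) (Real.exp_pos _).le

lemma mono (h : IsBranch f n A B s t G) (hA : A' ⊆ A) (hB : B ⊆ B') (hs : s' ≤ s) (ht : t ≤ t') :
    IsBranch f n A' B' s' t' G where
  mapsTo _ hu := hB (h.mapsTo (hA hu))
  right_inv u hu := h.right_inv u (hA hu)
  le_dist u hu v hv := le_trans (by gcongr) (h.le_dist u (hA hu) v (hA hv))
  dist_le u hu v hv := (h.dist_le u (hA hu) v (hA hv)).trans (by gcongr)

lemma injOn (h : IsBranch f n A B s t G) : InjOn G A := fun u hu v hv huv => by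
  rw [← h.right_inv u hu, huv, h.right_inv v hv]

lemma continuousOn (h : IsBranch f n A B s t G) : ContinuousOn G A :=
  (LipschitzOnWith.of_dist_le' h.dist_le).continuousOn

end IsBranch

/-- A hyperbolic set of `f`: one of the sets entering the definition of `pressureTop`. -/
structure Hyperbolic (f : RSphere → RSphere) (L : Set RSphere) : Prop where
  nonempty : L.Nonempty
  subset_juliaSet : L ⊆ juliaSet f
  isCompact : IsCompact L
  image_eq : f '' L = L
  expandingOn : ExpandingOn f L

namespace Hyperbolic

variable {f : RSphere → RSphere} {L : Set RSphere}

lemma iterate_mem (h : Hyperbolic f L) {x : RSphere} (hx : x ∈ L) (n : ℕ) : f^[n] x ∈ L :=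
  (mapsTo_iff_image_subset.2 h.image_eq.subset).iterate n hx

lemma sphDeriv_iterate_pos (h : Hyperbolic f L) {x : RSphere} (hx : x ∈ L) {n : ℕ} (hn : 1 ≤ n) :
    0 < sphDeriv f^[n] x := by
  obtain ⟨c, hc, l, hl, hexp⟩ := h.expandingOn
  exact lt_of_lt_of_le (by positivity) (hexp x hx n hn)

lemma sphDeriv_pos (h : Hyperbolic f L) {x : RSphere} (hx : x ∈ L) : 0 < sphDeriv f x := by
  simpa only [Function.iterate_one] using h.sphDeriv_iterate_pos hx le_rfl

lemma exists_iterate_eq (h : Hyperbolic f L) (n : ℕ) {x : RSphere} (hx : x ∈ L) :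
    ∃ y ∈ L, f^[n] y = x := by
  have himage : f^[n] '' L = L :=
    (congrFun image_iterate_eq L).trans (Function.iterate_fixed h.image_eq n)
  exact himage.symm.subset hx

end Hyperbolic

lemma exists_forall_ball_subset_image_ball {X Y : Type*} [PseudoMetricSpace X]
    [PseudoMetricSpace Y] {g : X → Y} {K : Set X} (hK : IsCompact K)
    (hopen : ∀ x ∈ K, map g (𝓝 x) = 𝓝 (g x)) {δ : ℝ} (hδ : 0 < δ) :
    ∃ ρ > 0, ∀ x ∈ K, ball (g x) ρ ⊆ g '' ball x δ := by
  refine hK.induction_on (p := fun s => ∃ ρ > 0, ∀ x ∈ s, ball (g x) ρ ⊆ g '' ball x δ)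
    ⟨1, one_pos, by simp⟩ (fun s t hst ⟨ρ, hρ, h⟩ => ⟨ρ, hρ, fun x hx => h x (hst hx)⟩) ?_ ?_
  · rintro s t ⟨ρ, hρ, hs⟩ ⟨σ, hσ, ht⟩
    refine ⟨min ρ σ, lt_min hρ hσ, ?_⟩
    rintro x (hx | hx)
    · exact (ball_subset_ball (min_le_left _ _)).trans (hs x hx)
    · exact (ball_subset_ball (min_le_right _ _)).trans (ht x hx)
  · intro x hx
    have himage : g '' ball x (δ / 2) ∈ 𝓝 (g x) := by
      rw [← hopen x hx]
      exact image_mem_map (ball_mem_nhds x (half_pos hδ))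
    obtain ⟨ρ, hρ, hball⟩ := Metric.mem_nhds_iff.1 himage
    have hnear : {y | g y ∈ ball (g x) (ρ / 2)} ∩ ball x (δ / 2) ∈ 𝓝 x :=
      inter_mem ((hopen x hx).le (ball_mem_nhds _ (half_pos hρ))) (ball_mem_nhds x (half_pos hδ))
    refine ⟨_, mem_nhdsWithin_of_mem_nhds hnear, ρ / 2, half_pos hρ, fun y hy => ?_⟩
    refine ((ball_subset_ball' ?_).trans hball).trans (image_mono (ball_subset_ball' ?_))
    · linarith [mem_ball.1 hy.1]
    · linarith [mem_ball'.1 hy.2]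

/-- On the `δ`-balls about the points `x` of `L`, the map `f` scales distances by `sphDeriv f x`,
up to a factor `exp (± ε)`. -/
def ScalesNear (f : RSphere → RSphere) (L : Set RSphere) (ε δ : ℝ) : Prop :=
  ∀ x ∈ L, ∀ y ∈ ball x δ, ∀ y' ∈ ball x δ,
    Real.exp (-ε) * sphDeriv f x * dist y y' ≤ dist (f y) (f y') ∧
      dist (f y) (f y') ≤ Real.exp ε * sphDeriv f x * dist y y'

lemma ScalesNear.mono {f : RSphere → RSphere} {L : Set RSphere} {ε δ δ' : ℝ}
    (h : ScalesNear f L ε δ) (hδ : δ' ≤ δ) : ScalesNear f L ε δ' := fun x hx y hy y' hy' =>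
  h x hx y (ball_subset_ball hδ hy) y' (ball_subset_ball hδ hy')

namespace IsHolMap

variable {f : RSphere → RSphere} {L : Set RSphere}

lemma exists_scalesNear_ball (hf : IsHolMap f) {x : RSphere} (hx : 0 < sphDeriv f x) {ε : ℝ}
    (hε : 0 < ε) : ∃ δ > 0, ScalesNear f (ball x δ) ε δ := by
  obtain ⟨η, ⟨hlower, hupper⟩, hη⟩ : ∃ η, (Real.exp (-ε) * sphDeriv f x < sphDeriv f x - η ∧
      sphDeriv f x + η < Real.exp ε * sphDeriv f x) ∧ 0 < η := by
    have hexp : 1 < Real.exp ε := Real.one_lt_exp_iff.2 hε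
    have hexp_neg : Real.exp (-ε) < 1 := Real.exp_lt_one_iff.2 (by linarith)
    have hlower : ∀ᶠ η in 𝓝 (0 : ℝ), Real.exp (-ε) * sphDeriv f x < sphDeriv f x - η :=
      ContinuousAt.eventually_lt (by fun_prop) (by fun_prop) (by nlinarith)
    have hupper : ∀ᶠ η in 𝓝 (0 : ℝ), sphDeriv f x + η < Real.exp ε * sphDeriv f x :=
      ContinuousAt.eventually_lt (by fun_prop) (by fun_prop) (by nlinarith)
    exact (((hlower.and hupper).filter_mono nhdsWithin_le_nhds).and
      (self_mem_nhdsWithin (s := Ioi 0))).exists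
  have hcont : ContinuousAt (sphDeriv f) x := hf.continuous_sphDeriv.continuousAt
  obtain ⟨δ₁, hδ₁, hderiv⟩ := Metric.eventually_nhds_iff_ball.1
    (((hcont.const_mul _).eventually_lt continuousAt_const hlower).and
      (continuousAt_const.eventually_lt (hcont.const_mul _) hupper))
  obtain ⟨δ₂, hδ₂, hscale⟩ := (hf.hasScaling x).exists_ball hη
  refine ⟨min δ₁ δ₂ / 2, by positivity, fun z hz y hy y' hy' => ?_⟩
  have hball : ball z (min δ₁ δ₂ / 2) ⊆ ball x (min δ₁ δ₂) :=
    ball_subset_ball' (by linarith [mem_ball.1 hz])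
  have habs := abs_le.1 (hscale y (ball_subset_ball (min_le_right _ _) (hball hy)) y'
    (ball_subset_ball (min_le_right _ _) (hball hy')))
  obtain ⟨hz₁, hz₂⟩ := hderiv z (ball_subset_ball (min_le_left _ _)
    (hball (mem_ball_self (by positivity))))
  constructor <;> nlinarith [dist_nonneg (x := y) (y := y')]

lemma exists_scalesNear (hf : IsHolMap f) (hL : IsCompact L) (hpos : ∀ x ∈ L, 0 < sphDeriv f x)
    {ε : ℝ} (hε : 0 < ε) : ∃ δ > 0, ScalesNear f L ε δ := by
  refine hL.induction_on (p := fun s => ∃ δ > 0, ScalesNear f s ε δ)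
    ⟨1, one_pos, by simp [ScalesNear]⟩
    (fun s t hst ⟨δ, hδ, h⟩ => ⟨δ, hδ, fun x hx => h x (hst hx)⟩) ?_ fun x hx => ?_
  · rintro s t ⟨δ, hδ, hs⟩ ⟨δ', hδ', ht⟩
    refine ⟨min δ δ', lt_min hδ hδ', ?_⟩
    rintro x (hx | hx)
    · exact hs.mono (min_le_left _ _) x hx
    · exact ht.mono (min_le_right _ _) x hx
  · obtain ⟨δ, hδ, h⟩ := hf.exists_scalesNear_ball (hpos x hx) hε
    exact ⟨ball x δ, mem_nhdsWithin_of_mem_nhds (ball_mem_nhds x hδ), δ, hδ, h⟩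

lemma shadow_scaling (hf : IsHolMap f) (hL : Hyperbolic f L) {ε δ : ℝ} (hδ : ScalesNear f L ε δ)
    {x : RSphere} (hx : x ∈ L) (m : ℕ) {y y' : RSphere}
    (hy : ∀ i < m, f^[i] y ∈ ball (f^[i] x) δ) (hy' : ∀ i < m, f^[i] y' ∈ ball (f^[i] x) δ) :
    Real.exp (-(ε * m)) * sphDeriv f^[m] x * dist y y' ≤ dist (f^[m] y) (f^[m] y') ∧
      dist (f^[m] y) (f^[m] y') ≤ Real.exp (ε * m) * sphDeriv f^[m] x * dist y y' := by
  induction m with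
  | zero =>
    rw [hf.sphDeriv_iterate_zero]
    simp
  | succ m ih =>
    obtain ⟨ih_lower, ih_upper⟩ := ih (fun i hi => hy i (by lia)) fun i hi => hy' i (by lia)
    obtain ⟨hlower, hupper⟩ :=
      hδ _ (hL.iterate_mem hx m) _ (hy m (by lia)) _ (hy' m (by lia))
    have hpos := hL.sphDeriv_pos (hL.iterate_mem hx m)
    have hprod : sphDeriv f^[m + 1] x = sphDeriv f (f^[m] x) * sphDeriv f^[m] x := by
      rw [add_comm m 1, hf.sphDeriv_iterate_add, Function.iterate_one]
    have hexp_neg : Real.exp (-(ε * (m + 1 : ℕ))) = Real.exp (-ε) * Real.exp (-(ε * m)) := by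
      rw [← Real.exp_add]; push_cast; ring_nf
    have hexp : Real.exp (ε * (m + 1 : ℕ)) = Real.exp ε * Real.exp (ε * m) := by
      rw [← Real.exp_add]; push_cast; ring_nf
    rw [hprod, hexp_neg, hexp, Function.iterate_succ_apply', Function.iterate_succ_apply']
    constructor
    · calc _ = Real.exp (-ε) * sphDeriv f (f^[m] x) *
            (Real.exp (-(ε * m)) * sphDeriv f^[m] x * dist y y') := by ring
        _ ≤ Real.exp (-ε) * sphDeriv f (f^[m] x) * dist (f^[m] y) (f^[m] y') := by gcongr
        _ ≤ _ := hlower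
    · calc _ ≤ Real.exp ε * sphDeriv f (f^[m] x) * dist (f^[m] y) (f^[m] y') := hupper
        _ ≤ Real.exp ε * sphDeriv f (f^[m] x) *
            (Real.exp (ε * m) * sphDeriv f^[m] x * dist y y') := by gcongr
        _ = _ := by ring

lemma exists_mul_dist_le_of_shadow (hf : IsHolMap f) (hL : Hyperbolic f L) :
    ∃ c > 0, ∃ δ > 0, ∀ m, ∀ x ∈ L, ∀ y y', (∀ i < m, f^[i] y ∈ ball (f^[i] x) δ) →
      (∀ i < m, f^[i] y' ∈ ball (f^[i] x) δ) → c * dist y y' ≤ dist (f^[m] y) (f^[m] y') := by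
  obtain ⟨c, hc, l, hl, hexp⟩ := hL.expandingOn
  have hlog : 0 < Real.log l := Real.log_pos hl
  obtain ⟨δ, hδ, hscale⟩ := hf.exists_scalesNear hL.isCompact (fun x hx => hL.sphDeriv_pos hx) hlog
  refine ⟨min c 1, by positivity, δ, hδ, fun m x hx y y' hy hy' =>
    le_trans ?_ (hf.shadow_scaling hL hscale hx m hy hy').1⟩
  have hgrowth : min c 1 * l ^ m ≤ sphDeriv f^[m] x := by
    rcases Nat.eq_zero_or_pos m with rfl | hm
    · simp [-Function.iterate_zero, hf.sphDeriv_iterate_zero]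
    · exact (mul_le_mul_of_nonneg_right (min_le_left _ _) (by positivity)).trans (hexp x hx m hm)
  have hcancel : Real.exp (-(Real.log l * m)) * l ^ m = 1 := by
    rw [mul_comm (Real.log l), Real.exp_neg, Real.exp_nat_mul, Real.exp_log (by linarith),
      inv_mul_cancel₀ (by positivity)]
  gcongr
  calc min c 1 = Real.exp (-(Real.log l * m)) * (min c 1 * l ^ m) := by
        linear_combination -(min c 1) * hcancel
    _ ≤ _ := by gcongr

lemma exists_shadow (hf : IsHolMap f) (hL : Hyperbolic f L) {δ : ℝ} (hδ : 0 < δ) :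
    ∃ r > 0, ∀ m : ℕ, ∀ x ∈ L, ∀ u ∈ ball (f^[m] x) r, ∃ y, f^[m] y = u ∧
      ∀ i < m, f^[i] y ∈ ball (f^[i] x) δ := by
  obtain ⟨c, hc, δ', hδ', hdist⟩ := hf.exists_mul_dist_le_of_shadow hL
  obtain ⟨ρ, hρ, hopen⟩ := exists_forall_ball_subset_image_ball hL.isCompact
    (fun x hx => hf.map_nhds (hL.sphDeriv_pos hx).ne') (lt_min hδ hδ')
  suffices H : ∀ m : ℕ, ∀ x ∈ L, ∀ u ∈ ball (f^[m] x) (c * ρ), ∃ y, f^[m] y = u ∧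
      ∀ i < m, f^[i] y ∈ ball (f^[i] x) (min δ δ') by
    refine ⟨c * ρ, by positivity, fun m x hx u hu => ?_⟩
    obtain ⟨y, hyu, hy⟩ := H m x hx u hu
    exact ⟨y, hyu, fun i hi => ball_subset_ball (min_le_left _ _) (hy i hi)⟩
  intro m
  induction m with
  | zero => exact fun x _ u _ => ⟨u, rfl, by simp⟩
  | succ m ih =>
    intro x hx u hu
    have hfx : f x ∈ L := hL.iterate_mem hx 1
    obtain ⟨y₁, rfl, hy₁⟩ := ih (f x) hfx u hu
    have hlift : y₁ ∈ ball (f x) ρ :=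
      lt_of_mul_lt_mul_left ((hdist m (f x) hfx y₁ (f x)
        (fun i hi => ball_subset_ball (min_le_right _ _) (hy₁ i hi))
        fun i _ => mem_ball_self hδ').trans_lt hu) hc.le
    obtain ⟨y, hy, rfl⟩ := hopen x hx hlift
    refine ⟨y, rfl, fun i hi => ?_⟩
    cases i with
    | zero => exact hy
    | succ i => exact hy₁ i (by lia)

lemma exists_shadow_branch (hf : IsHolMap f) (hL : Hyperbolic f L) {ε δ : ℝ} (hε : 0 < ε)
    (hδ : 0 < δ) : ∃ r > 0, ∀ m : ℕ, 1 ≤ m → ∀ x ∈ L, ∃ G,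
      IsBranch f m (ball (f^[m] x) r) (ball x δ) (Real.log (sphDeriv f^[m] x) - ε * m)
        (Real.log (sphDeriv f^[m] x) + ε * m) G ∧
      (∀ u ∈ ball (f^[m] x) r, ∀ i < m, f^[i] (G u) ∈ ball (f^[i] x) δ) ∧ G (f^[m] x) = x := by
  obtain ⟨δ', hδ', hscale⟩ :=
    hf.exists_scalesNear hL.isCompact (fun x hx => hL.sphDeriv_pos hx) hε
  obtain ⟨r, hr, hshadow⟩ := hf.exists_shadow hL (lt_min hδ hδ')
  refine ⟨r, hr, fun m hm x hx => ?_⟩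
  choose! G hG hGball using hshadow m x hx
  have hpos := hL.sphDeriv_iterate_pos hx hm
  have hGδ : ∀ u ∈ ball (f^[m] x) r, ∀ i < m, f^[i] (G u) ∈ ball (f^[i] x) δ := fun u hu i hi =>
    ball_subset_ball (min_le_left _ _) (hGball u hu i hi)
  have hGδ' : ∀ u ∈ ball (f^[m] x) r, ∀ i < m, f^[i] (G u) ∈ ball (f^[i] x) δ' :=
    fun u hu i hi => ball_subset_ball (min_le_right _ _) (hGball u hu i hi)
  have hfix : G (f^[m] x) = x := by
    have hu := mem_ball_self (x := f^[m] x) hr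
    have hle := (hf.shadow_scaling hL hscale hx m (hGδ' _ hu) fun i _ => mem_ball_self hδ').1
    rw [hG _ hu, dist_self] at hle
    exact dist_le_zero.1 (nonpos_of_mul_nonpos_right hle (by positivity))
  refine ⟨G, ⟨fun u hu => hGδ u hu 0 hm, hG, fun u hu v hv => ?_, fun u hu v hv => ?_⟩, hGδ, hfix⟩
  all_goals
    have hscaling := hf.shadow_scaling hL hscale hx m (hGδ' u hu) (hGδ' v hv)
    rw [hG u hu, hG v hv] at hscaling
  · rw [Real.exp_neg, inv_mul_le_iff₀ (Real.exp_pos _), Real.exp_add, Real.exp_log hpos,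
      mul_comm (sphDeriv _ _)]
    exact hscaling.2
  · rw [Real.exp_neg, ← div_eq_inv_mul, le_div_iff₀ (Real.exp_pos _), mul_comm, sub_eq_add_neg,
      Real.exp_add, Real.exp_log hpos, mul_comm (sphDeriv _ _)]
    exact hscaling.1

end IsHolMap

/-! ### Landau's theorem for iterates -/

lemma dist_ofC_infty (s : ℂ) : dist (ofC s) infty = 2 / √(1 + ‖s‖ ^ 2) := by
  have hpos : 0 < 1 + ‖s‖ ^ 2 := by positivity
  rw [dist_eq_sqrt, Real.sqrt_eq_iff_mul_self_eq (by positivity) (by positivity),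
    ← sq, div_pow, Real.sq_sqrt hpos.le]
  simp only [embed_ofC_fst, embed_ofC_snd, embed_infty_fst, embed_infty_snd, sub_zero, norm_smul]
  rw [Real.norm_of_nonneg (by positivity)]
  field_simp
  ring

section Moebius

/-- The Möbius transformation sending `a, b, c` to `0, 1, ∞`, with junk value `0` at `c`. -/
noncomputable def moebius (a b c : ℂ) (x : RSphere) : ℂ :=
  elim x ((b - c) / (b - a)) fun s => (s - a) * (b - c) / ((s - c) * (b - a))

lemma moebius_ofC (a b c s : ℂ) :
    moebius a b c (ofC s) = (s - a) * (b - c) / ((s - c) * (b - a)) := rfl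

lemma moebius_infty (a b c : ℂ) : moebius a b c infty = (b - c) / (b - a) := rfl

lemma moebius_chart_true (a b c z : ℂ) :
    moebius a b c (chart true z) = (1 - a * z) * (b - c) / ((1 - c * z) * (b - a)) := by
  simp only [chart, if_true]
  rcases eq_or_ne z 0 with rfl | hz
  · simp [inv_ofC_zero, moebius_infty]
  · rw [inv_ofC hz, moebius_ofC, ← mul_div_mul_right _ _ hz]
    congr 1 <;> field_simp

variable {a b c : ℂ} (hab : a ≠ b) (hbc : b ≠ c) (hac : a ≠ c)

include hab hbc in
lemma moebius_ne_zero {x : RSphere} (hxa : x ≠ ofC a) (hxc : x ≠ ofC c) :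
    moebius a b c x ≠ 0 := by
  have hba := sub_ne_zero.2 hab.symm
  have hbc' := sub_ne_zero.2 hbc
  rcases eq_infty_or_exists_ofC x with rfl | ⟨s, rfl⟩
  · exact div_ne_zero hbc' hba
  · exact div_ne_zero (mul_ne_zero (sub_ne_zero.2 fun h => hxa (h ▸ rfl)) hbc')
      (mul_ne_zero (sub_ne_zero.2 fun h => hxc (h ▸ rfl)) hba)

include hab hac in
lemma moebius_ne_one {x : RSphere} (hxb : x ≠ ofC b) (hxc : x ≠ ofC c) :
    moebius a b c x ≠ 1 := by
  have hba := sub_ne_zero.2 hab.symm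
  have hac' := sub_ne_zero.2 hac
  rcases eq_infty_or_exists_ofC x with rfl | ⟨s, rfl⟩
  · rw [moebius_infty, Ne, div_eq_one_iff_eq hba]
    exact fun h => hac' (by linear_combination h)
  · have hsb : s - b ≠ 0 := sub_ne_zero.2 fun h => hxb (h ▸ rfl)
    have hsc : s - c ≠ 0 := sub_ne_zero.2 fun h => hxc (h ▸ rfl)
    rw [moebius_ofC, Ne, div_eq_one_iff_eq (mul_ne_zero hsc hba)]
    exact fun h => mul_ne_zero hsb hac' (by linear_combination h)

include hab in
lemma dist_moebius_mul {x y : RSphere} (hx : x ≠ ofC c) (hy : y ≠ ofC c) :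
    dist (moebius a b c x) (moebius a b c y) * (dist x (ofC c) * dist y (ofC c)) =
      2 * ‖(b - c) / (b - a) * (a - c)‖ / (1 + ‖c‖ ^ 2) * dist x y := by
  have hba := sub_ne_zero.2 hab.symm
  have hsqrt : √(1 + ‖c‖ ^ 2) * √(1 + ‖c‖ ^ 2) = 1 + ‖c‖ ^ 2 :=
    Real.mul_self_sqrt (by positivity)
  have hsqrt_ne : √(1 + ‖c‖ ^ 2) ≠ 0 := by positivity
  have hinfty : ∀ s, s ≠ c → dist (moebius a b c (ofC s)) (moebius a b c infty) *
      (dist (ofC s) (ofC c) * dist infty (ofC c)) =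
      2 * ‖(b - c) / (b - a) * (a - c)‖ / (1 + ‖c‖ ^ 2) * dist (ofC s) infty := fun s hs => by
    have hsc := sub_ne_zero.2 hs
    have hdiff : moebius a b c (ofC s) - moebius a b c infty =
        -((b - c) / (b - a) * (a - c) / (s - c)) := by
      rw [moebius_ofC, moebius_infty]
      field_simp
      ring
    rw [dist_eq_norm, hdiff, norm_neg, norm_div, dist_comm infty, dist_ofC_infty, dist_ofC_infty,
      dist_ofC]
    generalize √(1 + ‖c‖ ^ 2) = σ at hsqrt hsqrt_ne ⊢
    rw [← hsqrt]
    field_simp [norm_ne_zero_iff.2 hsc]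
  rcases eq_infty_or_exists_ofC x with rfl | ⟨s, rfl⟩ <;>
    rcases eq_infty_or_exists_ofC y with rfl | ⟨t, rfl⟩
  · simp
  · rw [dist_comm, mul_comm (dist infty _), hinfty t fun h => hy (h ▸ rfl), dist_comm infty]
  · exact hinfty s fun h => hx (h ▸ rfl)
  · have hsc : s - c ≠ 0 := sub_ne_zero.2 fun h => hx (h ▸ rfl)
    have htc : t - c ≠ 0 := sub_ne_zero.2 fun h => hy (h ▸ rfl)
    have hdiff : moebius a b c (ofC s) - moebius a b c (ofC t) =
        (b - c) / (b - a) * (a - c) * (s - t) / ((s - c) * (t - c)) := by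
      rw [moebius_ofC, moebius_ofC]
      field_simp
      ring
    rw [dist_eq_norm (moebius a b c (ofC s)), hdiff, dist_ofC, dist_ofC, dist_ofC,
      norm_div, norm_mul _ (s - t), norm_mul (s - c)]
    generalize √(1 + ‖c‖ ^ 2) = σ at hsqrt hsqrt_ne ⊢
    rw [← hsqrt]
    field_simp [norm_ne_zero_iff.2 hsc, norm_ne_zero_iff.2 htc]

include hab hbc hac in
lemma exists_dist_le_mul_dist_moebius : ∃ C : ℝ, 0 ≤ C ∧ ∀ x y : RSphere, x ≠ ofC c → y ≠ ofC c →
    dist x y ≤ C * dist (moebius a b c x) (moebius a b c y) := by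
  have hnorm : 0 < ‖(b - c) / (b - a) * (a - c)‖ := norm_pos_iff.2
    (mul_ne_zero (div_ne_zero (sub_ne_zero.2 hbc) (sub_ne_zero.2 hab.symm)) (sub_ne_zero.2 hac))
  have hκ : 0 < 2 * ‖(b - c) / (b - a) * (a - c)‖ / (1 + ‖c‖ ^ 2) := by positivity
  have hdiam (x y : RSphere) : dist x y ≤ diam (univ : Set RSphere) :=
    dist_le_diam_of_mem isCompact_univ.isBounded (mem_univ x) (mem_univ y)
  refine ⟨diam (univ : Set RSphere) * diam univ / (2 * ‖(b - c) / (b - a) * (a - c)‖ /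
    (1 + ‖c‖ ^ 2)), div_nonneg (mul_self_nonneg _) hκ.le, fun x y hx hy => ?_⟩
  rw [div_mul_eq_mul_div, le_div_iff₀ hκ, mul_comm (dist x y), ← dist_moebius_mul hab hx hy,
    mul_comm (dist _ _)]
  gcongr <;> exact hdiam _ _

include hab in
lemma HolAt.differentiableAt_moebius {g : ℂ → RSphere} {z : ℂ} (hg : HolAt g z)
    (hz : g z ≠ ofC c) : DifferentiableAt ℂ (fun w => moebius a b c (g w)) z := by
  have hba := sub_ne_zero.2 hab.symm
  obtain ⟨i, r, hr, heq⟩ := hg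
  have hdiff := hr.differentiableAt
  rw [heq.eq_of_nhds] at hz
  refine DifferentiableAt.congr_of_eventuallyEq ?_ (heq.fun_comp (moebius a b c))
  cases i
  · have hrz : r z - c ≠ 0 := sub_ne_zero.2 fun h => hz (h ▸ rfl)
    exact DifferentiableAt.div (c := fun w => (r w - a) * (b - c))
      (d := fun w => (r w - c) * (b - a)) (by fun_prop) (by fun_prop) (mul_ne_zero hrz hba)
  · have hrz : 1 - c * r z ≠ 0 := by
      intro h
      have hne : r z ≠ 0 := by
        rintro h0
        simp [h0] at h
      refine hz ?_
      simp only [chart, if_true]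
      rw [inv_ofC hne, eq_inv_of_mul_eq_one_left (sub_eq_zero.1 h).symm]
    simp only [Function.comp_def, moebius_chart_true]
    exact DifferentiableAt.div (by fun_prop) (by fun_prop) (mul_ne_zero hrz hba)

include hab in
lemma continuousAt_moebius {x : RSphere} (hx : x ≠ ofC c) : ContinuousAt (moebius a b c) x := by
  obtain ⟨i, z, -, rfl⟩ := exists_chart x
  exact (isOpenEmbedding_chart i).continuousAt_iff.1
    ((holAt_chart i analyticAt_id).differentiableAt_moebius hab hx).continuousAt

lemma norm_log_le_abs_log_norm_add_pi (w : ℂ) :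
    ‖Complex.log w‖ ≤ |Real.log ‖w‖| + Real.pi := by
  have h := Complex.norm_le_abs_re_add_abs_im (Complex.log w)
  rw [Complex.log_re, Complex.log_im] at h
  linarith [Complex.abs_arg_le_pi w]

include hab hbc in
lemma exists_norm_moebius_mul_log_le {δ : ℝ} (hδ : 0 < δ) :
    ∃ M : ℝ, ∀ x : RSphere, δ ≤ dist x (ofC a) → δ ≤ dist x (ofC c) →
      ‖moebius a b c x‖ * (‖Complex.log (moebius a b c x)‖ + Real.pi) ≤ M := by
  have hcompact : IsCompact ({x | δ ≤ dist x (ofC a)} ∩ {x : RSphere | δ ≤ dist x (ofC c)}) :=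
    ((isClosed_le continuous_const (continuous_id.dist continuous_const)).inter
      (isClosed_le continuous_const (continuous_id.dist continuous_const))).isCompact
  have hcont : ContinuousOn (fun x => ‖moebius a b c x‖ *
      (|Real.log ‖moebius a b c x‖| + Real.pi + Real.pi))
      ({x | δ ≤ dist x (ofC a)} ∩ {x | δ ≤ dist x (ofC c)}) := by
    rintro x ⟨hxa, hxc⟩
    have hxa' : x ≠ ofC a := dist_pos.1 (hδ.trans_le hxa)
    have hxc' : x ≠ ofC c := dist_pos.1 (hδ.trans_le hxc)
    have hnorm : ContinuousAt (fun y => ‖moebius a b c y‖) x := (continuousAt_moebius hab hxc').norm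
    have hlog : ContinuousAt (fun y => |Real.log ‖moebius a b c y‖|) x :=
      (hnorm.log (norm_ne_zero_iff.2 (moebius_ne_zero hab hbc hxa' hxc'))).abs
    exact ContinuousAt.continuousWithinAt (by fun_prop)
  obtain ⟨M, hM⟩ := (hcompact.image_of_continuousOn hcont).bddAbove
  refine ⟨M, fun x hxa hxc => le_trans ?_ (hM (mem_image_of_mem _ ⟨hxa, hxc⟩))⟩
  gcongr
  exact norm_log_le_abs_log_norm_add_pi _

include hab hbc hac in
theorem exists_le_of_hasScaling_of_omits {δ : ℝ} (hδ : 0 < δ) :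
    ∃ B : ℝ, ∀ (φ : ℂ → RSphere) (D : ℝ), (∀ w ∈ ball (0 : ℂ) 1, HolAt φ w) →
      (∀ w ∈ ball (0 : ℂ) 1, φ w ≠ ofC a ∧ φ w ≠ ofC b ∧ φ w ≠ ofC c) →
      δ ≤ dist (φ 0) (ofC a) → δ ≤ dist (φ 0) (ofC c) → HasScaling φ 0 D → D ≤ B := by
  obtain ⟨M, hM⟩ := exists_norm_moebius_mul_log_le hab hbc hδ
  obtain ⟨C, hC, hdist⟩ := exists_dist_le_mul_dist_moebius hab hbc hac
  refine ⟨C * (384 * M), fun φ D hφ hom ha hc hD => ?_⟩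
  set h : ℂ → ℂ := fun w => moebius a b c (φ w)
  have hdiff : DifferentiableOn ℂ h (ball 0 1) := fun w hw =>
    ((hφ w hw).differentiableAt_moebius hab (hom w hw).2.2).differentiableWithinAt
  have hderiv : ‖deriv h 0‖ ≤ 384 * M :=
    (norm_deriv_le_of_omits_zero_one hdiff
      (fun w hw => moebius_ne_zero hab hbc (hom w hw).1 (hom w hw).2.2)
      (fun w hw => moebius_ne_one hab hac (hom w hw).2.1 (hom w hw).2.2)).trans
      (mul_le_mul_of_nonneg_left (hM _ ha hc) (by norm_num))
  have hscaling : HasScaling h 0 ‖deriv h 0‖ := hasScaling_of_hasStrictDerivAt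
    (hdiff.analyticAt (ball_mem_nhds 0 one_pos)).hasStrictDerivAt
  calc D ≤ C * ‖deriv h 0‖ := by
        refine le_of_tendsto_of_tendsto hD.tendsto (hscaling.tendsto.const_mul C) ?_
        filter_upwards [nhdsWithin_le_nhds (ball_mem_nhds (0 : ℂ) one_pos)] with w hw
        rw [← mul_div_assoc]
        gcongr
        exact hdist _ _ (hom w hw).2.2 (hom 0 (mem_ball_self one_pos)).2.2
    _ ≤ C * (384 * M) := by gcongr

end Moebius

lemma hasScaling_chart_affine (i : Bool) (z : ℂ) {s : ℝ} (hs : 0 ≤ s) :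
    HasScaling (fun w : ℂ => chart i (z + s * w)) 0 (2 / (1 + ‖z‖ ^ 2) * s) := by
  have hderiv : HasStrictDerivAt (fun w : ℂ => z + s * w) (s : ℂ) 0 := by
    simpa using ((hasStrictDerivAt_id (0 : ℂ)).const_mul (s : ℂ)).const_add z
  have haffine := hasScaling_of_hasStrictDerivAt hderiv
  rw [Complex.norm_real, Real.norm_of_nonneg hs] at haffine
  have hchart : HasScaling (chart i) (z + s * (0 : ℂ)) (2 / (1 + ‖z‖ ^ 2)) := by
    simpa using hasScaling_chart i z
  exact HasScaling.comp (g := fun w : ℂ => z + s * w) hchart haffine (by fun_prop)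

namespace IsHolMap

variable {f : RSphere → RSphere}

lemma holAt_comp (hf : IsHolMap f) {g : ℂ → RSphere} {z : ℂ} (hg : HolAt g z) :
    HolAt (fun w => f (g w)) z := by
  obtain ⟨i, r, hr, hgr⟩ := hg
  obtain ⟨j, R, hR, hfR⟩ := hf.holAt i (r z)
  refine ⟨j, fun w => R (r w), hR.comp hr, ?_⟩
  filter_upwards [hgr, hr.continuousAt.eventually hfR] with w hgw hfw
  rw [hgw, hfw]

lemma holAt_iterate (hf : IsHolMap f) {g : ℂ → RSphere} {z : ℂ} (hg : HolAt g z) (n : ℕ) :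
    HolAt (fun w => f^[n] (g w)) z := by
  induction n with
  | zero => exact hg
  | succ n ih =>
    simp only [Function.iterate_succ', Function.comp]
    exact hf.holAt_comp ih

lemma exists_sphDeriv_iterate_le (hf : IsHolMap f) {a b c : ℂ} (hab : a ≠ b) (hbc : b ≠ c)
    (hac : a ≠ c) {δ : ℝ} (hδ : 0 < δ) (i : Bool) (z : ℂ) {s : ℝ} (hs : 0 < s) :
    ∃ B : ℝ, ∀ n : ℕ, (∀ w ∈ ball z s, f^[n] (chart i w) ≠ ofC a ∧ f^[n] (chart i w) ≠ ofC b ∧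
      f^[n] (chart i w) ≠ ofC c) → δ ≤ dist (f^[n] (chart i z)) (ofC a) →
      δ ≤ dist (f^[n] (chart i z)) (ofC c) → sphDeriv f^[n] (chart i z) ≤ B := by
  obtain ⟨B, hB⟩ := exists_le_of_hasScaling_of_omits hab hbc hac hδ
  refine ⟨B / (2 / (1 + ‖z‖ ^ 2) * s), fun n hom ha hc => ?_⟩
  have hz : chart i (z + s * (0 : ℂ)) = chart i z := by simp
  have hscaling : HasScaling (fun w : ℂ => f^[n] (chart i (z + s * w))) 0
      (sphDeriv f^[n] (chart i z) * (2 / (1 + ‖z‖ ^ 2) * s)) :=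
    HasScaling.comp (g := fun w : ℂ => chart i (z + s * w)) (hz ▸ hf.hasScaling_iterate n _)
      (hasScaling_chart_affine i z hs.le) ((continuous_chart i).comp (by fun_prop)).continuousAt
  rw [le_div_iff₀ (by positivity)]
  refine hB _ _ (fun w _ => hf.holAt_iterate (holAt_chart i (by fun_prop)) n)
    (fun w hw => hom _ ?_) (by rwa [hz]) (by rwa [hz]) hscaling
  rw [mem_ball_zero_iff] at hw
  rw [mem_ball, dist_eq_norm, add_sub_cancel_left, norm_mul, Complex.norm_real,
    Real.norm_of_nonneg hs.le]
  nlinarith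

end IsHolMap

/-! ### Connecting hyperbolic sets -/

/-- Points of the backward orbit of `x` reached without meeting a critical point. -/
def regularPreimages (f : RSphere → RSphere) (x : RSphere) : Set RSphere :=
  {w | ∃ n, f^[n] w = x ∧ sphDeriv f^[n] w ≠ 0}

/-- Points whose backward orbit does not meet any critical point. -/
def postcriticallyFree (f : RSphere → RSphere) : Set RSphere :=
  {w | ∀ k z, f^[k] z = w → sphDeriv f^[k] z ≠ 0}

lemma finite_range_iterate {α : Type*} {g : α → α} {c : α} {i j : ℕ} (hij : i < j)
    (heq : g^[i] c = g^[j] c) : (range fun k => g^[k] c).Finite := by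
  refine ((finite_Iio j).image fun k => g^[k] c).subset ?_
  rintro _ ⟨k, rfl⟩
  induction k using Nat.strong_induction_on with
  | _ k ih =>
    rcases lt_or_ge k j with hk | hk
    · exact ⟨k, hk, rfl⟩
    · have hred : g^[k] c = g^[k - j + i] c := by
        rw [Function.iterate_add_apply, heq, ← Function.iterate_add_apply, Nat.sub_add_cancel hk]
      beta_reduce
      rw [hred]
      exact ih _ (by lia)

lemma finite_forward_orbit_inter_backward_orbit {α : Type*} (g : α → α) (x c : α) :
    {w | (∃ n, g^[n] w = x) ∧ ∃ j, g^[j] c = w}.Finite := by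
  by_cases hinj : Function.Injective fun k => g^[k] c
  · by_cases hx : ∃ N, g^[N] c = x
    · obtain ⟨N, hN⟩ := hx
      refine ((finite_Iic N).image fun j => g^[j] c).subset ?_
      rintro w ⟨⟨n, hn⟩, j, rfl⟩
      rw [← Function.iterate_add_apply, ← hN] at hn
      exact ⟨j, (Nat.le_add_left j n).trans (hinj hn).le, rfl⟩
    · refine finite_empty.subset ?_
      rintro w ⟨⟨n, hn⟩, j, rfl⟩
      exact hx ⟨n + j, by rw [Function.iterate_add_apply, hn]⟩
  · obtain ⟨i, j, heq, hij⟩ := Function.not_injective_iff.1 hinj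
    have hrange : (range fun k => g^[k] c).Finite := hij.lt_or_gt.elim
      (fun h => finite_range_iterate h heq) fun h => finite_range_iterate h heq.symm
    exact hrange.subset fun w hw => hw.2

lemma Hyperbolic.exists_lt_sphDeriv_iterate {f : RSphere → RSphere} {L : Set RSphere}
    (hL : Hyperbolic f L) {a : RSphere} (ha : a ∈ L) (M : ℝ) : ∃ m, M < sphDeriv f^[m] a := by
  obtain ⟨c, hc, l, hl, hexp⟩ := hL.expandingOn
  obtain ⟨m, hm, hm1⟩ := (((tendsto_pow_atTop_atTop_of_one_lt hl).const_mul_atTop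
    hc).eventually_gt_atTop M |>.and (eventually_ge_atTop 1)).exists
  exact ⟨m, hm.trans_le (hexp _ ha m hm1)⟩

namespace IsHolMap

variable {f : RSphere → RSphere} {L L' : Set RSphere}

lemma sphDeriv_iterate_succ (hf : IsHolMap f) (n : ℕ) (x : RSphere) :
    sphDeriv f^[n + 1] x = sphDeriv f^[n] (f x) * sphDeriv f x := by
  rw [hf.sphDeriv_iterate_add n 1, Function.iterate_one]

lemma exists_iterate_eq_self_of_finite (hf : IsHolMap f) (hL : Hyperbolic f L) {x : RSphere}
    (hx : x ∈ L) (hfin : (regularPreimages f x).Finite) : ∃ n, 1 ≤ n ∧ f^[n] x = x := by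
  choose g hgL hg using fun n : ℕ => hL.exists_iterate_eq n hx
  have hmem : ∀ n, g n ∈ regularPreimages f x := fun n =>
    ⟨n, hg n, (hf.sphDeriv_iterate_ne_zero_iff n _).2 fun k _ =>
      (hL.sphDeriv_pos (hL.iterate_mem (hgL n) k)).ne'⟩
  obtain ⟨i, -, j, -, hij, heq⟩ := infinite_univ.exists_ne_map_eq_of_mapsTo
    (fun n _ => hmem n) hfin
  wlog hlt : i < j generalizing i j
  · exact this j i hij.symm heq.symm (lt_of_le_of_ne (not_lt.1 hlt) hij.symm)
  refine ⟨j - i, by lia, ?_⟩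
  calc f^[j - i] x = f^[j - i] (f^[i] (g i)) := by rw [hg i]
    _ = f^[j] (g j) := by rw [← Function.iterate_add_apply, Nat.sub_add_cancel hlt.le, heq]
    _ = x := hg j

lemma preimage_regularPreimages_diff_critSet (hf : IsHolMap f) {x : RSphere} {n : ℕ} (hn : 1 ≤ n)
    (hnx : f^[n] x = x) (hn0 : sphDeriv f^[n] x ≠ 0) :
    f ⁻¹' regularPreimages f x \ critSet f = regularPreimages f x := by
  have mem_of_succ : ∀ m w, f^[m + 1] w = x → sphDeriv f^[m + 1] w ≠ 0 →
      w ∈ f ⁻¹' regularPreimages f x \ critSet f := by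
    intro m w hw hw0
    rw [hf.sphDeriv_iterate_succ] at hw0
    exact ⟨⟨m, hw, left_ne_zero_of_mul hw0⟩, right_ne_zero_of_mul hw0⟩
  refine Subset.antisymm ?_ ?_
  · rintro w ⟨⟨m, hw, hw0⟩, hcrit⟩
    refine ⟨m + 1, hw, ?_⟩
    rw [hf.sphDeriv_iterate_succ]
    exact mul_ne_zero hw0 hcrit
  · rintro w ⟨_ | m, hw, hw0⟩
    · obtain ⟨m, rfl⟩ := Nat.exists_eq_add_of_le' hn
      obtain rfl : w = x := hw
      exact mem_of_succ m w hnx hn0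
    · exact mem_of_succ m w hw hw0

lemma infinite_regularPreimages (hf : IsHolMap f)
    (hexc : ¬ IsExceptional f ∨ maxExceptional f ∩ juliaSet f = ∅) (hL : Hyperbolic f L)
    {x : RSphere} (hx : x ∈ L) : (regularPreimages f x).Infinite := by
  intro hfin
  have hxmem : x ∈ regularPreimages f x := ⟨0, rfl, by
    rw [hf.sphDeriv_iterate_zero]
    exact one_ne_zero⟩
  obtain ⟨n, hn, hnx⟩ := hf.exists_iterate_eq_self_of_finite hL hx hfin
  have hinv := hf.preimage_regularPreimages_diff_critSet hn hnx (hL.sphDeriv_iterate_pos hx hn).ne'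
  have hmax : x ∈ maxExceptional f := mem_sUnion.2 ⟨_, ⟨hfin, ⟨x, hxmem⟩, hinv⟩, hxmem⟩
  rcases hexc with hexc | hdisj
  · exact hexc ⟨_, hfin, ⟨x, hxmem⟩, hinv⟩
  · exact notMem_empty x (hdisj.subset ⟨hmax, hL.subset_juliaSet hx⟩)

lemma infinite_regularPreimages_inter_postcriticallyFree (hf : IsHolMap f)
    (hexc : ¬ IsExceptional f ∨ maxExceptional f ∩ juliaSet f = ∅) (hL : Hyperbolic f L)
    {x : RSphere} (hx : x ∈ L) : (regularPreimages f x ∩ postcriticallyFree f).Infinite := by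
  have hbad : (⋃ c ∈ critSet f, {w | (∃ n, f^[n] w = x) ∧ ∃ j, f^[j] c = w}).Finite :=
    hf.finite_critSet.biUnion fun c _ => finite_forward_orbit_inter_backward_orbit f x c
  refine ((hf.infinite_regularPreimages hexc hL hx).sdiff hbad).mono ?_
  rintro w ⟨hw, hnb⟩
  refine ⟨hw, fun k z hz => (hf.sphDeriv_iterate_ne_zero_iff k z).2 fun i hi hcrit => ?_⟩
  obtain ⟨n, hn, -⟩ := hw
  refine hnb (mem_iUnion₂.2 ⟨f^[i] z, hcrit, ⟨n, hn⟩, k - i, ?_⟩)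
  rw [← Function.iterate_add_apply, Nat.sub_add_cancel hi.le, hz]

/- Four omitted values allow to choose three, two of which stay away from the orbit point. -/
lemma exists_sphDeriv_iterate_le_of_omits (hf : IsHolMap f) {e : Fin 4 → ℂ}
    (he : Function.Injective e) (i : Bool) (z : ℂ) {s : ℝ} (hs : 0 < s) :
    ∃ M : ℝ, ∀ n : ℕ, (∀ w ∈ ball z s, ∀ j, f^[n] (chart i w) ≠ ofC (e j)) →
      sphDeriv f^[n] (chart i z) ≤ M := by
  set E : Set RSphere := range (ofC ∘ e)
  have hE : E.Finite := finite_range _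
  have hnontrivial : E.Nontrivial := ⟨_, mem_range_self 0, _, mem_range_self 1,
    (ofC_injective.comp he).ne (by decide)⟩
  have hδ : 0 < E.infsep / 2 := half_pos (hE.infsep_pos_iff_nontrivial.2 hnontrivial)
  have hfar : ∀ x j k, j ≠ k → dist x (ofC (e j)) < E.infsep / 2 →
      E.infsep / 2 ≤ dist x (ofC (e k)) := fun x j k hjk hj => by
    have hsep : E.infsep ≤ dist (ofC (e j)) (ofC (e k)) := infsep_le_dist_of_mem
      (mem_range_self j) (mem_range_self k) ((ofC_injective.comp he).ne hjk)
    linarith [hsep.trans (dist_triangle_left _ _ x)]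
  obtain ⟨M₁, hM₁⟩ := hf.exists_sphDeriv_iterate_le (a := e 0) (b := e 1) (c := e 2)
    (he.ne (by decide)) (he.ne (by decide)) (he.ne (by decide)) hδ i z hs
  obtain ⟨M₂, hM₂⟩ := hf.exists_sphDeriv_iterate_le (a := e 1) (b := e 0) (c := e 3)
    (he.ne (by decide)) (he.ne (by decide)) (he.ne (by decide)) hδ i z hs
  refine ⟨max M₁ M₂, fun n hom => ?_⟩
  set x := f^[n] (chart i z)
  have hM₂' (j : Fin 4) (h1 : j ≠ 1) (h3 : j ≠ 3) (hj : dist x (ofC (e j)) < E.infsep / 2) :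
      sphDeriv f^[n] (chart i z) ≤ max M₁ M₂ :=
    (hM₂ n (fun w hw => ⟨hom w hw 1, hom w hw 0, hom w hw 3⟩) (hfar x j 1 h1 hj)
      (hfar x j 3 h3 hj)).trans (le_max_right _ _)
  rcases lt_or_ge (dist x (ofC (e 0))) (E.infsep / 2) with h0 | h0
  · exact hM₂' 0 (by decide) (by decide) h0
  rcases lt_or_ge (dist x (ofC (e 2))) (E.infsep / 2) with h2 | h2
  · exact hM₂' 2 (by decide) (by decide) h2
  · exact (hM₁ n (fun w hw => ⟨hom w hw 0, hom w hw 1, hom w hw 2⟩) h0 h2).trans (le_max_left _ _)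

lemma exists_iterate_mem_of_infinite (hf : IsHolMap f) (hL : Hyperbolic f L) {a : RSphere}
    (ha : a ∈ L) {r : ℝ} (hr : 0 < r) {W : Set RSphere} (hW : W.Infinite) :
    ∃ n, ∃ y ∈ ball a r, f^[n] y ∈ W := by
  by_contra! hcon
  obtain ⟨i, z, -, rfl⟩ := exists_chart a
  obtain ⟨s, hs, hball⟩ : ∃ s > 0, ∀ w ∈ ball z s, chart i w ∈ ball (chart i z) r :=
    Metric.eventually_nhds_iff_ball.1
      ((continuous_chart i).continuousAt.eventually (ball_mem_nhds _ hr))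
  have hWinf : (ofC ⁻¹' W).Infinite := by
    refine fun hfin => hW (((hfin.image ofC).insert infty).subset fun x hx => ?_)
    rcases eq_infty_or_exists_ofC x with rfl | ⟨u, rfl⟩
    · exact Or.inl rfl
    · exact Or.inr ⟨u, hx, rfl⟩
  set e : Fin 4 → ℂ := fun j => hWinf.natEmbedding _ j
  have he : Function.Injective e := Subtype.val_injective.comp
    ((hWinf.natEmbedding _).injective.comp Fin.val_injective)
  obtain ⟨M, hM⟩ := hf.exists_sphDeriv_iterate_le_of_omits he i z hs
  obtain ⟨m, hm⟩ := hL.exists_lt_sphDeriv_iterate ha M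
  exact hm.not_ge (hM m fun w hw j h =>
    hcon m _ (hball w hw) (h ▸ (hWinf.natEmbedding _ j).2))

lemma exists_branch_of_ne_zero (hf : IsHolMap f) {n : ℕ} {y : RSphere}
    (hy : sphDeriv f^[n] y ≠ 0) {r : ℝ} (hr : 0 < r) :
    ∃ κ > 0, ∃ C, ∃ G, IsBranch f n (ball (f^[n] y) κ) (ball y r) (-C) C G := by
  set D := sphDeriv f^[n] y
  have hD : 0 < D := lt_of_le_of_ne (hf.sphDeriv_iterate_nonneg n y) hy.symm
  obtain ⟨η, hη, hscaling⟩ := (hf.hasScaling_iterate n y).exists_ball (half_pos hD)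
  have himage : f^[n] '' ball y (min η r) ∈ 𝓝 (f^[n] y) := by
    rw [← hf.map_nhds_iterate hy]
    exact image_mem_map (ball_mem_nhds y (lt_min hη hr))
  obtain ⟨κ, hκ, hsub⟩ := Metric.mem_nhds_iff.1 himage
  have hpreimage : ∀ u ∈ ball (f^[n] y) κ, ∃ w ∈ ball y (min η r), f^[n] w = u := hsub
  choose! G hG hfG using hpreimage
  have hdist : ∀ u ∈ ball (f^[n] y) κ, ∀ v ∈ ball (f^[n] y) κ,
      |dist u v - D * dist (G u) (G v)| ≤ D / 2 * dist (G u) (G v) := fun u hu v hv => by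
    have h := hscaling _ (ball_subset_ball (min_le_left _ _) (hG u hu)) _
      (ball_subset_ball (min_le_left _ _) (hG v hv))
    rwa [hfG u hu, hfG v hv] at h
  have hexp : Real.exp (|Real.log D| + Real.log 2) = Real.exp |Real.log D| * 2 := by
    rw [Real.exp_add, Real.exp_log two_pos]
  have hle : D ≤ Real.exp |Real.log D| :=
    (Real.exp_log hD).symm.trans_le (Real.exp_le_exp.2 (le_abs_self _))
  have hge : 1 ≤ Real.exp |Real.log D| * D := by
    rw [← inv_le_iff_one_le_mul₀ hD, ← Real.exp_log hD, ← Real.exp_neg, Real.exp_log hD]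
    exact Real.exp_le_exp.2 (neg_le_abs _)
  refine ⟨κ, hκ, |Real.log D| + Real.log 2, G,
    ⟨fun u hu => ball_subset_ball (min_le_right _ _) (hG u hu), hfG,
      fun u hu v hv => ?_, fun u hu v hv => ?_⟩⟩
  · rw [Real.exp_neg, inv_mul_le_iff₀ (Real.exp_pos _), hexp]
    have hup : dist u v ≤ 3 / 2 * D * dist (G u) (G v) := by
      linarith [(abs_le.1 (hdist u hu v hv)).2]
    refine hup.trans (mul_le_mul_of_nonneg_right ?_ dist_nonneg)
    linarith
  · rw [neg_neg, hexp]
    have hlow : D / 2 * dist (G u) (G v) ≤ dist u v := by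
      linarith [(abs_le.1 (hdist u hu v hv)).1]
    calc dist (G u) (G v) ≤ Real.exp |Real.log D| * D * dist (G u) (G v) :=
          le_mul_of_one_le_left dist_nonneg hge
      _ = Real.exp |Real.log D| * 2 * (D / 2 * dist (G u) (G v)) := by ring
      _ ≤ Real.exp |Real.log D| * 2 * dist u v := by gcongr

lemma exists_bridge_at (hf : IsHolMap f)
    (hexc : ¬ IsExceptional f ∨ maxExceptional f ∩ juliaSet f = ∅)
    (hL : Hyperbolic f L) (hL' : Hyperbolic f L') {x a : RSphere} (hx : x ∈ L) (ha : a ∈ L')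
    {r : ℝ} (hr : 0 < r) :
    ∃ κ > 0, ∃ n C G, IsBranch f n (ball x κ) (ball a r) (-C) C G := by
  obtain ⟨k, y, hy, ⟨n, hn, hn0⟩, hfree⟩ := hf.exists_iterate_mem_of_infinite hL' ha
    (half_pos hr) (hf.infinite_regularPreimages_inter_postcriticallyFree hexc hL hx)
  have hne : sphDeriv f^[n + k] y ≠ 0 := by
    rw [hf.sphDeriv_iterate_add]
    exact mul_ne_zero hn0 (hfree k y rfl)
  obtain ⟨κ, hκ, C, G, hG⟩ := hf.exists_branch_of_ne_zero hne (half_pos hr)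
  rw [Function.iterate_add_apply, hn] at hG
  exact ⟨κ, hκ, n + k, C, G, hG.mono Subset.rfl
    (ball_subset_ball' (by linarith [mem_ball.1 hy])) le_rfl le_rfl⟩

theorem exists_bridge (hf : IsHolMap f)
    (hexc : ¬ IsExceptional f ∨ maxExceptional f ∩ juliaSet f = ∅)
    (hL : Hyperbolic f L) (hL' : Hyperbolic f L') {r : ℝ} (hr : 0 < r) :
    ∃ κ > 0, ∃ N : ℕ, ∃ C : ℝ, ∀ x ∈ L, ∀ a ∈ L', ∃ n ≤ N, ∃ G,
      IsBranch f n (ball x κ) (ball a r) (-C) C G := by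
  suffices H : ∃ κ > 0, ∃ N : ℕ, ∃ C : ℝ, ∀ p ∈ L ×ˢ L', ∃ n ≤ N, ∃ G,
      IsBranch f n (ball p.1 κ) (ball p.2 r) (-C) C G by
    obtain ⟨κ, hκ, N, C, H⟩ := H
    exact ⟨κ, hκ, N, C, fun x hx a ha => H (x, a) ⟨hx, ha⟩⟩
  refine (hL.isCompact.prod hL'.isCompact).induction_on
    (p := fun S => ∃ κ > 0, ∃ N : ℕ, ∃ C : ℝ, ∀ p ∈ S, ∃ n ≤ N, ∃ G,
      IsBranch f n (ball p.1 κ) (ball p.2 r) (-C) C G) ⟨1, one_pos, 0, 0, by simp⟩ ?_ ?_ ?_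
  · rintro S T hST ⟨κ, hκ, N, C, H⟩
    exact ⟨κ, hκ, N, C, fun p hp => H p (hST hp)⟩
  · rintro S T ⟨κ₁, hκ₁, N₁, C₁, H₁⟩ ⟨κ₂, hκ₂, N₂, C₂, H₂⟩
    refine ⟨min κ₁ κ₂, lt_min hκ₁ hκ₂, max N₁ N₂, max C₁ C₂, ?_⟩
    rintro p (hp | hp)
    · obtain ⟨n, hn, G, hG⟩ := H₁ p hp
      exact ⟨n, hn.trans (le_max_left _ _), G, hG.mono (ball_subset_ball (min_le_left _ _))
        Subset.rfl (neg_le_neg (le_max_left _ _)) (le_max_left _ _)⟩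
    · obtain ⟨n, hn, G, hG⟩ := H₂ p hp
      exact ⟨n, hn.trans (le_max_right _ _), G, hG.mono (ball_subset_ball (min_le_right _ _))
        Subset.rfl (neg_le_neg (le_max_right _ _)) (le_max_right _ _)⟩
  · rintro ⟨x, a⟩ ⟨hx, ha⟩
    obtain ⟨κ, hκ, n, C, G, hG⟩ := hf.exists_bridge_at hexc hL hL' hx ha (half_pos hr)
    refine ⟨ball x (κ / 2) ×ˢ ball a (r / 2), mem_nhdsWithin_of_mem_nhds
      (prod_mem_nhds (ball_mem_nhds _ (half_pos hκ)) (ball_mem_nhds _ (half_pos hr))),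
      κ / 2, half_pos hκ, n, C, fun p hp => ⟨n, le_rfl, G, hG.mono ?_ ?_ le_rfl le_rfl⟩⟩
    · exact ball_subset_ball' (by linarith [mem_ball.1 hp.1])
    · exact ball_subset_ball' (by linarith [mem_ball'.1 hp.2])

end IsHolMap

/-- There are `N` inverse branches of `f^[n]` mapping `B` into itself, with disjoint images and
contraction rates between `exp (-t)` and `exp (-s)`. -/
def HasSystem (f : RSphere → RSphere) (B : Set RSphere) (n N : ℕ) (s t : ℝ) : Prop :=
  ∃ ψ : Fin N → RSphere → RSphere, (∀ i, IsBranch f n B B s t (ψ i)) ∧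
    Pairwise fun i j => Disjoint (ψ i '' B) (ψ j '' B)

namespace HasSystem

variable {f : RSphere → RSphere} {B : Set RSphere} {n n' N N' : ℕ} {s s' t t' : ℝ}

lemma mono (h : HasSystem f B n N s t) (hN : N' ≤ N) (hs : s' ≤ s) (ht : t ≤ t') :
    HasSystem f B n N' s' t' := by
  obtain ⟨ψ, hψ, hdisj⟩ := h
  exact ⟨fun i => ψ (Fin.castLE hN i), fun i => (hψ _).mono Subset.rfl Subset.rfl hs ht,
    fun i j hij => hdisj ((Fin.castLE_injective hN).ne hij)⟩

lemma comp (h : HasSystem f B n N s t) (h' : HasSystem f B n' N' s' t') :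
    HasSystem f B (n + n') (N * N') (s + s') (t + t') := by
  obtain ⟨ψ, hψ, hψdisj⟩ := h
  obtain ⟨φ, hφ, hφdisj⟩ := h'
  refine ⟨fun i => φ (finProdFinEquiv.symm i).2 ∘ ψ (finProdFinEquiv.symm i).1,
    fun i => (hφ _).comp (hψ _), fun i j hij => ?_⟩
  have hne := finProdFinEquiv.symm.injective.ne hij
  beta_reduce
  generalize finProdFinEquiv.symm i = p at *
  generalize finProdFinEquiv.symm j = q at *
  simp only [image_comp]
  by_cases hpq : p.2 = q.2
  · rw [hpq]
    exact (hψdisj fun h => hne (Prod.ext h hpq)).image (hφ q.2).injOn (hψ _).mapsTo.image_subset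
      (hψ _).mapsTo.image_subset
  · exact (hφdisj hpq).mono (image_mono (hψ _).mapsTo.image_subset)
      (image_mono (hψ _).mapsTo.image_subset)

lemma zero : HasSystem f B 0 1 0 0 :=
  ⟨fun _ => id, fun _ => ⟨fun _ h => h, fun _ _ => rfl, by simp, by simp⟩,
    fun i j hij => (hij (Subsingleton.elim i j)).elim⟩

lemma pow (h : HasSystem f B n N s t) (k : ℕ) : HasSystem f B (k * n) (N ^ k) (k * s) (k * t) := by
  induction k with
  | zero => simpa using zero
  | succ k ih =>
    rw [pow_succ, add_one_mul, Nat.cast_add_one, add_one_mul, add_one_mul]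
    exact ih.comp h

end HasSystem

/-! ### Limit sets of systems of inverse branches -/

lemma exists_forall_le_dist_of_pairwise_disjoint {ι X : Type*} [Finite ι] [PseudoMetricSpace X]
    {K : ι → Set X} (hcompact : ∀ i, IsCompact (K i)) (hclosed : ∀ i, IsClosed (K i))
    (hdisj : Pairwise fun i j => Disjoint (K i) (K j)) :
    ∃ η > 0, ∀ i j, i ≠ j → ∀ u ∈ K i, ∀ v ∈ K j, η ≤ dist u v := by
  have hsmall : ∀ i j, ∀ᶠ η : ℝ in 𝓝[>] 0, i ≠ j → ∀ u ∈ K i, ∀ v ∈ K j, η ≤ dist u v := by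
    intro i j
    rcases eq_or_ne i j with rfl | hij
    · exact .of_forall fun _ h => (h rfl).elim
    obtain ⟨r, hr, hlt⟩ := exists_pos_forall_lt_edist (hcompact i) (hclosed j) (hdisj hij)
    filter_upwards [nhdsWithin_le_nhds (eventually_le_nhds (NNReal.coe_pos.2 hr))]
      with η hη _ u hu v hv
    have hle := (hlt u hu v hv).le
    rw [edist_nndist] at hle
    exact hη.trans (by exact_mod_cast hle)
  obtain ⟨η, hη, hpos⟩ := ((eventually_all.2 fun i => eventually_all.2 (hsmall i)).and
    self_mem_nhdsWithin).exists
  exact ⟨η, hpos, hη⟩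

lemma le_dimH_of_holderOnWith {X : Type*} [EMetricSpace X] {S : Set X} {g : X → ℝ} {C r : ℝ≥0}
    (hg : HolderOnWith C r g S) (hr : 0 < r) (hsurj : Icc 0 1 ⊆ g '' S) : (r : ℝ≥0∞) ≤ dimH S := by
  have hle := (dimH_mono hsurj).trans (hg.dimH_image_le hr)
  rw [Real.dimH_of_nonempty_interior (by simp), Module.finrank_self, Nat.cast_one,
    ENNReal.le_div_iff_mul_le (.inl (by exact_mod_cast hr.ne')) (.inl ENNReal.coe_ne_top),
    one_mul] at hle
  exact hle

/- Reading a code as the base `N` expansion of a number maps the coded set onto `[0, 1]`. -/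
lemma ofReal_le_dimH_range {X : Type*} [MetricSpace X] {N : ℕ} {x : (ℕ → Fin N) → X} {t η : ℝ}
    (hN : 2 ≤ N) (ht : 0 < t) (hη : 0 < η)
    (hx : ∀ ω ω' : ℕ → Fin N, ω ≠ ω' →
      η * Real.exp (-(PiNat.firstDiff ω ω' * t)) ≤ dist (x ω) (x ω')) :
    ENNReal.ofReal (Real.log N / t) ≤ dimH (range x) := by
  have hlog : 0 < Real.log N := Real.log_pos (by exact_mod_cast hN)
  have hinj : Function.Injective x := fun ω ω' heq => by
    by_contra hne
    have hle := hx ω ω' hne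
    rw [heq, dist_self] at hle
    exact hle.not_gt (by positivity)
  have : Nonempty (Fin N) := ⟨⟨0, by lia⟩⟩
  have hleft := Function.leftInverse_invFun hinj
  have hr : 0 < Real.log N / t := by positivity
  refine le_dimH_of_holderOnWith (g := Real.ofDigits ∘ Function.invFun x)
    (C := (η⁻¹ ^ (Real.log N / t)).toNNReal) ?_ (Real.toNNReal_pos.2 hr) fun y hy => ?_
  · rintro _ ⟨ω, rfl⟩ _ ⟨ω', rfl⟩
    rcases eq_or_ne ω ω' with rfl | hne
    · simp
    have hdigits : |Real.ofDigits ω - Real.ofDigits ω'| ≤ ((N : ℝ) ^ PiNat.firstDiff ω ω')⁻¹ :=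
      Real.abs_ofDigits_sub_ofDigits_le fun i hi => PiNat.apply_eq_of_lt_firstDiff hi
    simp only [Function.comp_apply, hleft _]
    rw [edist_dist, edist_dist, Real.dist_eq, Real.coe_toNNReal _ hr.le,
      ENNReal.ofReal_rpow_of_nonneg dist_nonneg hr.le]
    change _ ≤ ENNReal.ofReal _ * _
    rw [← ENNReal.ofReal_mul (by positivity), ← Real.mul_rpow (by positivity) dist_nonneg]
    refine ENNReal.ofReal_le_ofReal (hdigits.trans ?_)
    calc ((N : ℝ) ^ PiNat.firstDiff ω ω')⁻¹
        = Real.exp (-(PiNat.firstDiff ω ω' * t)) ^ (Real.log N / t) := by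
          rw [← Real.exp_mul, neg_mul, mul_assoc, mul_div_cancel₀ _ ht.ne', Real.exp_neg,
            Real.exp_nat_mul, Real.exp_log (by positivity)]
      _ ≤ (η⁻¹ * dist (x ω) (x ω')) ^ (Real.log N / t) :=
          Real.rpow_le_rpow (Real.exp_pos _).le ((le_inv_mul_iff₀ hη).2 (hx ω ω' hne)) hr.le
  · obtain ⟨ω, -, hω⟩ := Real.ofDigits_SurjOn (b := N) hN hy
    exact ⟨x ω, mem_range_self ω, by rw [Function.comp_apply, hleft, hω]⟩

section LimitSet

variable {f : RSphere → RSphere} {B : Set RSphere} {n N : ℕ} {s t : ℝ}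
  {ψ : Fin N → RSphere → RSphere} {ω ω' : ℕ → Fin N}

/-- The composition `ψ (ω 0) ∘ ⋯ ∘ ψ (ω (k - 1))`, sending a point to the one with code `ω`
up to time `k`. -/
def word (ψ : Fin N → RSphere → RSphere) (ω : ℕ → Fin N) : ℕ → RSphere → RSphere
  | 0 => id
  | k + 1 => word ψ ω k ∘ ψ (ω k)

lemma isBranch_word (hψ : ∀ i, IsBranch f n B B s t (ψ i)) (ω : ℕ → Fin N) (k : ℕ) :
    IsBranch f (k * n) B B (k * s) (k * t) (word ψ ω k) := by
  induction k with
  | zero =>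
    exact ⟨fun _ h => h, fun _ _ => by simp [word], by simp [word], by simp [word]⟩
  | succ k ih =>
    rw [word, add_one_mul, add_comm (k * n), Nat.cast_add_one, add_one_mul, add_one_mul,
      add_comm (_ * s), add_comm (_ * t)]
    exact ih.comp (hψ (ω k))

lemma word_congr {k : ℕ} (h : ∀ i < k, ω i = ω' i) : word ψ ω k = word ψ ω' k := by
  induction k with
  | zero => rfl
  | succ k ih => rw [word, word, ih fun i hi => h i (by lia), h k (by lia)]

lemma exists_forall_mem_image_word (hψ : ∀ i, IsBranch f n B B s t (ψ i)) (hB : IsCompact B)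
    (hne : B.Nonempty) (ω : ℕ → Fin N) : ∃ x, ∀ k, x ∈ word ψ ω k '' B := by
  have hcompact : ∀ k, IsCompact (word ψ ω k '' B) := fun k =>
    hB.image_of_continuousOn (isBranch_word hψ ω k).continuousOn
  have hanti : ∀ k, word ψ ω (k + 1) '' B ⊆ word ψ ω k '' B := fun k => by
    rw [word, image_comp]
    exact image_mono (hψ (ω k)).mapsTo.image_subset
  obtain ⟨x, hx⟩ := IsCompact.nonempty_iInter_of_sequence_nonempty_isCompact_isClosed
    (fun k => word ψ ω k '' B) hanti (fun k => hne.image _) (hcompact 0)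
    fun k => (hcompact k).isClosed
  exact ⟨x, mem_iInter.1 hx⟩

lemma mul_exp_le_dist_of_mem_image_word {η : ℝ} (hψ : ∀ i, IsBranch f n B B s t (ψ i))
    (hη : ∀ i j, i ≠ j → ∀ u ∈ ψ i '' B, ∀ v ∈ ψ j '' B, η ≤ dist u v) {x y : RSphere}
    (hx : ∀ k, x ∈ word ψ ω k '' B) (hy : ∀ k, y ∈ word ψ ω' k '' B) (hne : ω ≠ ω') :
    η * Real.exp (-(PiNat.firstDiff ω ω' * t)) ≤ dist x y := by
  obtain ⟨u, hu, rfl⟩ := hx (PiNat.firstDiff ω ω' + 1)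
  obtain ⟨v, hv, rfl⟩ := hy (PiNat.firstDiff ω ω' + 1)
  have hword : word ψ ω (PiNat.firstDiff ω ω') = word ψ ω' (PiNat.firstDiff ω ω') :=
    word_congr fun i hi => PiNat.apply_eq_of_lt_firstDiff hi
  rw [word, word, ← hword, mul_comm]
  calc Real.exp (-(PiNat.firstDiff ω ω' * t)) * η
      ≤ Real.exp (-(PiNat.firstDiff ω ω' * t)) * dist (ψ (ω (PiNat.firstDiff ω ω')) u)
          (ψ (ω' (PiNat.firstDiff ω ω')) v) := by
        gcongr
        exact hη _ _ (PiNat.apply_firstDiff_ne hne) _ (mem_image_of_mem _ hu) _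
          (mem_image_of_mem _ hv)
    _ ≤ _ := (isBranch_word hψ ω _).le_dist _ ((hψ _).mapsTo hu) _ ((hψ _).mapsTo hv)

lemma IsBranch.sphDeriv_mem_Icc (hf : IsHolMap f) {A : Set RSphere} {G : RSphere → RSphere}
    (h : IsBranch f n A B s t G) (hA : Preperfect A) {u : RSphere} (hu : u ∈ A) :
    sphDeriv f^[n] (G u) ∈ Icc (Real.exp s) (Real.exp t) := by
  have : (𝓝[≠] u ⊓ 𝓟 A).NeBot := hA u hu
  have hne : ∀ᶠ v in 𝓝[≠] u ⊓ 𝓟 A, v ∈ A ∧ G v ≠ G u := by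
    filter_upwards [mem_inf_of_left self_mem_nhdsWithin, mem_inf_of_right (mem_principal_self A)]
      with v hv hvA using ⟨hvA, fun heq => hv (h.injOn hvA hu heq)⟩
  have hG : Tendsto G (𝓝[≠] u ⊓ 𝓟 A) (𝓝[≠] (G u)) :=
    tendsto_nhdsWithin_iff.2 ⟨(h.continuousOn u hu).mono_left
      (inf_le_inf_right _ nhdsWithin_le_nhds), hne.mono fun _ hv => hv.2⟩
  have hlim := (hf.hasScaling_iterate n (G u)).tendsto.comp hG
  have hquot : ∀ᶠ v in 𝓝[≠] u ⊓ 𝓟 A, dist (f^[n] (G v)) (f^[n] (G u)) / dist (G v) (G u) ∈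
      Icc (Real.exp s) (Real.exp t) := by
    filter_upwards [hne] with v ⟨hvA, hv⟩
    have hle := h.le_dist v hvA u hu
    have hge := h.dist_le v hvA u hu
    rw [Real.exp_neg, inv_mul_le_iff₀ (Real.exp_pos _)] at hle
    rw [Real.exp_neg, le_inv_mul_iff₀ (Real.exp_pos _)] at hge
    rw [h.right_inv v hvA, h.right_inv u hu, mem_Icc, le_div_iff₀ (dist_pos.2 hv),
      div_le_iff₀ (dist_pos.2 hv)]
    exact ⟨hge, hle⟩
  exact isClosed_Icc.mem_of_tendsto hlim hquot

lemma mem_juliaSet_of_mem_image_word (hψ : ∀ i, IsBranch f n B B s t (ψ i)) (hs : 0 < s)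
    (hB : Bornology.IsBounded B) (hB' : B.Nontrivial) {x : RSphere}
    (hx : ∀ k, x ∈ word ψ ω k '' B) : x ∈ juliaSet f := by
  rintro ⟨U, hU, hxU, hequi⟩
  obtain ⟨v, hv, w, hw, hvw⟩ := hB'
  have hnear := hequi x hxU _ (Metric.dist_mem_uniformity (half_pos (dist_pos.2 hvw)))
  rw [hU.nhdsWithin_eq hxU] at hnear
  obtain ⟨δ, hδ, hnear⟩ := Metric.eventually_nhds_iff.1 hnear
  have hlim : Tendsto (fun k : ℕ => Real.exp (-(k * s)) * diam B) atTop (𝓝 0) := by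
    rw [← zero_mul (diam B)]
    exact (Real.tendsto_exp_neg_atTop_nhds_zero.comp
      (tendsto_natCast_atTop_atTop.atTop_mul_const hs)).mul_const _
  obtain ⟨k, hk⟩ := (hlim.eventually (gt_mem_nhds hδ)).exists
  obtain ⟨u, hu, hux⟩ := hx k
  have hbranch := isBranch_word hψ ω k
  have hclose : ∀ y ∈ B, dist (f^[k * n] x) y < dist v w / 2 := by
    intro y hy
    have hδy : dist (word ψ ω k y) x < δ := by
      rw [← hux]
      refine ((hbranch.dist_le y hy u hu).trans ?_).trans_lt hk
      gcongr
      exact dist_le_diam_of_mem hB hy hu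
    have himage : dist (f^[k * n] x) (f^[k * n] (word ψ ω k y)) < dist v w / 2 :=
      hnear hδy (k * n)
    rwa [hbranch.right_inv y hy] at himage
  linarith [dist_triangle_left v w (f^[k * n] x), hclose v hv, hclose w hw]

lemma nontrivial_of_preperfect {X : Type*} [TopologicalSpace X] {S : Set X} (hS : Preperfect S)
    (hne : S.Nonempty) : S.Nontrivial := by
  obtain ⟨b, hb⟩ := hne
  obtain ⟨y, hy, hyb⟩ := preperfect_iff_nhds.1 hS b hb univ univ_mem
  exact ⟨y, hy.2, b, hb, hyb⟩

lemma log_sphDeriv_div_mem_Icc (hf : IsHolMap f) (hψ : ∀ i, IsBranch f n B B s t (ψ i))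
    (hB : Preperfect B) (hn : 1 ≤ n) {k : ℕ} (hk : 1 ≤ k) {x : RSphere}
    (hx : x ∈ word ψ ω k '' B) :
    Real.log (sphDeriv f^[k * n] x) / (k * n : ℕ) ∈ Icc (s / n) (t / n) := by
  obtain ⟨u, hu, rfl⟩ := hx
  obtain ⟨hle, hge⟩ := (isBranch_word hψ ω k).sphDeriv_mem_Icc hf hB hu
  have hpos := (Real.exp_pos _).trans_le hle
  have hn₀ : (0 : ℝ) < n := by exact_mod_cast hn
  have hk₀ : (0 : ℝ) < k := by exact_mod_cast hk
  rw [← Real.le_log_iff_exp_le hpos] at hle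
  rw [← Real.log_le_iff_le_exp hpos] at hge
  push_cast
  rw [← mul_div_mul_left s _ hk₀.ne', ← mul_div_mul_left t _ hk₀.ne']
  constructor <;> gcongr

lemma mem_levelHat_of_mem_image_word (hf : IsHolMap f) (hψ : ∀ i, IsBranch f n B B s t (ψ i))
    (hB : IsCompact B) (hB' : Preperfect B) (hn : 1 ≤ n) (hs : 0 < s) {α β : ℝ}
    (hα : α * n ≤ s) (hβ : t ≤ β * n) {x : RSphere} (hx : ∀ k, x ∈ word ψ ω k '' B) :
    x ∈ levelHat f α β := by
  have hn₀ : (0 : ℝ) < n := by exact_mod_cast hn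
  have hrate : ∃ᶠ m : ℕ in atTop, Real.log (sphDeriv f^[m] x) / m ∈ Icc (s / n) (t / n) :=
    frequently_atTop.2 fun a => ⟨(a + 1) * n, by nlinarith,
      log_sphDeriv_div_mem_Icc hf hψ hB' hn (by lia) (hx (a + 1))⟩
  have hupper : ((s / n : ℝ) : EReal) ≤ lyapUpper f x :=
    le_limsup_of_frequently_le' (hrate.mono fun _ hm => EReal.coe_le_coe_iff.2 hm.1)
  have hlower : lyapLower f x ≤ ((t / n : ℝ) : EReal) :=
    liminf_le_of_frequently_le' (hrate.mono fun _ hm => EReal.coe_le_coe_iff.2 hm.2)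
  have hnontrivial := nontrivial_of_preperfect hB' ((hx 0).imp fun _ hu => hu.1)
  refine ⟨mem_juliaSet_of_mem_image_word hψ hs hB.isBounded hnontrivial hx, hlower.trans ?_,
    le_trans ?_ hupper, (EReal.coe_pos.2 (by positivity)).trans_le hupper⟩
  · exact EReal.coe_le_coe_iff.2 ((div_le_iff₀ hn₀).2 hβ)
  · exact EReal.coe_le_coe_iff.2 ((le_div_iff₀ hn₀).2 hα)

lemma ofReal_le_dimH_of_mem_image_word (hψ : ∀ i, IsBranch f n B B s t (ψ i))
    (hdisj : Pairwise fun i j => Disjoint (ψ i '' B) (ψ j '' B)) (hB : IsCompact B)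
    (hne : B.Nonempty) (hN : 2 ≤ N) (ht : 0 < t) {S : Set RSphere}
    (hS : ∀ ω x, (∀ k, x ∈ word ψ ω k '' B) → x ∈ S) :
    ENNReal.ofReal (Real.log N / t) ≤ dimH S := by
  have hcompact : ∀ i, IsCompact (ψ i '' B) := fun i => hB.image_of_continuousOn (hψ i).continuousOn
  obtain ⟨η, hη, hgap⟩ := exists_forall_le_dist_of_pairwise_disjoint hcompact
    (fun i => (hcompact i).isClosed) hdisj
  choose x hx using exists_forall_mem_image_word hψ hB hne
  exact (ofReal_le_dimH_range hN ht hη fun ω ω' =>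
    mul_exp_le_dist_of_mem_image_word hψ hgap (hx ω) (hx ω')).trans
      (dimH_mono (range_subset_iff.2 fun ω => hS ω _ (hx ω)))

lemma HasSystem.ofReal_le_dimH_levelHat (hf : IsHolMap f) (hB : IsCompact B) (hB' : Preperfect B)
    (hne : B.Nonempty) (h : HasSystem f B n N s t) (hn : 1 ≤ n) (hN : 2 ≤ N) (hs : 0 < s)
    (ht : 0 < t) {α β : ℝ} (hα : α * n ≤ s) (hβ : t ≤ β * n) :
    ENNReal.ofReal (Real.log N / t) ≤ dimH (levelHat f α β) := by
  obtain ⟨ψ, hψ, hdisj⟩ := h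
  exact ofReal_le_dimH_of_mem_image_word hψ hdisj hB hne hN ht fun _ _ =>
    mem_levelHat_of_mem_image_word hf hψ hB hB' hn hs hα hβ

end LimitSet

/-! ### From separated sets to systems of branches -/

lemma exists_hasSystem_of_loops {f : RSphere → RSphere} {L B : Set RSphere} {m : ℕ} {ε s t : ℝ}
    {E : Finset RSphere} {T : Finset (ℕ × ℕ)} (hT : T.Nonempty) (hE : IsSepSet f L m ε E)
    (hloop : ∀ x ∈ E, ∃ p ∈ T, ∃ ψ, IsBranch f (p.1 + m + p.2) B B s t ψ ∧
      ∀ u ∈ B, ∀ i < m, dist (f^[i] (f^[p.2] (ψ u))) (f^[i] x) < ε / 2) :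
    ∃ p ∈ T, ∃ N, E.card ≤ N * T.card ∧ HasSystem f B (p.1 + m + p.2) N s t := by
  choose! p hp ψ hψ hshadow using hloop
  obtain ⟨q, hq, hmax⟩ :=
    Finset.exists_max_image T (fun b => (E.filter fun x => p x = b).card) hT
  have hmem : ∀ x : E.filter fun x => p x = q, x.1 ∈ E ∧ p x = q := fun x =>
    Finset.mem_filter.1 x.2
  let e := (E.filter fun x => p x = q).equivFin.symm
  refine ⟨q, hq, _, Finset.card_le_mul_card_image_of_maps_to hp _ hmax, fun i => ψ (e i),
    fun i => ?_, fun i j hij => Set.disjoint_left.2 ?_⟩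
  · have hbranch := hψ _ (hmem (e i)).1
    rwa [(hmem (e i)).2] at hbranch
  · rintro _ ⟨u, hu, rfl⟩ ⟨v, hv, heq : ψ (e j) v = ψ (e i) u⟩
    obtain ⟨k, hk, hsep⟩ := hE.2 _ (hmem (e i)).1 _ (hmem (e j)).1
      fun h => hij (e.injective (Subtype.ext h))
    have hi := hshadow _ (hmem (e i)).1 u hu k hk
    have hj := hshadow _ (hmem (e j)).1 v hv k hk
    rw [(hmem (e i)).2] at hi
    rw [(hmem (e j)).2, heq] at hj
    linarith [dist_triangle_left (f^[k] (e i)) (f^[k] (e j)) (f^[k] (f^[q.2] (ψ (e i) u)))]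

namespace IsHolMap

variable {f : RSphere → RSphere} {L L₀ B : Set RSphere} {a₀ : RSphere}

lemma exists_branch_small_image (hf : IsHolMap f) (hL₀ : Hyperbolic f L₀) (ha₀ : a₀ ∈ L₀) :
    ∃ ρ > 0, ∀ κ > 0, ∃ k, ∃ b ∈ L₀, ∃ C G,
      IsBranch f k (closure (ball a₀ ρ)) (ball b κ) (-C) C G := by
  obtain ⟨c, hc, l, hl, hexp⟩ := hL₀.expandingOn
  have hε : 0 < Real.log l / 2 := half_pos (Real.log_pos hl)
  obtain ⟨r, hr, hshadow⟩ := hf.exists_shadow_branch hL₀ hε one_pos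
  have hsub : closure (ball a₀ (r / 2)) ⊆ ball a₀ r :=
    closure_ball_subset_closedBall.trans (closedBall_subset_ball (half_lt_self hr))
  refine ⟨r / 2, half_pos hr, fun κ hκ => ?_⟩
  have hlim : Tendsto (fun k : ℕ => Real.exp (-(Real.log c + k * (Real.log l / 2))) * r) atTop
      (𝓝 0) := by
    rw [← zero_mul r]
    exact (Real.tendsto_exp_neg_atTop_nhds_zero.comp (tendsto_atTop_add_const_left _ _
      (tendsto_natCast_atTop_atTop.atTop_mul_const hε))).mul_const _
  obtain ⟨k, hk, hk₁⟩ := ((hlim.eventually (gt_mem_nhds hκ)).and (eventually_ge_atTop 1)).exists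
  obtain ⟨b, hb, rfl⟩ := hL₀.exists_iterate_eq k ha₀
  obtain ⟨G, hG, -, hGb⟩ := hshadow k hk₁ b hb
  have hrate : Real.log c + k * (Real.log l / 2) ≤
      Real.log (sphDeriv f^[k] b) - Real.log l / 2 * k := by
    have hlog := Real.log_le_log (by positivity) (hexp b hb k hk₁)
    rw [Real.log_mul hc.ne' (by positivity), Real.log_pow] at hlog
    linarith
  refine ⟨k, b, hb, |Real.log (sphDeriv f^[k] b)| + Real.log l / 2 * k, G, fun u hu => ?_,
    fun u hu => hG.right_inv u (hsub hu), ?_, ?_⟩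
  · refine mem_ball.2 (lt_of_le_of_lt ?_ hk)
    calc dist (G u) b ≤ Real.exp (-(Real.log (sphDeriv f^[k] b) - Real.log l / 2 * k)) *
            dist u (f^[k] b) := by
          simpa only [hGb] using hG.dist_le u (hsub hu) _ (mem_ball_self hr)
      _ ≤ _ := by
          gcongr
          exact (mem_ball.1 (hsub hu)).le
  · have hG' := hG.mono hsub Subset.rfl le_rfl
      (add_le_add_left (le_abs_self (Real.log (sphDeriv f^[k] b))) _)
    exact hG'.le_dist
  · have hG' := hG.mono hsub Subset.rfl (sub_le_sub_right
      (neg_abs_le (Real.log (sphDeriv f^[k] b))) (Real.log l / 2 * k)) le_rfl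
    rw [neg_add']
    exact hG'.dist_le

lemma exists_entry (hf : IsHolMap f)
    (hexc : ¬ IsExceptional f ∨ maxExceptional f ∩ juliaSet f = ∅) (hL₀ : Hyperbolic f L₀)
    (ha₀ : a₀ ∈ L₀) :
    ∃ ρ > 0, ∀ L, Hyperbolic f L → ∀ r > 0, ∃ N : ℕ, ∃ C : ℝ, ∀ z ∈ L, ∃ n ≤ N, ∃ G,
      IsBranch f n (closure (ball a₀ ρ)) (ball z r) (-C) C G := by
  obtain ⟨ρ, hρ, hsmall⟩ := hf.exists_branch_small_image hL₀ ha₀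
  refine ⟨ρ, hρ, fun L hL r hr => ?_⟩
  obtain ⟨κ, hκ, N, C₂, hbridge⟩ := hf.exists_bridge hexc hL₀ hL hr
  obtain ⟨k, b, hb, C₁, G, hG⟩ := hsmall κ hκ
  refine ⟨k + N, C₁ + C₂, fun z hz => ?_⟩
  obtain ⟨n, hn, H, hH⟩ := hbridge b hb z hz
  exact ⟨k + n, by lia, _, (hH.comp hG).mono Subset.rfl Subset.rfl (by linarith) le_rfl⟩

/- The loop enters a neighbourhood of `f^[m] x`, follows the orbit of `x` backwards and is then
brought back into `B`. -/
lemma exists_loop (hf : IsHolMap f)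
    (hexc : ¬ IsExceptional f ∨ maxExceptional f ∩ juliaSet f = ∅) (hL₀ : Hyperbolic f L₀)
    (ha₀ : a₀ ∈ L₀) (hB : B ∈ 𝓝 a₀) (hL : Hyperbolic f L)
    (hentry : ∀ r > 0, ∃ N : ℕ, ∃ C : ℝ, ∀ z ∈ L, ∃ n ≤ N, ∃ G, IsBranch f n B (ball z r) (-C) C G)
    {ε δ : ℝ} (hε : 0 < ε) (hδ : 0 < δ) :
    ∃ K : ℕ, ∃ C : ℝ, ∀ m ≥ 1, ∀ x ∈ L, ∃ p ∈ Finset.range K ×ˢ Finset.range K, ∃ ψ,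
      IsBranch f (p.1 + m + p.2) B B (Real.log (sphDeriv f^[m] x) - ε * m - C)
        (Real.log (sphDeriv f^[m] x) + ε * m + C) ψ ∧
      ∀ u ∈ B, ∀ i < m, dist (f^[i] (f^[p.2] (ψ u))) (f^[i] x) < δ := by
  obtain ⟨ρ, hρ, hρB⟩ := Metric.mem_nhds_iff.1 hB
  obtain ⟨κ, hκ, N₂, C₂, hexit⟩ := hf.exists_bridge hexc hL hL₀ hρ
  obtain ⟨r, hr, hshadow⟩ := hf.exists_shadow_branch hL hε (lt_min hκ hδ)
  obtain ⟨N₁, C₁, hentry⟩ := hentry r hr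
  refine ⟨max N₁ N₂ + 1, C₁ + C₂, fun m hm x hx => ?_⟩
  obtain ⟨n₁, hn₁, G₁, hG₁⟩ := hentry _ (hL.iterate_mem hx m)
  obtain ⟨G, hG, hGx, -⟩ := hshadow m hm x hx
  obtain ⟨n₂, hn₂, G₂, hG₂⟩ := hexit x hx a₀ ha₀
  have hG₂' := hG₂.mono (ball_subset_ball (min_le_left κ δ)) hρB le_rfl le_rfl
  refine ⟨(n₁, n₂), by simp only [Finset.mem_product, Finset.mem_range]; lia, _,
    (hG₂'.comp (hG.comp hG₁)).mono Subset.rfl Subset.rfl (by linarith) (by linarith),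
    fun u hu i hi => ?_⟩
  have hinv := hG₂'.right_inv _ (hG.mapsTo (hG₁.mapsTo hu))
  simp only [Function.comp_apply] at hinv ⊢
  rw [hinv]
  exact (mem_ball.1 (hGx _ (hG₁.mapsTo hu) i hi)).trans_le (min_le_right _ _)

lemma exists_hasSystem (hf : IsHolMap f)
    (hexc : ¬ IsExceptional f ∨ maxExceptional f ∩ juliaSet f = ∅) (hL₀ : Hyperbolic f L₀)
    (ha₀ : a₀ ∈ L₀) :
    ∃ ρ > 0, ∀ L, Hyperbolic f L → ∀ ε > 0, ∀ ε₀ > 0, ∃ K : ℕ, ∃ C : ℝ, ∀ m ≥ 1, ∀ E s t,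
      IsSepSet f L m ε₀ E → (∀ x ∈ E, Real.log (sphDeriv f^[m] x) ∈ Icc s t) →
      ∃ n, m ≤ n ∧ n ≤ m + K ∧ ∃ N, E.card ≤ N * K ∧
        HasSystem f (closure (ball a₀ ρ)) n N (s - ε * m - C) (t + ε * m + C) := by
  obtain ⟨ρ, hρ, hentry⟩ := hf.exists_entry hexc hL₀ ha₀
  refine ⟨ρ, hρ, fun L hL ε hε ε₀ hε₀ => ?_⟩
  obtain ⟨K, C, hloop⟩ := hf.exists_loop hexc hL₀ ha₀
    (mem_of_superset (ball_mem_nhds a₀ hρ) subset_closure) hL (hentry L hL) hε (half_pos hε₀)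
  refine ⟨(K + 1) * (K + 1), C, fun m hm E s t hE hst => ?_⟩
  have hloop' : ∀ x ∈ E, ∃ p ∈ Finset.range (K + 1) ×ˢ Finset.range (K + 1), ∃ ψ,
      IsBranch f (p.1 + m + p.2) (closure (ball a₀ ρ)) (closure (ball a₀ ρ)) (s - ε * m - C)
        (t + ε * m + C) ψ ∧
      ∀ u ∈ closure (ball a₀ ρ), ∀ i < m, dist (f^[i] (f^[p.2] (ψ u))) (f^[i] x) < ε₀ / 2 := by
    intro x hx
    obtain ⟨p, hp, ψ, hψ, hshadow⟩ := hloop m hm x (hE.1 hx)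
    have hrange : Finset.range K ⊆ Finset.range (K + 1) := Finset.range_mono K.le_succ
    obtain ⟨hle, hge⟩ := hst x hx
    exact ⟨p, Finset.product_subset_product hrange hrange hp, ψ,
      hψ.mono Subset.rfl Subset.rfl (by linarith) (by linarith), hshadow⟩
  obtain ⟨p, hp, N, hN, hsystem⟩ := exists_hasSystem_of_loops ⟨(0, 0), by simp⟩ hE hloop'
  simp only [Finset.mem_product, Finset.mem_range] at hp
  rw [Finset.card_product, Finset.card_range] at hN
  exact ⟨_, by lia, by nlinarith, N, hN, hsystem⟩

end IsHolMap

/-! ### Entropy and exponent of systems of branches -/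

instance : PerfectSpace RSphere := perfectSpace_iff_forall_not_isolated.2 inferInstance

/-- A set on which separated orbits of any hyperbolic set can be encoded by systems of inverse
branches, at a cost that is bounded in time and in number and subexponential in contraction. -/
structure IsHub (f : RSphere → RSphere) (B : Set RSphere) : Prop where
  isCompact : IsCompact B
  preperfect : Preperfect B
  nonempty : B.Nonempty
  exists_hasSystem : ∀ L, Hyperbolic f L → ∀ ε > 0, ∀ ε₀ > 0, ∃ K : ℕ, ∃ C : ℝ, ∀ m ≥ 1, ∀ E s t,
    IsSepSet f L m ε₀ E → (∀ x ∈ E, Real.log (sphDeriv f^[m] x) ∈ Icc s t) →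
    ∃ n, m ≤ n ∧ n ≤ m + K ∧ ∃ N, E.card ≤ N * K ∧
      HasSystem f B n N (s - ε * m - C) (t + ε * m + C)

lemma IsHub.nontrivial {f : RSphere → RSphere} {B : Set RSphere} (hB : IsHub f B) :
    B.Nontrivial :=
  nontrivial_of_preperfect hB.preperfect hB.nonempty

lemma IsHolMap.exists_isHub {f : RSphere → RSphere} {L₀ : Set RSphere} (hf : IsHolMap f)
    (hexc : ¬ IsExceptional f ∨ maxExceptional f ∩ juliaSet f = ∅) (hL₀ : Hyperbolic f L₀) :
    ∃ B, IsHub f B := by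
  obtain ⟨a₀, ha₀⟩ := hL₀.nonempty
  obtain ⟨ρ, hρ, hsystem⟩ := hf.exists_hasSystem hexc hL₀ ha₀
  exact ⟨closure (ball a₀ ρ), isClosed_closure.isCompact,
    isOpen_ball.preperfect.perfect_closure.acc, ⟨a₀, subset_closure (mem_ball_self hρ)⟩, hsystem⟩

/-- Pairs `(h, χ)` of an entropy and a Lyapunov exponent approximated by systems of inverse
branches: `N ≥ exp (n h)` branches of `f^[n]` with contraction about `exp (-n χ)`, up to an
arbitrarily small error in `h` and `χ`. -/
def rates (f : RSphere → RSphere) (B : Set RSphere) : Set (ℝ × ℝ) :=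
  {p | ∀ ε > 0, ∃ n ≥ 1, ∃ N ≥ 1, ∃ s t, HasSystem f B n N s t ∧ n * (p.1 - ε) ≤ Real.log N ∧
    n * (p.2 - ε) ≤ s ∧ t ≤ n * (p.2 + ε)}

lemma convex_of_isClosed_of_midpoint_mem {E : Type*} [AddCommGroup E] [Module ℝ E]
    [TopologicalSpace E] [IsTopologicalAddGroup E] [ContinuousSMul ℝ E] {S : Set E}
    (hS : IsClosed S) (hmid : ∀ x ∈ S, ∀ y ∈ S, midpoint ℝ x y ∈ S) : Convex ℝ S := by
  refine convex_iff_segment_subset.2 fun x hx y hy => ?_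
  rw [segment_eq_image_lineMap]
  have hdyadic : ∀ n k : ℕ, k ≤ 2 ^ n → AffineMap.lineMap x y (k / 2 ^ n : ℝ) ∈ S := by
    intro n
    induction n with
    | zero =>
      intro k hk
      rcases Nat.le_one_iff_eq_zero_or_eq_one.1 hk with rfl | rfl <;> simpa
    | succ n ih =>
      intro k hk
      have hsplit : (k / 2 ^ (n + 1) : ℝ) =
          midpoint ℝ ((k / 2 : ℕ) / 2 ^ n : ℝ) (((k + 1) / 2 : ℕ) / 2 ^ n) := by
        have hsum : ((k / 2 : ℕ) : ℝ) + ((k + 1) / 2 : ℕ) = k := by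
          exact_mod_cast (by lia : k / 2 + (k + 1) / 2 = k)
        rw [midpoint_eq_smul_add, ← add_div, hsum, pow_succ, smul_eq_mul, invOf_eq_inv]
        field_simp
      rw [hsplit, AffineMap.map_midpoint]
      rw [pow_succ] at hk
      exact hmid _ (ih _ (by lia)) _ (ih _ (by lia))
  rintro _ ⟨t, ⟨ht₀, ht₁⟩, rfl⟩
  have hlim : Tendsto (fun n : ℕ => (⌊t * 2 ^ n⌋₊ / 2 ^ n : ℝ)) atTop (𝓝 t) :=
    (tendsto_nat_floor_mul_div_atTop ht₀).comp (tendsto_pow_atTop_atTop_of_one_lt one_lt_two)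
  refine hS.mem_of_tendsto ((AffineMap.lineMap_continuous.tendsto t).comp hlim)
    (Eventually.of_forall fun n => hdyadic n _ (Nat.floor_le_of_le ?_))
  rw [Nat.cast_pow, Nat.cast_ofNat]
  exact mul_le_of_le_one_left (by positivity) ht₁

section Rates

variable {f : RSphere → RSphere} {B : Set RSphere}

lemma isClosed_rates : IsClosed (rates f B) := by
  refine isClosed_of_closure_subset fun p hp ε hε => ?_
  obtain ⟨q, hq, hpq⟩ := Metric.mem_closure_iff.1 hp (ε / 2) (half_pos hε)
  rw [Prod.dist_eq, max_lt_iff, Real.dist_eq, Real.dist_eq, abs_lt, abs_lt] at hpq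
  obtain ⟨⟨-, hfst⟩, hsnd, hsnd'⟩ := hpq
  obtain ⟨n, hn, N, hN, s, t, h, hlog, hs, ht⟩ := hq (ε / 2) (half_pos hε)
  refine ⟨n, hn, N, hN, s, t, h, le_trans ?_ hlog, le_trans ?_ hs, ht.trans ?_⟩ <;>
    gcongr ?_ * ?_ <;> linarith

lemma rates_mono {h h' χ : ℝ} (hp : (h, χ) ∈ rates f B) (hh : h' ≤ h) : (h', χ) ∈ rates f B := by
  intro ε hε
  obtain ⟨n, hn, N, hN, s, t, h, hlog, hs, ht⟩ := hp ε hε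
  refine ⟨n, hn, N, hN, s, t, h, le_trans ?_ hlog, hs, ht⟩
  dsimp only
  gcongr

/- Systems of times `n₁` and `n₂` are concatenated `n₂` and `n₁` times respectively, so that both
contribute the same amount of time. -/
lemma convex_rates : Convex ℝ (rates f B) := by
  refine convex_of_isClosed_of_midpoint_mem isClosed_rates fun p₁ hp₁ p₂ hp₂ ε hε => ?_
  obtain ⟨n₁, hn₁, N₁, hN₁, s₁, t₁, h₁, hlog₁, hs₁, ht₁⟩ := hp₁ ε hε
  obtain ⟨n₂, hn₂, N₂, hN₂, s₂, t₂, h₂, hlog₂, hs₂, ht₂⟩ := hp₂ ε hε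
  have hn₁' : (0 : ℝ) ≤ n₁ := by positivity
  have hn₂' : (0 : ℝ) ≤ n₂ := by positivity
  refine ⟨n₂ * n₁ + n₁ * n₂, ?_, N₁ ^ n₂ * N₂ ^ n₁, ?_, _, _, (h₁.pow n₂).comp (h₂.pow n₁),
    ?_, ?_, ?_⟩
  · exact Nat.add_pos_left (Nat.mul_pos hn₂ hn₁) _
  · exact Nat.mul_pos (Nat.pow_pos hN₁) (Nat.pow_pos hN₂)
  all_goals simp only [midpoint_eq_smul_add, Prod.smul_fst, Prod.smul_snd, Prod.fst_add,
    Prod.snd_add, smul_eq_mul, invOf_eq_inv]; push_cast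
  · rw [Real.log_mul (by positivity) (by positivity), Real.log_pow, Real.log_pow]
    linarith [mul_le_mul_of_nonneg_left hlog₁ hn₂', mul_le_mul_of_nonneg_left hlog₂ hn₁']
  · linarith [mul_le_mul_of_nonneg_left hs₁ hn₂', mul_le_mul_of_nonneg_left hs₂ hn₁']
  · linarith [mul_le_mul_of_nonneg_left ht₁ hn₂', mul_le_mul_of_nonneg_left ht₂ hn₁']

lemma eventually_forall_mul_add_le (K : ℕ) (C z : ℝ) {ε : ℝ} (hε : 0 < ε) :
    ∀ᶠ m : ℕ in atTop, ∀ n : ℕ, m ≤ n → n ≤ m + K → n * z + C ≤ m * (z + ε) := by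
  filter_upwards [tendsto_natCast_atTop_atTop.eventually_ge_atTop ((K * |z| + C) / ε)]
    with m hm n hmn hnm
  have hnm' : (n : ℝ) ≤ m + K := by exact_mod_cast hnm
  have hmn' : (m : ℝ) ≤ n := by exact_mod_cast hmn
  have hdelay : (n - m) * z ≤ K * |z| := by
    refine (mul_le_mul_of_nonneg_left (le_abs_self z) (by linarith)).trans ?_
    gcongr
    linarith
  rw [div_le_iff₀ hε] at hm
  linarith

lemma mem_rates_of_frequently (hB : IsHub f B) {L : Set RSphere} (hL : Hyperbolic f L)
    {ε₀ : ℝ} (hε₀ : 0 < ε₀) {h χ : ℝ}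
    (H : ∀ ε > 0, ∃ᶠ m : ℕ in atTop, ∃ E, IsSepSet f L m ε₀ E ∧ E.Nonempty ∧
      m * (h - ε) ≤ Real.log E.card ∧
      ∀ x ∈ E, Real.log (sphDeriv f^[m] x) ∈ Icc (m * (χ - ε)) (m * (χ + ε))) :
    (h, χ) ∈ rates f B := by
  intro ε hε
  obtain ⟨K, C, hencode⟩ := hB.exists_hasSystem L hL (ε / 4) (by positivity) ε₀ hε₀
  obtain ⟨m, ⟨E, hE, hne, hcard, hderiv⟩, hm, hh, hlower, hupper⟩ :=
    ((H (ε / 4) (by positivity)).and_eventually ((eventually_ge_atTop 1).and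
      ((eventually_forall_mul_add_le K (Real.log K) (h - ε) (half_pos hε)).and
      ((eventually_forall_mul_add_le K C (χ - ε) (half_pos hε)).and
      (eventually_forall_mul_add_le K C (-(χ + ε)) (half_pos hε)))))).exists
  obtain ⟨n, hmn, hnm, N, hN, hsystem⟩ := hencode m hm E _ _ hE hderiv
  have hNK : 0 < N * K := (Finset.card_pos.2 hne).trans_le hN
  have hN₀ : 0 < N := pos_of_mul_pos_left hNK (Nat.zero_le _)
  have hK₀ : 0 < K := pos_of_mul_pos_right hNK (Nat.zero_le _)
  have hlog : Real.log E.card ≤ Real.log N + Real.log K := by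
    rw [← Real.log_mul (by positivity) (by positivity)]
    exact Real.log_le_log (by exact_mod_cast Finset.card_pos.2 hne) (by exact_mod_cast hN)
  have hmε : 0 ≤ m * ε := by positivity
  refine ⟨n, hm.trans hmn, N, hN₀, _, _, hsystem, ?_, ?_, ?_⟩
  · linarith [hh n hmn hnm]
  · linarith [hlower n hmn hnm]
  · linarith [hupper n hmn hnm]

end Rates

lemma dimH_univ_rSphere_lt_top : dimH (univ : Set RSphere) < ⊤ := by
  have hembed : Isometry embed := fun _ _ => rfl
  rw [← hembed.dimH_image]
  refine (dimH_mono (subset_univ _)).trans_lt ?_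
  rw [Real.dimH_univ_eq_finrank]
  exact ENNReal.natCast_lt_top _

section Bounds

variable {f : RSphere → RSphere} {B : Set RSphere} {n N : ℕ} {s t : ℝ} {K : ℝ≥0}

lemma sphDeriv_le_of_lipschitzWith (hf : LipschitzWith K f) (x : RSphere) : sphDeriv f x ≤ K :=
  limsup_le_of_le
    (IsBoundedUnder.isCoboundedUnder_le (isBoundedUnder_of ⟨0, fun y => by positivity⟩))
    (Eventually.of_forall fun y => div_le_of_le_mul₀ dist_nonneg K.2 (hf.dist_le_mul y x))

lemma IsBranch.dist_le_pow_mul_dist (hf : LipschitzWith K f) {A : Set RSphere}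
    {G : RSphere → RSphere} (hG : IsBranch f n A B s t G) {u v : RSphere} (hu : u ∈ A)
    (hv : v ∈ A) : dist u v ≤ K ^ n * dist (G u) (G v) := by
  have hdist := (hf.iterate n).dist_le_mul (G u) (G v)
  rwa [hG.right_inv u hu, hG.right_inv v hv, NNReal.coe_pow] at hdist

lemma HasSystem.le_mul_log (hf : LipschitzWith K f) (hB : B.Nontrivial)
    (hS : HasSystem f B n N s t) (hN : 1 ≤ N) : s ≤ n * Real.log K := by
  obtain ⟨ψ, hψ, -⟩ := hS
  obtain ⟨u, hu, v, hv, huv⟩ := hB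
  have hdist : 1 * dist u v ≤ K ^ n * Real.exp (-s) * dist u v := by
    rw [one_mul, mul_assoc]
    exact ((hψ ⟨0, hN⟩).dist_le_pow_mul_dist hf hu hv).trans
      (by gcongr; exact (hψ ⟨0, hN⟩).dist_le u hu v hv)
  have hexp : Real.exp s ≤ K ^ n := by
    have := le_of_mul_le_mul_right hdist (dist_pos.2 huv)
    rwa [Real.exp_neg, ← div_eq_mul_inv, one_le_div (Real.exp_pos s)] at this
  rw [← Real.log_pow]
  exact (Real.le_log_iff_exp_le ((Real.exp_pos s).trans_le hexp)).2 hexp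

/- A system with `t < 0` would expand, and its iterates would make the sphere unbounded. -/
lemma HasSystem.nonneg_of_nontrivial (hB : B.Nontrivial) (hS : HasSystem f B n N s t)
    (hN : 1 ≤ N) : 0 ≤ t := by
  by_contra! ht
  obtain ⟨u, hu, v, hv, huv⟩ := hB
  have hd := dist_pos.2 huv
  obtain ⟨k, hk⟩ := exists_nat_gt (diam (univ : Set RSphere) / dist u v / -t)
  rw [div_lt_iff₀ (by linarith), div_lt_iff₀ hd] at hk
  obtain ⟨ψ, hψ, -⟩ := hS.pow k
  have hbranch := hψ ⟨0, Nat.pow_pos hN⟩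
  have hdiam := (hbranch.le_dist u hu v hv).trans
    (dist_le_diam_of_mem isCompact_univ.isBounded (mem_univ _) (mem_univ _))
  linarith [mul_le_mul_of_nonneg_right (Real.add_one_le_exp (-(k * t))) hd.le]

lemma HasSystem.log_le (hf : LipschitzWith K f) (hK : 1 < K) (hB : IsCompact B)
    (hne : B.Nonempty) (hS : HasSystem f B n N s t) (hn : 1 ≤ n) :
    Real.log N ≤ n * Real.log K * (dimH (univ : Set RSphere)).toReal := by
  have hlogK : 0 < Real.log K := Real.log_pos hK
  have hn₀ : (0 : ℝ) < n := by exact_mod_cast hn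
  rcases lt_or_ge N 2 with hN | hN
  · have : Real.log N = 0 := by interval_cases N <;> simp
    rw [this]
    positivity
  obtain ⟨ψ, hψ, hdisj⟩ := hS
  have hψK : ∀ i, IsBranch f n B B s (n * Real.log K) (ψ i) := fun i =>
    { hψ i with
      le_dist := fun u hu v hv => by
        rw [Real.exp_neg, Real.exp_nat_mul, Real.exp_log (by positivity),
          inv_mul_le_iff₀ (by positivity)]
        exact (hψ i).dist_le_pow_mul_dist hf hu hv }
  have hdim := ofReal_le_dimH_of_mem_image_word hψK hdisj hB hne hN (mul_pos hn₀ hlogK)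
    (S := univ) fun _ _ _ => mem_univ _
  have hreal := ENNReal.toReal_mono dimH_univ_rSphere_lt_top.ne hdim
  rwa [ENNReal.toReal_ofReal (div_nonneg (Real.log_natCast_nonneg N) (by positivity)),
    div_le_iff₀ (by positivity), mul_comm] at hreal

lemma snd_nonneg_of_mem_rates (hB : B.Nontrivial) {p : ℝ × ℝ} (hp : p ∈ rates f B) :
    0 ≤ p.2 := by
  refine le_of_forall_pos_le_add fun ε hε => ?_
  obtain ⟨n, hn, N, hN, s, t, hS, -, -, ht⟩ := hp ε hε
  exact nonneg_of_mul_nonneg_right ((hS.nonneg_of_nontrivial hB hN).trans ht)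
    (Nat.cast_pos.2 hn)

lemma snd_le_of_mem_rates (hf : LipschitzWith K f) (hB : B.Nontrivial) {p : ℝ × ℝ}
    (hp : p ∈ rates f B) : p.2 ≤ Real.log K := by
  refine le_of_forall_pos_le_add fun ε hε => ?_
  obtain ⟨n, hn, N, hN, s, t, hS, -, hs, -⟩ := hp ε hε
  linarith [le_of_mul_le_mul_left (hs.trans (hS.le_mul_log hf hB hN)) (Nat.cast_pos.2 hn)]

lemma fst_le_of_mem_rates (hf : LipschitzWith K f) (hK : 1 < K) (hB : IsCompact B)
    (hne : B.Nonempty) {p : ℝ × ℝ} (hp : p ∈ rates f B) :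
    p.1 ≤ Real.log K * (dimH (univ : Set RSphere)).toReal := by
  refine le_of_forall_pos_le_add fun ε hε => ?_
  obtain ⟨n, hn, N, -, s, t, hS, hlog, -⟩ := hp ε hε
  have hle := hlog.trans (hS.log_le hf hK hB hne hn)
  rw [mul_assoc] at hle
  linarith [le_of_mul_le_mul_left hle (Nat.cast_pos.2 hn)]

lemma IsHub.exists_rates_subset (hB : IsHub f B) (hf : IsHolMap f) :
    ∃ H X, rates f B ⊆ Iic H ×ˢ Icc 0 X := by
  obtain ⟨K, hK⟩ := hf.exists_lipschitzWith
  have hK' : LipschitzWith (K + 2) f := hK.weaken (le_add_of_nonneg_right zero_le_two)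
  exact ⟨_, _, fun p hp => ⟨fst_le_of_mem_rates hK' (by linarith [K.2]) hB.isCompact hB.nonempty hp,
    snd_nonneg_of_mem_rates hB.nontrivial hp, snd_le_of_mem_rates hK' hB.nontrivial hp⟩⟩

end Bounds

/-! ### Pressure -/

section RealAnalysis

/- An unbounded real sequence has the junk upper limit `0`. -/
lemma le_limsup_of_nonpos {u : ℕ → ℝ} {a : ℝ} (ha : a ≤ 0) (hu : ∀ n, a ≤ u n) :
    a ≤ limsup u atTop := by
  by_cases hbdd : IsBoundedUnder (· ≤ ·) atTop u
  · exact le_limsup_of_frequently_le (Frequently.of_forall hu) hbdd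
  · have hempty : {a | ∀ᶠ n in atTop, u n ≤ a} = ∅ :=
      eq_empty_of_forall_notMem fun a ha => hbdd ⟨a, ha⟩
    rwa [limsup_eq, hempty, Real.sInf_empty]

/- An unbounded real family has the junk supremum `0`. -/
lemma le_ciSup_of_nonpos {ι : Type*} [Nonempty ι] {u : ι → ℝ} {a : ℝ} (ha : a ≤ 0)
    (hu : ∀ i, a ≤ u i) : a ≤ ⨆ i, u i := by
  by_cases hbdd : BddAbove (range u)
  · exact (hu (Classical.arbitrary ι)).trans (le_ciSup hbdd _)
  · rwa [Real.iSup_of_not_bddAbove hbdd]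

lemma sum_exp_le_of_card_le {ι : Type*} {E : Finset ι} {g : ι → ℝ} {m c d χ δ : ℝ} (hm : 0 ≤ m)
    (hcard : (E.card : ℝ) ≤ Real.exp (m * (c + d * χ))) (hg : ∀ x ∈ E, |g x - χ| ≤ δ) :
    ∑ x ∈ E, Real.exp (m * (-d * g x)) ≤ Real.exp (m * (c + |d| * δ)) := by
  have hterm : ∀ x ∈ E, Real.exp (m * (-d * g x)) ≤ Real.exp (m * (-d * χ + |d| * δ)) := by
    intro x hx
    have hdiff : -d * (g x - χ) ≤ |d| * δ := by
      refine (le_abs_self _).trans ?_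
      rw [abs_mul, abs_neg]
      exact mul_le_mul_of_nonneg_left (hg x hx) (abs_nonneg d)
    gcongr
    linarith
  calc ∑ x ∈ E, Real.exp (m * (-d * g x))
      ≤ E.card * Real.exp (m * (-d * χ + |d| * δ)) := by
        simpa only [nsmul_eq_mul] using Finset.sum_le_card_nsmul _ _ _ hterm
    _ ≤ Real.exp (m * (c + d * χ)) * Real.exp (m * (-d * χ + |d| * δ)) := by gcongr
    _ = Real.exp (m * (c + |d| * δ)) := by rw [← Real.exp_add]; ring_nf

lemma sum_exp_le_of_log_card_lt {ι : Type*} {E : Finset ι} {g : ι → ℝ} {m b d χ ε : ℝ}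
    (hm : 0 ≤ m) (hε : 0 < ε) (hcard : E.Nonempty → Real.log E.card < m * (b + d * χ - ε))
    (hg : ∀ x ∈ E, |g x - χ| ≤ ε / (2 * (1 + |d|))) :
    ∑ x ∈ E, Real.exp (m * (-d * g x)) ≤ Real.exp (m * b) * Real.exp (m * (-(ε / 2))) := by
  have hcard' : (E.card : ℝ) ≤ Real.exp (m * (b - ε + d * χ)) := by
    rcases E.eq_empty_or_nonempty with rfl | hne
    · rw [Finset.card_empty, Nat.cast_zero]
      positivity
    · rw [← Real.log_le_iff_le_exp (by exact_mod_cast Finset.card_pos.2 hne), sub_add_eq_add_sub]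
      exact (hcard hne).le
  have hd : |d| * (ε / (2 * (1 + |d|))) ≤ ε / 2 := by
    rw [← mul_div_assoc, div_le_div_iff₀ (by positivity) two_pos]
    nlinarith [abs_nonneg d]
  refine (sum_exp_le_of_card_le hm hcard' hg).trans ?_
  rw [← Real.exp_add, ← mul_add]
  exact Real.exp_le_exp.2 (mul_le_mul_of_nonneg_left (by linarith) hm)

lemma eventually_sum_exp_lt_one {ι : Type*} (T : Finset ι) {ε : ι → ℝ} (hε : ∀ i, 0 < ε i) :
    ∀ᶠ m : ℕ in atTop, ∑ i ∈ T, Real.exp (m * (-(ε i / 2))) < 1 := by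
  have hlim : Tendsto (fun m : ℕ => ∑ i ∈ T, Real.exp (m * (-(ε i / 2)))) atTop
      (𝓝 (∑ _i ∈ T, 0)) := tendsto_finsetSum _ fun i _ => Real.tendsto_exp_atBot.comp <|
    tendsto_natCast_atTop_atTop.atTop_mul_const_of_neg (by linarith [hε i])
  rw [Finset.sum_const_zero] at hlim
  exact hlim.eventually_lt_const one_pos

open scoped Classical in
/- Otherwise every `χ` has a neighbourhood which contributes too little to the sums; finitely many
of these cover `I`. -/
lemma exists_exponent_of_frequently_lt_sum_exp {ι : Type*} {P : ℕ → Finset ι → Prop}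
    (hP : ∀ m E F, F ⊆ E → P m E → P m F) {g : ℕ → ι → ℝ} {I : Set ℝ} (hI : IsCompact I)
    (hgI : ∀ m E, P m E → ∀ x ∈ E, g m x ∈ I) {b d : ℝ}
    (hsum : ∃ᶠ m : ℕ in atTop, ∃ E, P m E ∧
      Real.exp (m * b) < ∑ x ∈ E, Real.exp (m * (-d * g m x))) :
    ∃ χ, ∀ ε > 0, ∃ᶠ m : ℕ in atTop, ∃ E, P m E ∧ E.Nonempty ∧
      m * (b + d * χ - ε) ≤ Real.log E.card ∧ ∀ x ∈ E, |g m x - χ| ≤ ε := by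
  by_contra! hfew
  choose ε hε hfew using hfew
  set δ : ℝ → ℝ := fun χ => ε χ / (2 * (1 + |d|))
  have hδε : ∀ χ, δ χ ≤ ε χ := fun χ =>
    div_le_self (hε χ).le (by linarith [abs_nonneg d])
  obtain ⟨T, -, hcover⟩ := hI.elim_nhds_subcover (fun χ => closedBall χ (δ χ))
    fun χ _ => closedBall_mem_nhds χ (div_pos (hε χ) (by positivity))
  obtain ⟨m, ⟨E, hE, hlt⟩, hm, hmT⟩ := (hsum.and_eventually
    (((Finset.eventually_all T).2 fun χ _ => hfew χ).and (eventually_sum_exp_lt_one T hε))).exists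
  choose! c hcT hc using fun x hx => mem_iUnion₂.1 (hcover (hgI m E hE x hx))
  have hpiece : ∀ χ ∈ T, ∑ x ∈ E with c x = χ, Real.exp (m * (-d * g m x)) ≤
      Real.exp (m * b) * Real.exp (m * (-(ε χ / 2))) := by
    intro χ hχ
    have hclose : ∀ x ∈ E.filter fun x => c x = χ, |g m x - χ| ≤ δ χ := fun x hx => by
      obtain ⟨hxE, rfl⟩ := Finset.mem_filter.1 hx
      simpa only [mem_closedBall, Real.dist_eq] using hc x hxE
    refine sum_exp_le_of_log_card_lt m.cast_nonneg (hε χ) (fun hne => ?_) hclose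
    by_contra! hmany
    obtain ⟨x, hx, hfar⟩ := hm χ hχ _ (hP m E _ (Finset.filter_subset _ _) hE) hne hmany
    exact hfar.not_ge ((hclose x hx).trans (hδε χ))
  refine hlt.not_ge ?_
  calc ∑ x ∈ E, Real.exp (m * (-d * g m x))
      = ∑ χ ∈ T, ∑ x ∈ E with c x = χ, Real.exp (m * (-d * g m x)) :=
        (Finset.sum_fiberwise_of_maps_to hcT _).symm
    _ ≤ ∑ χ ∈ T, Real.exp (m * b) * Real.exp (m * (-(ε χ / 2))) := Finset.sum_le_sum hpiece
    _ = Real.exp (m * b) * ∑ χ ∈ T, Real.exp (m * (-(ε χ / 2))) := (Finset.mul_sum ..).symm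
    _ ≤ Real.exp (m * b) := mul_le_of_le_one_right (Real.exp_pos _).le hmT.le

end RealAnalysis

section Pressure

variable {f : RSphere → RSphere} {B L : Set RSphere} {φ : RSphere → ℝ} {M b d ε : ℝ} {m : ℕ}

/-- The partition function `sup_E ∑_{x ∈ E} exp (S_m φ x)`, with `E` ranging over the
`(m, ε)`-separated subsets of `L`, whose growth rate defines `pressureOn`. As there, an infinite
supremum has the junk value `0`. -/
noncomputable def partitionFunction (f : RSphere → RSphere) (L : Set RSphere) (φ : RSphere → ℝ)
    (ε : ℝ) (m : ℕ) : ℝ :=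
  ⨆ E : {E : Finset RSphere // IsSepSet f L m ε E}, ∑ x ∈ E.1, Real.exp (birkhoff f φ m x)

lemma pressureOn_eq_iSup_limsup_partitionFunction : pressureOn f L φ =
    ⨆ ε : {ε : ℝ // 0 < ε},
      limsup (fun m : ℕ => Real.log (partitionFunction f L φ ε.1 m) / m) atTop :=
  rfl

lemma isSepSet_singleton {x : RSphere} (hx : x ∈ L) : IsSepSet f L m ε {x} := by
  refine ⟨by simpa only [Finset.coe_singleton, singleton_subset_iff], fun y hy z hz hne => ?_⟩
  exact (hne ((Finset.mem_singleton.1 hy).trans (Finset.mem_singleton.1 hz).symm)).elim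

lemma isSepSet_of_subset {E F : Finset RSphere} (hE : IsSepSet f L m ε E) (hF : F ⊆ E) :
    IsSepSet f L m ε F :=
  ⟨(Finset.coe_subset.2 hF).trans hE.1, fun x hx y hy => hE.2 x (hF hx) y (hF hy)⟩

lemma exp_birkhoff_le_partitionFunction
    (hb : BddAbove (range fun E : {E : Finset RSphere // IsSepSet f L m ε E} =>
      ∑ x ∈ E.1, Real.exp (birkhoff f φ m x))) {x : RSphere} (hx : x ∈ L) :
    Real.exp (birkhoff f φ m x) ≤ partitionFunction f L φ ε m := by
  have hle := le_ciSup hb ⟨{x}, isSepSet_singleton hx⟩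
  rwa [Finset.sum_singleton] at hle

lemma neg_le_log_partitionFunction_div (hL : L.Nonempty) (hM : 0 ≤ M)
    (hφ : ∀ x ∈ L, ∀ m : ℕ, -(m * M) ≤ birkhoff f φ m x) (ε : ℝ) (m : ℕ) :
    -M ≤ Real.log (partitionFunction f L φ ε m) / m := by
  obtain ⟨x, hx⟩ := hL
  rcases m.eq_zero_or_pos with rfl | hm
  · simpa using hM
  have hm₀ : (0 : ℝ) < m := by exact_mod_cast hm
  rw [le_div_iff₀ hm₀]
  by_cases hb : BddAbove (range fun E : {E : Finset RSphere // IsSepSet f L m ε E} =>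
      ∑ x ∈ E.1, Real.exp (birkhoff f φ m x))
  · have hlog := Real.log_le_log (Real.exp_pos _) (exp_birkhoff_le_partitionFunction hb hx)
    rw [Real.log_exp] at hlog
    linarith [hφ x hx m]
  · rw [partitionFunction, Real.iSup_of_not_bddAbove hb, Real.log_zero]
    nlinarith

lemma neg_le_pressureOn (hL : L.Nonempty) (hM : 0 ≤ M)
    (hφ : ∀ x ∈ L, ∀ m : ℕ, -(m * M) ≤ birkhoff f φ m x) : -M ≤ pressureOn f L φ := by
  have : Nonempty {ε : ℝ // 0 < ε} := ⟨⟨1, one_pos⟩⟩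
  rw [pressureOn_eq_iSup_limsup_partitionFunction]
  exact le_ciSup_of_nonpos (neg_nonpos.2 hM) fun ε =>
    le_limsup_of_nonpos (neg_nonpos.2 hM) (neg_le_log_partitionFunction_div hL hM hφ ε)

lemma log_partitionFunction_le (hL : L.Nonempty)
    (h : ∀ E, IsSepSet f L m ε E → ∑ x ∈ E, Real.exp (birkhoff f φ m x) ≤ Real.exp b) :
    Real.log (partitionFunction f L φ ε m) ≤ b := by
  obtain ⟨x, hx⟩ := hL
  have hpos := (Real.exp_pos _).trans_le
    (exp_birkhoff_le_partitionFunction ⟨_, forall_mem_range.2 fun E => h E.1 E.2⟩ hx)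
  exact (Real.log_le_iff_le_exp hpos).2 (Real.iSup_le (fun E => h E.1 E.2) (Real.exp_pos _).le)

lemma exists_frequently_lt_sum_of_lt_pressureOn (hL : L.Nonempty) (hM : 0 ≤ M)
    (hφ : ∀ x ∈ L, ∀ m : ℕ, -(m * M) ≤ birkhoff f φ m x) (hb : b < pressureOn f L φ) :
    ∃ ε > 0, ∃ᶠ m : ℕ in atTop, ∃ E, IsSepSet f L m ε E ∧
      Real.exp (m * b) < ∑ x ∈ E, Real.exp (birkhoff f φ m x) := by
  have : Nonempty {ε : ℝ // 0 < ε} := ⟨⟨1, one_pos⟩⟩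
  rw [pressureOn_eq_iSup_limsup_partitionFunction] at hb
  obtain ⟨⟨ε, hε⟩, hlt⟩ := exists_lt_of_lt_ciSup hb
  have hfreq := frequently_lt_of_lt_limsup (IsBoundedUnder.isCoboundedUnder_le
    (isBoundedUnder_of ⟨-M, neg_le_log_partitionFunction_div hL hM hφ ε⟩)) hlt
  refine ⟨ε, hε, (hfreq.and_eventually (eventually_gt_atTop 0)).mono ?_⟩
  rintro m ⟨hm, hm₀⟩
  rw [lt_div_iff₀ (Nat.cast_pos.2 hm₀), mul_comm] at hm
  by_contra! hle
  exact hm.not_ge (log_partitionFunction_le hL hle)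

namespace Hyperbolic

lemma birkhoff_eq (hL : Hyperbolic f L) (hf : IsHolMap f) (d : ℝ) {x : RSphere} (hx : x ∈ L)
    (m : ℕ) : birkhoff f (fun x => -d * Real.log (sphDeriv f x)) m x =
      -d * Real.log (sphDeriv f^[m] x) := by
  rw [birkhoff, hf.sphDeriv_iterate, Real.log_prod, Finset.mul_sum]
  exact fun k _ => (hL.sphDeriv_pos (hL.iterate_mem hx k)).ne'

lemma exists_abs_log_sphDeriv_le (hL : Hyperbolic f L) (hf : IsHolMap f) :
    ∃ M ≥ 0, ∀ x ∈ L, |Real.log (sphDeriv f x)| ≤ M := by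
  obtain ⟨c, hc, l, hl, hexp⟩ := hL.expandingOn
  obtain ⟨K, hK⟩ := hf.exists_lipschitzWith
  refine ⟨|Real.log (c * l)| + |Real.log K|, by positivity, fun x hx => abs_le.2 ⟨?_, ?_⟩⟩
  · have hlower := hexp x hx 1 le_rfl
    rw [pow_one, Function.iterate_one] at hlower
    linarith [Real.log_le_log (by positivity) hlower, neg_abs_le (Real.log (c * l)),
      abs_nonneg (Real.log K)]
  · linarith [Real.log_le_log (hL.sphDeriv_pos hx) (sphDeriv_le_of_lipschitzWith hK x),
      le_abs_self (Real.log K), abs_nonneg (Real.log (c * l))]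

lemma exists_abs_log_sphDeriv_iterate_le (hL : Hyperbolic f L) (hf : IsHolMap f) :
    ∃ M ≥ 0, ∀ x ∈ L, ∀ m : ℕ, |Real.log (sphDeriv f^[m] x)| ≤ m * M := by
  obtain ⟨M, hM₀, hM⟩ := hL.exists_abs_log_sphDeriv_le hf
  refine ⟨M, hM₀, fun x hx m => ?_⟩
  rw [hf.sphDeriv_iterate, Real.log_prod fun k _ => (hL.sphDeriv_pos (hL.iterate_mem hx k)).ne']
  simpa only [Finset.card_range, nsmul_eq_mul] using (Finset.abs_sum_le_sum_abs _ _).trans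
    (Finset.sum_le_card_nsmul (Finset.range m) _ M fun k _ => hM _ (hL.iterate_mem hx k))

lemma neg_le_birkhoff (hL : Hyperbolic f L) (hf : IsHolMap f)
    (hM : ∀ x ∈ L, ∀ m : ℕ, |Real.log (sphDeriv f^[m] x)| ≤ m * M) (d : ℝ) (x : RSphere)
    (hx : x ∈ L) (m : ℕ) :
    -(m * (|d| * M)) ≤ birkhoff f (fun x => -d * Real.log (sphDeriv f x)) m x := by
  rw [hL.birkhoff_eq hf d hx, mul_left_comm]
  refine neg_le_of_abs_le ?_
  rw [abs_mul, abs_neg]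
  exact mul_le_mul_of_nonneg_left (hM x hx m) (abs_nonneg d)

lemma exists_mem_rates_of_lt_pressureOn (hL : Hyperbolic f L) (hf : IsHolMap f)
    (hB : IsHub f B) (hb : b < pressureOn f L fun x => -d * Real.log (sphDeriv f x)) :
    ∃ χ, (b + d * χ, χ) ∈ rates f B := by
  obtain ⟨M, hM₀, hM⟩ := hL.exists_abs_log_sphDeriv_iterate_le hf
  obtain ⟨ε₀, hε₀, hfreq⟩ := exists_frequently_lt_sum_of_lt_pressureOn hL.nonempty
    (mul_nonneg (abs_nonneg d) hM₀) (hL.neg_le_birkhoff hf hM d) hb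
  have hmul : ∀ (m : ℕ) (x), 1 ≤ m →
      (m : ℝ) * (Real.log (sphDeriv f^[m] x) / m) = Real.log (sphDeriv f^[m] x) := fun m x hm =>
    mul_div_cancel₀ _ (Nat.cast_ne_zero.2 (by lia))
  obtain ⟨χ, hχ⟩ := exists_exponent_of_frequently_lt_sum_exp (b := b) (d := d)
    (P := fun m E => 1 ≤ m ∧ IsSepSet f L m ε₀ E) (I := Icc (-M) M)
    (g := fun m x => Real.log (sphDeriv f^[m] x) / m)
    (fun m E F hF hE => ⟨hE.1, isSepSet_of_subset hE.2 hF⟩) isCompact_Icc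
    (fun m E hE x hx => abs_le.1 <| by
      rw [abs_div, Nat.abs_cast, div_le_iff₀ (Nat.cast_pos.2 hE.1), mul_comm]
      exact hM x (hE.2.1 hx) m)
    ((hfreq.and_eventually (eventually_ge_atTop 1)).mono fun m ⟨⟨E, hE, hsum⟩, hm⟩ =>
      ⟨E, ⟨hm, hE⟩, hsum.trans_eq <| Finset.sum_congr rfl fun x hx => by
        rw [hL.birkhoff_eq hf d (hE.1 hx), mul_left_comm, hmul m x hm]⟩)
  refine ⟨χ, mem_rates_of_frequently hB hL hε₀ fun ε hε => (hχ ε hε).mono ?_⟩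
  rintro m ⟨E, ⟨hm, hE⟩, hne, hcard, hclose⟩
  refine ⟨E, hE, hne, hcard, fun x hx => ?_⟩
  obtain ⟨hlower, hupper⟩ := abs_le.1 (hclose x hx)
  rw [← hmul m x hm]
  constructor <;> gcongr <;> linarith

end Hyperbolic

end Pressure

/-! ### The Lyapunov spectrum as a Legendre transform -/

/-- A closed convex set `R` of pairs (entropy `h`, exponent `χ`), stable under decreasing the
entropy, which for every `d` contains a pair realizing the pressure, `P d = h - d χ`. -/
structure IsSpectralDomain (P : ℝ → ℝ) (R : Set (ℝ × ℝ)) : Prop where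
  isClosed : IsClosed R
  convex : Convex ℝ R
  mem_of_le : ∀ h h' χ, (h, χ) ∈ R → h' ≤ h → (h', χ) ∈ R
  exists_mem : ∀ d, ∃ χ, (P d + d * χ, χ) ∈ R
  exists_fst_le : ∃ H, ∀ p ∈ R, p.1 ≤ H
  exists_neg_le : ∃ M, ∀ d, -(|d| * M) ≤ P d

namespace IsSpectralDomain

variable {P : ℝ → ℝ} {R : Set (ℝ × ℝ)} {a b c q u v : ℝ}

lemma le_alphaMinusOf (hR : IsSpectralDomain P R) (hc : ∀ p ∈ R, c ≤ p.2) :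
    c ≤ alphaMinusOf P := by
  obtain ⟨H, hH⟩ := hR.exists_fst_le
  obtain ⟨M, hM⟩ := hR.exists_neg_le
  have hlower : ∀ᶠ d in atTop, -H / d + c ≤ -P d / d := by
    filter_upwards [eventually_gt_atTop 0] with d hd
    obtain ⟨χ, hχ⟩ := hR.exists_mem d
    rw [div_add' _ _ _ hd.ne', div_le_div_iff_of_pos_right hd]
    linarith [hH _ hχ, mul_le_mul_of_nonneg_left (hc _ hχ) hd.le]
  have hupper : ∀ᶠ d in atTop, -P d / d ≤ M := by
    filter_upwards [eventually_gt_atTop 0] with d hd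
    have hMd := hM d
    rw [abs_of_pos hd] at hMd
    rw [div_le_iff₀ hd]
    linarith
  have hlim : Tendsto (fun d => -H / d + c) atTop (𝓝 c) := by
    simpa only [zero_add, id] using (tendsto_const_nhds.div_atTop tendsto_id).add_const c
  rw [← hlim.limsup_eq]
  exact limsup_le_limsup hlower hlim.isBoundedUnder_ge.isCoboundedUnder_le ⟨M, hupper⟩

lemma alphaPlusOf_le (hR : IsSpectralDomain P R) (hc : ∀ p ∈ R, p.2 ≤ c) :
    alphaPlusOf P ≤ c := by
  obtain ⟨H, hH⟩ := hR.exists_fst_le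
  obtain ⟨M, hM⟩ := hR.exists_neg_le
  have hupper : ∀ᶠ d in atBot, -P d / d ≤ -H / d + c := by
    filter_upwards [eventually_lt_atBot 0] with d hd
    obtain ⟨χ, hχ⟩ := hR.exists_mem d
    rw [div_add' _ _ _ hd.ne, div_le_div_right_of_neg hd]
    linarith [hH _ hχ, mul_le_mul_of_nonpos_left (hc _ hχ) hd.le]
  have hlower : ∀ᶠ d in atBot, -M ≤ -P d / d := by
    filter_upwards [eventually_lt_atBot 0] with d hd
    have hMd := hM d
    rw [abs_of_neg hd] at hMd
    rw [le_div_iff_of_neg hd]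
    linarith
  have hlim : Tendsto (fun d => -H / d + c) atBot (𝓝 c) := by
    simpa only [zero_add, id] using (tendsto_const_nhds.div_atBot tendsto_id).add_const c
  rw [← hlim.limsup_eq]
  exact limsup_le_limsup hupper (IsBoundedUnder.isCoboundedUnder_le ⟨-M, hlower⟩)
    hlim.isBoundedUnder_le

lemma coeff_fst_nonneg (hR : IsSpectralDomain P R) (hu : ∀ p ∈ R, a * p.1 + b * p.2 ≤ u) :
    0 ≤ a := by
  by_contra! ha
  obtain ⟨χ, hχ⟩ := hR.exists_mem 0
  set h := P 0 + 0 * χ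
  set h' := (u - b * χ + 1) / a
  have hle := hu _ (hR.mem_of_le _ _ _ hχ (min_le_left h h'))
  have hmin := mul_le_mul_of_nonpos_left (min_le_right h h') ha.le
  rw [mul_div_cancel₀ _ ha.ne] at hmin
  linarith

lemma mul_le_of_forall_mul_snd_le (hR : IsSpectralDomain P R) (hq : alphaMinusOf P ≤ q)
    (hq' : q ≤ alphaPlusOf P) (hu : ∀ p ∈ R, b * p.2 ≤ u) : b * q ≤ u := by
  rcases lt_trichotomy b 0 with hb | rfl | hb
  · have hle : u / b ≤ q := (hR.le_alphaMinusOf fun p hp => by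
      rw [div_le_iff_of_neg' hb]; exact hu p hp).trans hq
    rwa [div_le_iff_of_neg' hb] at hle
  · obtain ⟨χ, hχ⟩ := hR.exists_mem 0
    simpa only [zero_mul] using hu _ hχ
  · have hle : q ≤ u / b := hq'.trans (hR.alphaPlusOf_le fun p hp => by
      rw [le_div_iff₀' hb]; exact hu p hp)
    rwa [le_div_iff₀' hb] at hle

lemma mul_add_mul_le (hR : IsSpectralDomain P R) (hv : ∀ d, v ≤ P d + d * q)
    (hq : alphaMinusOf P ≤ q) (hq' : q ≤ alphaPlusOf P)
    (hu : ∀ p ∈ R, a * p.1 + b * p.2 ≤ u) : a * v + b * q ≤ u := by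
  rcases (hR.coeff_fst_nonneg hu).eq_or_lt with rfl | ha
  · simp only [zero_mul, zero_add] at hu ⊢
    exact hR.mul_le_of_forall_mul_snd_le hq hq' hu
  · obtain ⟨χ, hχ⟩ := hR.exists_mem (-b / a)
    have hslope : ∀ x, a * (P (-b / a) + -b / a * x) = a * P (-b / a) - b * x := fun x => by
      field_simp
      ring
    have hvd := mul_le_mul_of_nonneg_left (hv (-b / a)) ha.le
    have huχ := hu _ hχ
    rw [hslope] at hvd huχ
    linarith

lemma mem_of_forall_le (hR : IsSpectralDomain P R) (hv : ∀ d, v ≤ P d + d * q)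
    (hq : alphaMinusOf P ≤ q) (hq' : q ≤ alphaPlusOf P) : (v, q) ∈ R := by
  by_contra hvq
  obtain ⟨Φ, u, hu, hvu⟩ := geometric_hahn_banach_closed_point hR.convex hR.isClosed hvq
  have hΦ : ∀ p : ℝ × ℝ, Φ p = Φ (1, 0) * p.1 + Φ (0, 1) * p.2 := fun p => by
    have hp : p = p.1 • (1, 0) + p.2 • (0, 1) := by simp
    conv_lhs => rw [hp, map_add, map_smul, map_smul, smul_eq_mul, smul_eq_mul]
    ring
  refine hvu.not_ge ?_
  rw [hΦ]
  exact hR.mul_add_mul_le hv hq hq' fun p hp => hΦ p ▸ (hu p hp).le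

lemma exists_mem_snd_eq (hR : IsSpectralDomain P R) (hq : alphaMinusOf P < q)
    (hq' : q < alphaPlusOf P) : ∃ h, (h, q) ∈ R := by
  obtain ⟨p₁, hp₁, hlt₁⟩ : ∃ p ∈ R, p.2 < q := by
    by_contra! hall
    exact hq.not_ge (hR.le_alphaMinusOf hall)
  obtain ⟨p₂, hp₂, hlt₂⟩ : ∃ p ∈ R, q < p.2 := by
    by_contra! hall
    exact hq'.not_ge (hR.alphaPlusOf_le hall)
  obtain ⟨p, hp, rfl⟩ := (hR.convex.linear_image (LinearMap.snd ℝ ℝ ℝ)).ordConnected.out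
    (mem_image_of_mem _ hp₁) (mem_image_of_mem _ hp₂) ⟨hlt₁.le, hlt₂.le⟩
  exact ⟨p.1, hp⟩

end IsSpectralDomain

lemma specF_le_of_forall_le {Q : ℝ → ℝ} {q : ℝ} {D : EReal} (hq : 0 < q) (hD : 0 ≤ D)
    (h : ∀ v > 0, (∀ d, v ≤ Q d + d * q) → ((v / q : ℝ) : EReal) ≤ D) : specF Q q ≤ D := by
  have hle : ∀ d : ℝ, ⨅ d : ℝ, ((Q d + d * q : ℝ) : EReal) ≤ ((Q d + d * q : ℝ) : EReal) :=
    fun d => iInf_le _ d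
  unfold specF
  generalize (⨅ d : ℝ, ((Q d + d * q : ℝ) : EReal)) = I at hle ⊢
  induction I using EReal.rec with
  | bot => exact (EReal.coe_mul_bot_of_pos (inv_pos.2 hq)).trans_le bot_le
  | top => exact ((EReal.coe_lt_top _).not_ge (hle 0)).elim
  | coe v =>
    rw [← EReal.coe_mul, ← div_eq_inv_mul]
    rcases le_or_gt v 0 with hv | hv
    · exact le_trans (by exact_mod_cast div_nonpos_of_nonpos_of_nonneg hv hq.le) hD
    · exact h v hv fun d => EReal.coe_le_coe_iff.1 (hle d)

section Spectrum

variable {f : RSphere → RSphere} {B L₀ : Set RSphere} {d h v ε χ q α β : ℝ}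

lemma hyperbolic_iff {L : Set RSphere} : Hyperbolic f L ↔
    L.Nonempty ∧ L ⊆ juliaSet f ∧ IsCompact L ∧ f '' L = L ∧ ExpandingOn f L :=
  ⟨fun h => ⟨h.nonempty, h.subset_juliaSet, h.isCompact, h.image_eq, h.expandingOn⟩,
    fun ⟨h₁, h₂, h₃, h₄, h₅⟩ => ⟨h₁, h₂, h₃, h₄, h₅⟩⟩

lemma pressFamily_eq_iSup (d : ℝ) : pressFamily f d = ⨆ L : {L : Set RSphere // Hyperbolic f L},
    pressureOn f L.1 fun x => -d * Real.log (sphDeriv f x) :=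
  (Equiv.subtypeEquivRight fun _ => hyperbolic_iff.symm).iSup_congr fun _ => rfl

lemma exists_hyperbolic (hlt : alphaMinus f < alphaPlus f) : ∃ L, Hyperbolic f L := by
  by_contra! hnone
  have : IsEmpty {L : Set RSphere // Hyperbolic f L} := ⟨fun L => hnone L.1 L.2⟩
  have hP : pressFamily f = 0 := funext fun d => by
    rw [pressFamily_eq_iSup, Real.iSup_of_isEmpty, Pi.zero_apply]
  simp [alphaMinus, alphaPlus, alphaMinusOf, alphaPlusOf, hP] at hlt

lemma IsHub.exists_pressureOn_le (hB : IsHub f B) (hf : IsHolMap f) (d : ℝ) :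
    ∃ b, ∀ L, Hyperbolic f L →
      pressureOn f L (fun x => -d * Real.log (sphDeriv f x)) ≤ b := by
  obtain ⟨H, X, hHX⟩ := hB.exists_rates_subset hf
  refine ⟨H + |d| * X, fun L hL => le_of_forall_lt_imp_le_of_dense fun b hb => ?_⟩
  obtain ⟨χ, hχ⟩ := hL.exists_mem_rates_of_lt_pressureOn hf hB hb
  obtain ⟨hH, hχ₀, hχX⟩ := hHX hχ
  have hdχ : |d * χ| ≤ |d| * X := by
    rw [abs_mul, abs_of_nonneg hχ₀]
    exact mul_le_mul_of_nonneg_left hχX (abs_nonneg d)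
  linarith [mem_Iic.1 hH, neg_abs_le (d * χ)]

lemma IsHub.exists_neg_le_pressFamily (hB : IsHub f B) (hf : IsHolMap f)
    (hL₀ : Hyperbolic f L₀) : ∃ M, ∀ d, -(|d| * M) ≤ pressFamily f d := by
  obtain ⟨M, hM₀, hM⟩ := hL₀.exists_abs_log_sphDeriv_iterate_le hf
  refine ⟨M, fun d => (neg_le_pressureOn hL₀.nonempty (by positivity)
    (hL₀.neg_le_birkhoff hf hM d)).trans ?_⟩
  obtain ⟨b, hb⟩ := hB.exists_pressureOn_le hf d
  rw [pressFamily_eq_iSup]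
  exact le_ciSup (f := fun L : {L : Set RSphere // Hyperbolic f L} => pressureOn f L.1 _)
    ⟨b, forall_mem_range.2 fun L => hb L.1 L.2⟩ ⟨L₀, hL₀⟩

lemma IsHub.exists_pressFamily_mem_rates (hB : IsHub f B) (hf : IsHolMap f)
    (hL₀ : Hyperbolic f L₀) (d : ℝ) : ∃ χ, (pressFamily f d + d * χ, χ) ∈ rates f B := by
  have : Nonempty {L : Set RSphere // Hyperbolic f L} := ⟨⟨L₀, hL₀⟩⟩
  obtain ⟨H, X, hHX⟩ := hB.exists_rates_subset hf
  have happrox : ∀ k : ℕ, ∃ χ, (pressFamily f d - 1 / (k + 1) + d * χ, χ) ∈ rates f B := by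
    intro k
    have hlt : pressFamily f d - 1 / (k + 1) < pressFamily f d := sub_lt_self _ (by positivity)
    conv_rhs at hlt => rw [pressFamily_eq_iSup]
    obtain ⟨L, hL⟩ := exists_lt_of_lt_ciSup hlt
    exact L.2.exists_mem_rates_of_lt_pressureOn hf hB hL
  choose χ hχ using happrox
  obtain ⟨χ₀, -, φ, hφ, hlim⟩ := isCompact_Icc.tendsto_subseq fun k => (hHX (hχ k)).2
  refine ⟨χ₀, isClosed_rates.mem_of_tendsto (b := atTop) ?_
    (Eventually.of_forall fun k => hχ (φ k))⟩
  refine Tendsto.prodMk_nhds (Tendsto.add ?_ (hlim.const_mul d)) hlim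
  simpa only [sub_zero, Function.comp_apply] using tendsto_const_nhds.sub
    ((tendsto_one_div_add_atTop_nhds_zero_nat (𝕜 := ℝ)).comp hφ.tendsto_atTop)

lemma IsHub.isSpectralDomain (hB : IsHub f B) (hf : IsHolMap f) (hL₀ : Hyperbolic f L₀) :
    IsSpectralDomain (pressFamily f) (rates f B) where
  isClosed := isClosed_rates
  convex := convex_rates
  mem_of_le _ _ _ := rates_mono
  exists_mem := hB.exists_pressFamily_mem_rates hf hL₀
  exists_fst_le := let ⟨H, _, hHX⟩ := hB.exists_rates_subset hf; ⟨H, fun _ hp => (hHX hp).1⟩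
  exists_neg_le := hB.exists_neg_le_pressFamily hf hL₀

lemma IsHub.alphaMinus_nonneg (hB : IsHub f B) (hf : IsHolMap f) (hL₀ : Hyperbolic f L₀) :
    0 ≤ alphaMinus f :=
  (hB.isSpectralDomain hf hL₀).le_alphaMinusOf fun _ => snd_nonneg_of_mem_rates hB.nontrivial

lemma IsHub.ofReal_sub_div_add_le_dimH_levelHat (hB : IsHub f B) (hf : IsHolMap f)
    (hp : (h, χ) ∈ rates f B) (hε : 0 < ε) (hεh : ε < h) (hεχ : ε < χ) (hα : α ≤ χ - ε)
    (hβ : χ + ε ≤ β) : ENNReal.ofReal ((h - ε) / (χ + ε)) ≤ dimH (levelHat f α β) := by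
  obtain ⟨n, hn, N, hN, s, t, hS, hlog, hs, ht⟩ := hp ε hε
  dsimp only at hlog hs ht
  have hn₀ : (0 : ℝ) < n := by exact_mod_cast hn
  have hN₂ : 2 ≤ N := by
    have hlogN : 0 < Real.log N := (mul_pos hn₀ (sub_pos.2 hεh)).trans_le hlog
    have hN₁ : N ≠ 1 := fun hN₁ => by simp [hN₁] at hlogN
    lia
  refine le_trans (ENNReal.ofReal_le_ofReal ?_) <|
    (hS.mono le_rfl le_rfl ht).ofReal_le_dimH_levelHat hf hB.isCompact hB.preperfect hB.nonempty
      hn hN₂ ((mul_pos hn₀ (sub_pos.2 hεχ)).trans_le hs) (mul_pos hn₀ (by linarith))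
      (hs.trans' (by rw [mul_comm]; gcongr)) (by rw [mul_comm]; gcongr)
  rw [div_le_div_iff₀ (by linarith) (mul_pos hn₀ (by linarith))]
  linarith [mul_le_mul_of_nonneg_right hlog (by linarith : 0 ≤ χ + ε)]

lemma IsHub.ofReal_div_le_dimH_levelHat (hB : IsHub f B) (hf : IsHolMap f)
    (hp : (h, χ) ∈ rates f B) (hh : 0 < h) (hχ : 0 < χ) (hα : α < χ) (hβ : χ < β) :
    ENNReal.ofReal (h / χ) ≤ dimH (levelHat f α β) := by
  have hlim : Tendsto (fun ε : ℝ => ENNReal.ofReal ((h - ε) / (χ + ε))) (𝓝[>] 0)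
      (𝓝 (ENNReal.ofReal ((h - 0) / (χ + 0)))) :=
    tendsto_nhdsWithin_of_tendsto_nhds <| ENNReal.tendsto_ofReal <|
      (tendsto_const_nhds.sub tendsto_id).div (tendsto_const_nhds.add tendsto_id)
        (by rw [add_zero]; exact hχ.ne')
  rw [sub_zero, add_zero] at hlim
  refine le_of_tendsto hlim ?_
  filter_upwards [Ioo_mem_nhdsGT hh, Ioo_mem_nhdsGT hχ, Ioo_mem_nhdsGT (sub_pos.2 hα),
    Ioo_mem_nhdsGT (sub_pos.2 hβ)] with ε hεh hεχ hεα hεβ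
  exact hB.ofReal_sub_div_add_le_dimH_levelHat hf hp hεh.1 hεh.2 hεχ.2 (by linarith [hεα.2])
    (by linarith [hεβ.2])

/- If `q` is an endpoint of `[α, β]`, move into the interior along a segment in `rates f B`. -/
lemma IsHub.ofReal_div_le_dimH_levelHat_of_mem_Icc (hB : IsHub f B) (hf : IsHolMap f)
    (hα : 0 ≤ α) (hχ : χ ∈ Ioo α β) (hhχ : (h, χ) ∈ rates f B) (hvq : (v, q) ∈ rates f B)
    (hv : 0 < v) (hq₀ : 0 < q) (hq : q ∈ Icc α β) :
    ENNReal.ofReal (v / q) ≤ dimH (levelHat f α β) := by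
  have hlim : ∀ x y : ℝ, Tendsto (fun τ : ℝ => (1 - τ) * x + τ * y) (𝓝[>] 0) (𝓝 x) :=
    fun x y => tendsto_nhdsWithin_of_tendsto_nhds (Continuous.tendsto' (by fun_prop) _ _ (by simp))
  refine le_of_tendsto (ENNReal.tendsto_ofReal ((hlim v h).div (hlim q χ) hq₀.ne')) ?_
  filter_upwards [Ioo_mem_nhdsGT one_pos, (hlim v h).eventually_const_lt hv] with τ hτ hpos
  have hτ₁ : 0 < 1 - τ := sub_pos.2 hτ.2
  have hmem := convex_rates hvq hhχ hτ₁.le hτ.1.le (sub_add_cancel 1 τ)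
  have hαq : α < (1 - τ) * q + τ * χ := by nlinarith [hq.1, hτ.1, hχ.1]
  have hqβ : (1 - τ) * q + τ * χ < β := by nlinarith [hq.2, hτ.1, hχ.2]
  exact hB.ofReal_div_le_dimH_levelHat hf hmem hpos (hα.trans_lt hαq) hαq hqβ

lemma IsHub.specF_le_dimH_levelHat (hB : IsHub f B) (hf : IsHolMap f) (hL₀ : Hyperbolic f L₀)
    (hα : alphaMinus f ≤ α) (hαβ : α < β) (hβ : β ≤ alphaPlus f) (hq₀ : 0 < q)
    (hq : q ∈ Icc α β) : specF (pressFamily f) q ≤ (dimH (levelHat f α β) : EReal) := by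
  have hR := hB.isSpectralDomain hf hL₀
  obtain ⟨χ, hαχ, hχβ⟩ := exists_between hαβ
  obtain ⟨h, hhχ⟩ := hR.exists_mem_snd_eq (hα.trans_lt hαχ) (hχβ.trans_le hβ)
  refine specF_le_of_forall_le hq₀ (EReal.coe_ennreal_nonneg _) fun v hv hvP => ?_
  have hvq := hR.mem_of_forall_le hvP (hα.trans hq.1) (hq.2.trans hβ)
  have hdim := hB.ofReal_div_le_dimH_levelHat_of_mem_Icc hf
    ((hB.alphaMinus_nonneg hf hL₀).trans hα) ⟨hαχ, hχβ⟩ hhχ hvq hv hq₀ hq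
  rw [← EReal.coe_ennreal_le_coe_ennreal_iff, EReal.coe_ennreal_ofReal,
    max_eq_left (by positivity)] at hdim
  exact hdim

lemma IsHub.Ffun_le_dimH_levelHat (hB : IsHub f B) (hf : IsHolMap f) (hL₀ : Hyperbolic f L₀)
    (hα : alphaMinus f ≤ α) (hαβ : α < β) (hβ : β ≤ alphaPlus f) (hq : q ∈ Icc α β) :
    Ffun f q ≤ (dimH (levelHat f α β) : EReal) := by
  have hα₀ : 0 ≤ α := (hB.alphaMinus_nonneg hf hL₀).trans hα
  rw [Ffun, specFext]
  split_ifs with hq₀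
  · refine limsup_le_of_le (by isBoundedDefault) ?_
    filter_upwards [Ioo_mem_nhdsGT (hα₀.trans_lt hαβ)] with s hs
    exact hB.specF_le_dimH_levelHat hf hL₀ hα hαβ hβ hs.1
      ⟨hq.1.trans (hq₀.trans_le hs.1.le), hs.2.le⟩
  · exact hB.specF_le_dimH_levelHat hf hL₀ hα hαβ hβ
      ((hα₀.trans hq.1).lt_of_ne (Ne.symm hq₀)) hq

end Spectrum

end LyapunovSpectrum

/-- **Proposition (lower bound for `𝓛̂` including the boundary of the spectrum).**
Assume `f` is non-exceptional, or exceptional with `Σ ∩ J = ∅`, and `α⁻ < α⁺`.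
For `α⁻ ≤ α < β ≤ α⁺` we have `dim_H 𝓛̂(α,β) ≥ max_{α ≤ q ≤ β} F(q)`. -/
theorem lower_bound_levelHat (f : RSphere → RSphere) (p q : Polynomial ℂ)
    (hf : IsRationalMap f p q) (hdeg : 2 ≤ ratDeg p q)
    (hexc : ¬ IsExceptional f ∨ maxExceptional f ∩ juliaSet f = ∅)
    (hlt : alphaMinus f < alphaPlus f) :
    ∀ α β : ℝ, alphaMinus f ≤ α → α < β → β ≤ alphaPlus f →
      (⨆ s ∈ Set.Icc α β, Ffun f s) ≤ (dimH (levelHat f α β) : EReal) := by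
  intro α β hα hαβ hβ
  have hhol := hf.isHolMap (by lia)
  obtain ⟨L₀, hL₀⟩ := LyapunovSpectrum.exists_hyperbolic hlt
  obtain ⟨B, hB⟩ := hhol.exists_isHub hexc hL₀
  exact iSup₂_le fun s hs => hB.Ffun_le_dimH_levelHat hhol hL₀ hα hαβ hβ hs
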